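/- arXiv:2604.07718 — 4 statements merged into one kernel-verified Lean document; each statement's English description precedes it below -/
import Mathlib

section
/- Fix integers G, K, L with 1 ≤ G ≤ K and L ≥ 1. Let ν be a measure on ℝ^L, let 𝒵 ⊆ ℝ^L with ν(ℝ^L ∖ 𝒵) = 0, and let z* ∈ 𝒵 be such that ν assigns strictly positive measure to every open neighbourhood of z*. Suppose: r₀ : ℝ^G → ℝ^G is a locally Lipschitz bijection with locally Lipschitz inverse, differentiable with det Dr₀(y) > 0 at Lebesgue-almost every y; for every z ∈ 𝒵, the map x ↦ r₁(x, z) from ℝ^K to ℝ^G is locally Lipschitz, surjective, and differentiable in x with rank D_x r₁(x, z) = G at almost every x; f_U is an admissible density on ℝ^G satisfying the local-maximum condition; σ : ℝ^L → ℝ^{G×G} takes values in the diagonal matrices with strictly positive diagonal entries, σ(z*) = I_G, and σ is continuous at z*. Let r̃₀ be any locally Lipschitz bijection ℝ^G → ℝ^G with det Dr̃₀(y) > 0 at almost every y, and let r̃₁ : ℝ^K × ℝ^L → ℝ^G be such that x ↦ r̃₁(x, z) is locally Lipschitz for every z ∈ 𝒵. Then there exist σ̃ : ℝ^L → ℝ^{G×G}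 taking values in diagonal matrices with strictly positive entries, with σ̃(z*) = I_G and σ̃ continuous at z*, and an admissible density f_Ũ on ℝ^G, such that for ν-almost every z ∈ 𝒵, f_U(σ(z)⁻¹(r₀(y) + r₁(x, z)))·det(σ(z)⁻¹ Dr₀(y)) = f_Ũ(σ̃(z)⁻¹(r̃₀(y) + r̃₁(x, z)))·det(σ̃(z)⁻¹ Dr̃₀(y)) for Lebesgue-almost every (y, x), if and only if there exists Q ∈ SO(G) such that for ν-almost every z ∈ 𝒵: r̃₀(y) + r̃₁(x, z) = Q(r₀(y) + r₁(x, z)) for all (y, x) ∈ ℝ^G × ℝ^K, and Q σ(z)² Qᵀ is a diagonal matrix; moreover, in that case σ̃(z)² = Q σ(z)² Qᵀ for ν-almost every z ∈ 𝒵. -/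
open MeasureTheory Matrix

noncomputable section

/-- `E n` is Euclidean space `ℝ^n`. -/
abbrev E (n : ℕ) : Type := EuclideanSpace ℝ (Fin n)

/-- Action of a matrix on a Euclidean vector. -/
def mulVecE {m n : ℕ} (A : Matrix (Fin m) (Fin n) ℝ) (x : E n) : E m := WithLp.toLp 2 (A.mulVec x)

/-- An admissible density on `ℝ^G`: continuously differentiable, everywhere strictly positive,
integrating to one, with zero mean and identity covariance (stated componentwise). -/
def AdmissibleDensity {G : ℕ} (ρ : E G → ℝ) : Prop :=
  ContDiff ℝ 1 ρ ∧ (∀ u, 0 < ρ u) ∧ ((∫ u, ρ u) = 1) ∧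
    (∀ i, (∫ u : E G, u i * ρ u) = 0) ∧
    (∀ i j, (∫ u : E G, u i * u j * ρ u) = if i = j then 1 else 0)

/-- The local-maximum condition: `ρ` has a local maximum at some `u₀`, is twice continuously
differentiable in a neighbourhood of `u₀`, and has negative definite Hessian there. -/
def LocalMaxCondition {G : ℕ} (ρ : E G → ℝ) : Prop :=
  ∃ u₀ : E G, IsLocalMax ρ u₀ ∧ ContDiffAt ℝ 2 ρ u₀ ∧
    ∀ v : E G, v ≠ 0 → iteratedFDeriv ℝ 2 ρ u₀ ![v, v] < 0

/-- A skedastic function: diagonal values with strictly positive diagonal entries, equal to the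
identity at the normalisation point `zstar`, and continuous there. -/
def SkedasticFn {G L : ℕ} (σ : E L → Matrix (Fin G) (Fin G) ℝ) (zstar : E L) : Prop :=
  (∀ z, (σ z).IsDiag) ∧ (∀ z i, 0 < σ z i i) ∧ σ zstar = 1 ∧ ContinuousAt σ zstar

open Filter Topology Asymptotics in
lemma locLip_isBigO {X V : Type*} [NormedAddCommGroup X] [NormedAddCommGroup V]
    {f : X → V} (hf : LocallyLipschitz f) (x : X) :
    (fun x' => f x' - f x) =O[𝓝 x] (fun x' => x' - x) := by
  obtain ⟨C, t, ht, hC⟩ := hf x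
  refine IsBigO.of_bound C ?_
  filter_upwards [ht] with x' hx'
  have := hC.dist_le_mul x' hx' x (mem_of_mem_nhds ht)
  simpa [dist_eq_norm] using this

open Filter Topology in
lemma locLip_exists_differentiable {X V : Type*} [NormedAddCommGroup X] [NormedSpace ℝ X]
    [FiniteDimensional ℝ X] [MeasurableSpace X] [BorelSpace X] [NormedAddCommGroup V]
    [NormedSpace ℝ V] [FiniteDimensional ℝ V] (μ : Measure X) [μ.IsAddHaarMeasure]
    {f : X → V} (hf : LocallyLipschitz f) {p : X → Prop} (hp : ∀ᵐ x ∂μ, p x) :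
    Dense {x | p x ∧ DifferentiableAt ℝ f x} := by
  rw [dense_iff_inter_open]
  rintro U hU ⟨x, hx⟩
  obtain ⟨C, t, ht, hC⟩ := hf x
  have h1 : (interior t ∩ U) ∈ 𝓝 x := inter_mem (interior_mem_nhds.2 ht) (hU.mem_nhds hx)
  have h2 : 0 < μ (interior t ∩ U) := MeasureTheory.Measure.measure_pos_of_mem_nhds μ h1
  obtain ⟨y, hy1, hy2, hy3⟩ := Measure.exists_mem_of_measure_ne_zero_of_ae h2.ne'
    (ae_restrict_of_ae (hp.and (hC.ae_differentiableWithinAt_of_mem (μ := μ))))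
  exact ⟨y, hy1.2, hy2, (hy3 (interior_subset hy1.1)).differentiableAt
    (mem_interior_iff_mem_nhds.1 hy1.1)⟩

open Filter Topology Asymptotics in
/-- If `Γt ∘ φ = Γ`, `φ` is Lipschitz at `v₀` and `Γ` is a local diffeomorphism, so is `φ`. -/
lemma strict_of_factor {V W : Type*} [NormedAddCommGroup V] [NormedSpace ℝ V]
    [FiniteDimensional ℝ V] [NormedAddCommGroup W] [NormedSpace ℝ W] [FiniteDimensional ℝ W]
    {φ : V → V} {Γ Γt : V → W} {v₀ : V} {A : V →L[ℝ] W} {B : V →L[ℝ] W}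
    (hφ : (fun v => φ v - φ v₀) =O[𝓝 v₀] (fun v => v - v₀))
    (hφc : ContinuousAt φ v₀)
    (hΓ : HasStrictFDerivAt Γ A v₀) (hΓt : HasStrictFDerivAt Γt B (φ v₀))
    (hcomp : ∀ v, Γt (φ v) = Γ v) (hA : Function.Bijective A) :
    ∃ D : V ≃L[ℝ] V, HasStrictFDerivAt φ (D : V →L[ℝ] V) v₀ := by
  have hsurj : Function.Surjective B := by
    intro w
    obtain ⟨d, rfl⟩ := hA.2 w
    have hcl : IsClosed ((LinearMap.range B.toLinearMap : Submodule ℝ W) : Set W) :=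
      Submodule.closed_of_finiteDimensional _
    have h1 : (fun v => Γt (φ v) - Γt (φ v₀) - B (φ v - φ v₀)) =o[𝓝 v₀] (fun v => v - v₀) :=
      ((hΓt.hasFDerivAt.isLittleO).comp_tendsto hφc).trans_isBigO hφ
    have h2 : (fun v => A (v - v₀) - B (φ v - φ v₀)) =o[𝓝 v₀] (fun v => v - v₀) := by
      refine (h1.sub hΓ.hasFDerivAt.isLittleO).congr_left fun v => ?_
      simp only [hcomp]; abel
    have h3 : Tendsto (fun t : ℝ => v₀ + t • d) (𝓝[≠] 0) (𝓝 v₀) := by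
      have : Continuous (fun t : ℝ => v₀ + t • d) := by fun_prop
      have h := this.tendsto 0
      simp only [zero_smul, add_zero] at h
      exact h.mono_left nhdsWithin_le_nhds
    have h4 := h2.comp_tendsto h3
    have h5 : (fun t : ℝ => A (t • d) - B (φ (v₀ + t • d) - φ v₀)) =o[𝓝[≠] 0] (fun t : ℝ => t) := by
      have : (fun t : ℝ => t • d) =O[𝓝[≠] 0] (fun t : ℝ => t) :=
        IsBigO.of_bound ‖d‖ (Eventually.of_forall fun t => by rw [norm_smul, mul_comm])
      refine (IsLittleO.trans_isBigO (h4.congr_right (g₂ := fun t => t • d) ?_) this).congr_left ?_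
      · intro t; simp
      · intro t; simp
    have h6 : Tendsto (fun t : ℝ => t⁻¹ • (A (t • d) - B (φ (v₀ + t • d) - φ v₀)))
        (𝓝[≠] 0) (𝓝 0) := h5.tendsto_inv_smul_nhds_zero
    have h7 : Tendsto (fun t : ℝ => B (t⁻¹ • (φ (v₀ + t • d) - φ v₀))) (𝓝[≠] 0) (𝓝 (A d)) := by
      have h8 := (tendsto_const_nhds (x := A d)).sub h6
      rw [sub_zero] at h8
      refine h8.congr' ?_
      filter_upwards [self_mem_nhdsWithin] with t ht
      have ht : t ≠ 0 := ht
      rw [smul_sub, map_smul, smul_smul, inv_mul_cancel₀ ht, one_smul, map_smul]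
      abel
    have h9 := hcl.mem_of_tendsto h7 (Eventually.of_forall fun t => ⟨_, rfl⟩)
    exact h9
  have hfin : Module.finrank ℝ V = Module.finrank ℝ W :=
    (LinearEquiv.ofBijective A.toLinearMap hA).finrank_eq
  have hinj : Function.Injective B :=
    (LinearMap.injective_iff_surjective_of_finrank_eq_finrank (f := B.toLinearMap) hfin).2 hsurj
  let Be : V ≃L[ℝ] W := (LinearEquiv.ofBijective B.toLinearMap ⟨hinj, hsurj⟩).toContinuousLinearEquiv
  let Ae : V ≃L[ℝ] W := (LinearEquiv.ofBijective A.toLinearMap hA).toContinuousLinearEquiv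
  have hBe : (Be : V →L[ℝ] W) = B := by ext; rfl
  have hAe : (Ae : V →L[ℝ] W) = A := by ext; rfl
  rw [← hBe] at hΓt
  rw [← hAe] at hΓ
  refine ⟨Ae.trans Be.symm, ?_⟩
  have hl := hΓt.eventually_left_inverse
  have hl' := hφc.eventually hl
  have hd := hΓt.to_localInverse
  rw [hcomp v₀] at hd
  have := hd.comp v₀ hΓ
  refine this.congr_of_eventuallyEq ?_
  filter_upwards [hl'] with v hv
  rw [← hcomp v]; exact hv

open scoped MatrixOrder Matrix.Norms.L2Operator in
lemma exists_sqrt {G : ℕ} (H : E G →L[ℝ] E G →L[ℝ] ℝ) (hH : ∀ d, d ≠ 0 → H d d < 0) :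
    ∃ M : E G ≃L[ℝ] E G, ∀ d, ‖M d‖ ^ 2 = - H d d := by
  let b := EuclideanSpace.basisFun (Fin G) ℝ
  let S : Matrix (Fin G) (Fin G) ℝ := fun i j => -(H (b i) (b j) + H (b j) (b i)) / 2
  have hq : ∀ d : E G, (d : Fin G → ℝ) ⬝ᵥ S.mulVec d = - H d d := by
    intro d
    have hd : d = ∑ i, d i • b i := by
      conv_lhs => rw [← b.sum_repr d]
      simp [b]
    have h1 : H d d = ∑ i, ∑ j, d i * d j * H (b i) (b j) := by
      conv_lhs => rw [hd]
      simp only [map_sum, map_smul, _root_.sum_apply, _root_.smul_apply,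
        smul_eq_mul, Finset.mul_sum]
      rw [Finset.sum_comm]
      refine Finset.sum_congr rfl fun i _ => Finset.sum_congr rfl fun j _ => by ring
    have h2 : H d d = ∑ i, ∑ j, d i * d j * H (b j) (b i) := by
      rw [h1, Finset.sum_comm]
      refine Finset.sum_congr rfl fun i _ => Finset.sum_congr rfl fun j _ => by ring
    have h3 : - H d d = -(1/2) * H d d - (1/2) * H d d := by ring
    rw [h3]
    nth_rewrite 1 [h1]
    rw [h2]
    simp only [dotProduct, Matrix.mulVec, Finset.mul_sum, ← Finset.sum_sub_distrib, S]
    refine Finset.sum_congr rfl fun i _ => Finset.sum_congr rfl fun j _ => by ring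
  have hS : S.PosSemidef := by
    refine Matrix.PosSemidef.of_dotProduct_mulVec_nonneg ?_ ?_
    · ext i j; rw [Matrix.conjTranspose_apply]; simp [S, add_comm]
    · intro x
      have := hq (WithLp.toLp 2 x)
      simp only [star_trivial]
      simp only at this
      rw [this]
      by_cases h : (WithLp.toLp 2 x : E G) = 0
      · simp [h]
      · linarith [hH _ h]
  obtain ⟨A, hA⟩ := (CStarAlgebra.nonneg_iff_eq_star_mul_self (a := S)).1 hS.nonneg
  let M := Matrix.toEuclideanCLM (𝕜 := ℝ) A
  have hM : ∀ d, ‖M d‖ ^ 2 = - H d d := by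
    intro d
    rw [← hq d, hA, Matrix.star_eq_conjTranspose, EuclideanSpace.norm_sq_eq, ← Matrix.mulVec_mulVec, Matrix.dotProduct_mulVec]
    simp only [Matrix.conjTranspose_eq_transpose_of_trivial, Matrix.vecMul_transpose, dotProduct]
    refine Finset.sum_congr rfl fun i _ => ?_
    have : (M d) i = (A *ᵥ d.ofLp) i := by
      rw [← Matrix.ofLp_toEuclideanCLM]
    rw [this, Real.norm_eq_abs, sq_abs, sq]
  have hinj : Function.Injective M.toLinearMap := by
    rw [← LinearMap.ker_eq_bot, LinearMap.ker_eq_bot']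
    intro d hd
    by_contra h
    have h1 := hM d
    have h2 := hH d h
    have hd' : M d = 0 := hd
    rw [hd'] at h1
    simp at h1
    linarith
  refine ⟨(LinearEquiv.ofInjectiveEndo M.toLinearMap hinj).toContinuousLinearEquiv, fun d => ?_⟩
  exact hM d


/-- `g` has a nondegenerate critical point at `us` with Hessian `H`. -/
structure NDCrit {V : Type*} [NormedAddCommGroup V] [NormedSpace ℝ V] (g : V → ℝ) (us : V)
    (H : V →L[ℝ] V →L[ℝ] ℝ) : Prop where
  crit : fderiv ℝ g us = 0
  hess : HasFDerivAt (fderiv ℝ g) H us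
  neg : ∀ d, d ≠ 0 → H d d < 0

open Filter Topology in
lemma NDCrit.separating {V : Type*} [NormedAddCommGroup V] [NormedSpace ℝ V] {g : V → ℝ} {us : V}
    {H : V →L[ℝ] V →L[ℝ] ℝ} (h : NDCrit g us H) (d : V) (hd : ∀ s, fderiv ℝ g s d = 0) : d = 0 := by
  by_contra hne
  have h1 := h.neg d hne
  have h2 : HasFDerivAt (fun s => fderiv ℝ g s d)
      ((ContinuousLinearMap.apply ℝ ℝ d).comp H) us :=
    (ContinuousLinearMap.apply ℝ ℝ d).hasFDerivAt.comp us h.hess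
  have h3 : (fun s => fderiv ℝ g s d) = fun _ => 0 := funext hd
  rw [h3] at h2
  have h4 := h2.unique (hasFDerivAt_const (0:ℝ) us)
  have h5 := DFunLike.congr_fun h4 d
  simp at h5
  linarith

open Filter Topology in
lemma NDCrit.isolated {V : Type*} [NormedAddCommGroup V] [NormedSpace ℝ V] [FiniteDimensional ℝ V]
    {g : V → ℝ} {us : V}
    {H : V →L[ℝ] V →L[ℝ] ℝ} (h : NDCrit g us H) : ∀ᶠ s in 𝓝 us, fderiv ℝ g s = 0 → s = us := by
  have hinj : LinearMap.ker H.toLinearMap = ⊥ := by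
    rw [LinearMap.ker_eq_bot']
    intro d hd
    by_contra hne
    have h1 := h.neg d hne
    have hd : H d = 0 := hd
    rw [hd] at h1
    simp at h1
  obtain ⟨C, -, hC⟩ := H.toLinearMap.exists_antilipschitzWith hinj
  have := h.hess.eventually_ne (c := 0) ⟨C, hC⟩
  rw [eventually_nhdsWithin_iff] at this
  filter_upwards [this] with s hs h0
  by_contra hne
  exact hs hne h0

open Filter Topology Asymptotics in
/-- Step 1: the shift `j` is constant, and the transported point is critical. -/
lemma core_step1 {V X : Type*} [NormedAddCommGroup V] [NormedSpace ℝ V] [FiniteDimensional ℝ V]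
    [NormedAddCommGroup X] [NormedSpace ℝ X] [FiniteDimensional ℝ X] [MeasurableSpace X]
    [BorelSpace X] (μ : Measure X) [μ.IsAddHaarMeasure]
    {g gt : V → ℝ} (hg : ContDiff ℝ 1 g) (hgt : ContDiff ℝ 1 gt)
    {φ : V → V} (hφ : LocallyLipschitz φ)
    {r rt : X → V} (hr : LocallyLipschitz r) (hrt : LocallyLipschitz rt)
    (hrd : ∀ᵐ x ∂μ, DifferentiableAt ℝ r x ∧ Function.Surjective (fderiv ℝ r x))
    {j : V → ℝ} (heq : ∀ v x, g (v + r x) = gt (φ v + rt x) + j v)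
    {us : V} {H : V →L[ℝ] V →L[ℝ] ℝ} (hc : NDCrit g us H) :
    (∀ x, fderiv ℝ gt (φ (us - r x) + rt x) = 0) ∧
      ∀ x x', j (us - r x) = j (us - r x') := by
  have hgd : Differentiable ℝ g := hg.differentiable (by norm_num)
  have hgtd : Differentiable ℝ gt := hgt.differentiable (by norm_num)
  have hψc : Continuous fun x => φ (us - r x) + rt x :=
    (hφ.continuous.comp (continuous_const.sub hr.continuous)).add hrt.continuous
  have h1 : ∀ x, fderiv ℝ gt (φ (us - r x) + rt x) = 0 := by
    have hdense := locLip_exists_differentiable μ hrt hrd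
    have hcl : IsClosed {x | fderiv ℝ gt (φ (us - r x) + rt x) = 0} :=
      isClosed_eq ((hgt.continuous_fderiv (by norm_num)).comp hψc) continuous_const
    have hsub : {x | (DifferentiableAt ℝ r x ∧ Function.Surjective (fderiv ℝ r x)) ∧
        DifferentiableAt ℝ rt x} ⊆ {x | fderiv ℝ gt (φ (us - r x) + rt x) = 0} := by
      rintro x ⟨⟨hx1, hx2⟩, hx3⟩
      have key : ∀ v e, fderiv ℝ g (v + r x) (fderiv ℝ r x e)
          = fderiv ℝ gt (φ v + rt x) (fderiv ℝ rt x e) := by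
        intro v e
        have a1 : HasFDerivAt (fun x => g (v + r x)) ((fderiv ℝ g (v + r x)).comp (fderiv ℝ r x)) x :=
          (hgd _).hasFDerivAt.comp x (hx1.hasFDerivAt.const_add v)
        have a2 : HasFDerivAt (fun x => gt (φ v + rt x) + j v)
            ((fderiv ℝ gt (φ v + rt x)).comp (fderiv ℝ rt x)) x :=
          ((hgtd _).hasFDerivAt.comp x (hx3.hasFDerivAt.const_add (φ v))).add_const (j v)
        have a3 : (fun x => g (v + r x)) = fun x => gt (φ v + rt x) + j v := funext (heq v)
        rw [a3] at a1
        exact DFunLike.congr_fun (a1.unique a2) e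
      have hker : LinearMap.ker (fderiv ℝ rt x).toLinearMap ≤
          LinearMap.ker (fderiv ℝ r x).toLinearMap := by
        intro e he
        have he : fderiv ℝ rt x e = 0 := he
        show fderiv ℝ r x e = 0
        apply hc.separating
        intro s
        have := key (s - r x) e
        rw [he, map_zero, sub_add_cancel] at this
        exact this
      have hsurj : Function.Surjective (fderiv ℝ rt x) := by
        have b1 := LinearMap.finrank_range_add_finrank_ker (fderiv ℝ rt x).toLinearMap
        have b2 := LinearMap.finrank_range_add_finrank_ker (fderiv ℝ r x).toLinearMap
        have b3 := Submodule.finrank_mono hker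
        have b4 : LinearMap.range (fderiv ℝ r x).toLinearMap = ⊤ := LinearMap.range_eq_top.2 hx2
        rw [b4, finrank_top] at b2
        have b5 : Module.finrank ℝ V ≤
          Module.finrank ℝ (LinearMap.range (fderiv ℝ rt x).toLinearMap) := by omega
        have b6 : LinearMap.range (fderiv ℝ rt x).toLinearMap = ⊤ :=
          Submodule.eq_top_of_finrank_eq (le_antisymm (Submodule.finrank_le _) b5)
        exact LinearMap.range_eq_top.1 b6
      show fderiv ℝ gt (φ (us - r x) + rt x) = 0
      ext d
      obtain ⟨e, rfl⟩ := hsurj d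
      rw [← key, sub_add_cancel, hc.crit]
      simp
    have := hcl.closure_subset_iff.2 hsub
    rw [hdense.closure_eq] at this
    exact fun x => this (Set.mem_univ x)
  refine ⟨h1, ?_⟩
  have h2 : ∀ x, HasFDerivAt (fun x => gt (φ (us - r x) + rt x)) (0 : X →L[ℝ] ℝ) x := by
    intro x
    have hO : (fun x' => (φ (us - r x') + rt x') - (φ (us - r x) + rt x)) =O[𝓝 x]
        (fun x' => x' - x) := by
      have c1 := locLip_isBigO hφ (us - r x)
      have c2 : Tendsto (fun x' => us - r x') (𝓝 x) (𝓝 (us - r x)) :=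
        (continuous_const.sub hr.continuous).tendsto x
      have c3 := (c1.comp_tendsto c2).trans
        (g := fun x' => us - r x' - (us - r x)) (k := fun x' => x' - x) (by
          refine (locLip_isBigO hr x).neg_left.congr_left fun x' => by abel)
      refine (c3.add (locLip_isBigO hrt x)).congr_left fun x' => ?_
      simp only [Function.comp]; abel
    have d1 := (hgtd (φ (us - r x) + rt x)).hasFDerivAt
    rw [h1 x] at d1
    have d2 := (d1.isLittleO.comp_tendsto (hψc.tendsto x)).trans_isBigO hO
    refine HasFDerivAt.of_isLittleO (d2.congr_left fun x' => ?_)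
    simp [Function.comp]
  have h3 := is_const_of_fderiv_eq_zero (fun x => (h2 x).differentiableAt) (fun x => (h2 x).fderiv)
  intro x x'
  have e1 := heq (us - r x) x
  have e2 := heq (us - r x') x'
  have e3 := h3 x x'
  simp only [sub_add_cancel] at e1 e2 e3
  linarith

open Filter Topology Asymptotics in
/-- Step 2: `φ` is a local `C¹` diffeomorphism. -/
lemma core_step2 {V X : Type*} [NormedAddCommGroup V] [NormedSpace ℝ V] [FiniteDimensional ℝ V]
    {g gt : V → ℝ} (hg : ContDiff ℝ 1 g) (hgt : ContDiff ℝ 1 gt)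
    {φ : V → V} (hφ : LocallyLipschitz φ)
    {r rt : X → V} (hrs : Function.Surjective r)
    {j : ℝ} (heq : ∀ v x, g (v + r x) = gt (φ v + rt x) + j)
    {us : V} {H : V →L[ℝ] V →L[ℝ] ℝ} (hc : NDCrit g us H) (v₀ : V) :
    ∃ D : V ≃L[ℝ] V, HasStrictFDerivAt φ (D : V →L[ℝ] V) v₀ := by
  let S : Set (V →L[ℝ] ℝ) := Set.range (fderiv ℝ g)
  obtain ⟨f, hf1, hf2, hf3⟩ := Submodule.exists_fun_fin_finrank_span_eq ℝ S
  have hmem : ∀ i, ∃ x, fderiv ℝ g (v₀ + r x) = f i := by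
    intro i
    obtain ⟨s, hs⟩ := hf1 i
    obtain ⟨x, hx⟩ := hrs (s - v₀)
    exact ⟨x, by rw [hx, add_sub_cancel]; exact hs⟩
  choose x hx using hmem
  let n := Module.finrank ℝ (Submodule.span ℝ S)
  let A : V →L[ℝ] (Fin n → ℝ) := ContinuousLinearMap.pi f
  have hAinj : Function.Injective A := by
    have : LinearMap.ker A.toLinearMap = ⊥ := by
      rw [LinearMap.ker_eq_bot']
      intro d hd
      have hd : A d = 0 := hd
      apply hc.separating
      intro s
      have h1 : fderiv ℝ g s ∈ Submodule.span ℝ (Set.range f) := by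
        rw [hf2]; exact Submodule.subset_span ⟨s, rfl⟩
      refine Submodule.span_induction (p := fun l _ => l d = 0) ?_ ?_ ?_ ?_ h1
      · rintro _ ⟨i, rfl⟩
        exact congrFun hd i
      · simp
      · intro a b _ _ ha hb; simp [ha, hb]
      · intro c a _ ha; simp [ha]
    exact LinearMap.ker_eq_bot.1 this
  have hle : n ≤ Module.finrank ℝ V := by
    have h1 : n ≤ Module.finrank ℝ (V →L[ℝ] ℝ) := Submodule.finrank_le _
    have h2 : Module.finrank ℝ (V →L[ℝ] ℝ) = Module.finrank ℝ V := by
      rw [← (LinearMap.toContinuousLinearMap (𝕜 := ℝ) (E := V) (F' := ℝ)).finrank_eq]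
      exact Subspace.dual_finrank_eq
    omega
  have hfin : Module.finrank ℝ V = Module.finrank ℝ (Fin n → ℝ) := by
    refine le_antisymm (LinearMap.finrank_le_finrank_of_injective (f := A.toLinearMap) hAinj) ?_
    simpa using hle
  have hAsurj : Function.Surjective A :=
    (LinearMap.injective_iff_surjective_of_finrank_eq_finrank (f := A.toLinearMap) hfin).1 hAinj
  have hG : HasStrictFDerivAt (fun v i => g (v + r (x i))) A v₀ := by
    rw [hasStrictFDerivAt_pi']
    intro i
    have h1 : HasStrictFDerivAt g (f i) (v₀ + r (x i)) := by
      rw [← hx i]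
      exact hg.contDiffAt.hasStrictFDerivAt (by norm_num)
    exact HasStrictFDerivAt.comp (f := fun v => v + r (x i)) v₀ h1
      ((hasStrictFDerivAt_id v₀).add_const (r (x i)))
  have hGt : HasStrictFDerivAt (fun y i => gt (y + rt (x i)) + j)
      (ContinuousLinearMap.pi fun i => fderiv ℝ gt (φ v₀ + rt (x i))) (φ v₀) := by
    rw [hasStrictFDerivAt_pi']
    intro i
    have h1 : HasStrictFDerivAt gt (fderiv ℝ gt (φ v₀ + rt (x i))) (φ v₀ + rt (x i)) :=
      hgt.contDiffAt.hasStrictFDerivAt (by norm_num)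
    exact (HasStrictFDerivAt.comp (f := fun v => v + rt (x i)) (φ v₀) h1
      ((hasStrictFDerivAt_id (φ v₀)).add_const (rt (x i)))).add_const j
  exact strict_of_factor (locLip_isBigO hφ v₀) hφ.continuous.continuousAt hG hGt
    (fun v => by funext i; exact (heq v (x i)).symm) ⟨hAinj, hAsurj⟩


open Filter Topology in
/-- A bijection whose derivative is everywhere an isometry of two negative definite forms
is affine. -/
lemma affine_of_forms {G : ℕ} (φ : E G ≃ₜ E G) (D : E G → (E G ≃L[ℝ] E G))
    (hD : ∀ v, HasFDerivAt φ (D v : E G →L[ℝ] E G) v)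
    (hDs : ∀ v, HasFDerivAt φ.symm ((D v).symm : E G →L[ℝ] E G) (φ v))
    (H Ht : E G →L[ℝ] E G →L[ℝ] ℝ) (hH : ∀ d, d ≠ 0 → H d d < 0)
    (hiso : ∀ v d, Ht (D v d) (D v d) = H d d) :
    ∃ A : E G →L[ℝ] E G, ∀ v, φ v = A v + φ 0 := by
  have hHt : ∀ d, d ≠ 0 → Ht d d < 0 := by
    intro d hd
    have h1 := hiso 0 ((D 0).symm d)
    rw [ContinuousLinearEquiv.apply_symm_apply] at h1
    rw [h1]
    exact hH _ (by simpa using hd)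
  obtain ⟨M, hM⟩ := exists_sqrt H hH
  obtain ⟨Mt, hMt⟩ := exists_sqrt Ht hHt
  have hnorm : ∀ v d, ‖Mt (D v d)‖ = ‖M d‖ := by
    intro v d
    have : ‖Mt (D v d)‖ ^ 2 = ‖M d‖ ^ 2 := by rw [hM, hMt, hiso]
    exact (sq_eq_sq₀ (norm_nonneg _) (norm_nonneg _)).1 this
  let κ : E G ≃ E G := (M.symm.toEquiv.trans φ.toEquiv).trans Mt.toEquiv
  have hκ : ∀ a, κ a = Mt (φ (M.symm a)) := fun a => rfl
  have hκs : ∀ a, κ.symm a = M (φ.symm (Mt.symm a)) := fun a => rfl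
  have h1 : LipschitzWith 1 κ := by
    have hd : ∀ a, HasFDerivAt κ (((Mt : E G →L[ℝ] E G).comp
        (D (M.symm a) : E G →L[ℝ] E G)).comp (M.symm : E G →L[ℝ] E G)) a := by
      intro a
      have b1 : HasFDerivAt M.symm (M.symm : E G →L[ℝ] E G) a := M.symm.hasFDerivAt
      have b2 := (hD (M.symm a)).comp a b1
      have b3 : HasFDerivAt Mt (Mt : E G →L[ℝ] E G) (φ (M.symm a)) := Mt.hasFDerivAt
      rw [ContinuousLinearMap.comp_assoc]
      exact HasFDerivAt.comp (g := Mt) (f := φ ∘ M.symm) a b3 b2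
    refine lipschitzWith_of_nnnorm_fderiv_le (𝕜 := ℝ) (fun a => (hd a).differentiableAt) fun a => ?_
    rw [(hd a).fderiv, ← NNReal.coe_le_coe, coe_nnnorm]
    refine ContinuousLinearMap.opNorm_le_bound _ (by simp) fun d => ?_
    simp [hnorm]
  have h2 : LipschitzWith 1 κ.symm := by
    have hd : ∀ a, HasFDerivAt κ.symm (((M : E G →L[ℝ] E G).comp
        ((D (φ.symm (Mt.symm a))).symm : E G →L[ℝ] E G)).comp (Mt.symm : E G →L[ℝ] E G)) a := by
      intro a
      have b1 : HasFDerivAt Mt.symm (Mt.symm : E G →L[ℝ] E G) a := Mt.symm.hasFDerivAt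
      have b0 := hDs (φ.symm (Mt.symm a))
      rw [φ.apply_symm_apply] at b0
      have b2 := b0.comp a b1
      have b3 : HasFDerivAt M (M : E G →L[ℝ] E G) (φ.symm (Mt.symm a)) := M.hasFDerivAt
      rw [ContinuousLinearMap.comp_assoc]
      exact HasFDerivAt.comp (g := M) (f := φ.symm ∘ Mt.symm) a b3 b2
    refine lipschitzWith_of_nnnorm_fderiv_le (𝕜 := ℝ) (fun a => (hd a).differentiableAt) fun a => ?_
    rw [(hd a).fderiv, ← NNReal.coe_le_coe, coe_nnnorm]
    refine ContinuousLinearMap.opNorm_le_bound _ (by simp) fun d => ?_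
    have := hnorm (φ.symm (Mt.symm a)) ((D (φ.symm (Mt.symm a))).symm (Mt.symm d))
    simp at this
    simp [← this]
  have h3 : Isometry κ := by
    refine Isometry.of_dist_eq fun a b => le_antisymm ?_ ?_
    · simpa using h1.dist_le_mul a b
    · simpa using h2.dist_le_mul (κ a) (κ b)
  let T := (IsometryEquiv.mk κ h3).toRealAffineIsometryEquiv
  have hT : ∀ a, T a = κ a := fun a => rfl
  let Lin : E G →L[ℝ] E G := T.linearIsometryEquiv.toContinuousLinearEquiv
  have hL : ∀ a, κ a = Lin a + κ 0 := by
    intro a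
    have := T.map_vadd 0 a
    rw [hT, hT] at this
    simp only [vadd_eq_add, add_zero] at this
    exact this
  refine ⟨((Mt.symm : E G →L[ℝ] E G).comp Lin).comp (M : E G →L[ℝ] E G), fun v => ?_⟩
  have e1 := hL (M v)
  rw [hκ, hκ] at e1
  simp only [ContinuousLinearEquiv.symm_apply_apply, map_zero] at e1
  have e2 := congrArg Mt.symm e1
  simpa using e2

open Filter Topology in
/-- The deterministic core of the identification argument. -/
lemma core_affine {G : ℕ} {X : Type*}
    [NormedAddCommGroup X] [NormedSpace ℝ X] [FiniteDimensional ℝ X] [MeasurableSpace X]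
    [BorelSpace X] (μ : Measure X) [μ.IsAddHaarMeasure]
    {g gt : E G → ℝ} (hg : ContDiff ℝ 1 g) (hgt : ContDiff ℝ 1 gt)
    {φ : E G → E G} (hφ : LocallyLipschitz φ) (hφb : Function.Bijective φ)
    {r rt : X → E G} (hr : LocallyLipschitz r) (hrt : LocallyLipschitz rt)
    (hrs : Function.Surjective r)
    (hrd : ∀ᵐ x ∂μ, DifferentiableAt ℝ r x ∧ Function.Surjective (fderiv ℝ r x))
    {j : E G → ℝ} (heq : ∀ v x, g (v + r x) = gt (φ v + rt x) + j v)
    {us : E G} {H : E G →L[ℝ] E G →L[ℝ] ℝ} (hc : NDCrit g us H) :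
    ∃ (A : E G →L[ℝ] E G) (c : E G) (j₀ : ℝ), (∀ v, φ v = A v + φ 0) ∧
      (∀ x, rt x = A (r x) + c) ∧ ∀ v, j v = j₀ := by
  obtain ⟨hcrit, hj⟩ := core_step1 μ hg hgt hφ hr hrt hrd heq hc
  have hgd : Differentiable ℝ g := hg.differentiable (by norm_num)
  have hgtd : Differentiable ℝ gt := hgt.differentiable (by norm_num)
  obtain ⟨x₀, hx₀⟩ := hrs us
  have hj₀ : ∀ v, j v = j 0 := by
    intro v
    obtain ⟨x, hx⟩ := hrs (us - v)
    have := hj x x₀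
    rw [hx, hx₀] at this
    simpa using this
  have heq' : ∀ v x, g (v + r x) = gt (φ v + rt x) + j 0 := fun v x => by rw [heq, hj₀]
  choose D hDst using core_step2 hg hgt hφ hrs heq' hc
  have hD : ∀ v, HasFDerivAt φ (D v : E G →L[ℝ] E G) v := fun v => (hDst v).hasFDerivAt
  have hopen : IsOpenMap φ := by
    rw [isOpenMap_iff_nhds_le]
    intro v
    rw [(hDst v).map_nhds_eq_of_equiv]
  let Φ : E G ≃ₜ E G :=
    (Equiv.ofBijective φ hφb).toHomeomorphOfContinuousOpen hφ.continuous hopen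
  have hΦ : ∀ v, Φ v = φ v := fun v => rfl
  have hDs : ∀ v, HasFDerivAt Φ.symm ((D v).symm : E G →L[ℝ] E G) (Φ v) := by
    intro v
    refine HasFDerivAt.of_local_left_inverse (f := φ) Φ.symm.continuous.continuousAt ?_ ?_
    · rw [Φ.symm_apply_apply]; exact hD v
    · exact Eventually.of_forall fun y => Φ.apply_symm_apply y
  -- derivative in `v`
  have hdv : ∀ v x, fderiv ℝ g (v + r x) = (fderiv ℝ gt (φ v + rt x)).comp (D v : E G →L[ℝ] E G) := by
    intro v x
    have a1 : HasFDerivAt (fun v => g (v + r x)) ((fderiv ℝ g (v + r x)).comp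
        (ContinuousLinearMap.id ℝ (E G))) v :=
      HasFDerivAt.comp (f := fun v => v + r x) v (hgd (v + r x)).hasFDerivAt
        ((hasFDerivAt_id v).add_const (r x))
    have a2 : HasFDerivAt (fun v => gt (φ v + rt x) + j 0)
        ((fderiv ℝ gt (φ v + rt x)).comp (D v : E G →L[ℝ] E G)) v :=
      (HasFDerivAt.comp (f := fun v => φ v + rt x) v (hgtd (φ v + rt x)).hasFDerivAt
        ((hD v).add_const (rt x))).add_const (j 0)
    have a3 : (fun v => g (v + r x)) = fun v => gt (φ v + rt x) + j 0 := funext fun v => heq' v x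
    rw [a3] at a1
    have := a1.unique a2
    simpa using this
  -- the transported critical point does not move
  have hψc : Continuous fun x => φ (us - r x) + rt x :=
    (hφ.continuous.comp (continuous_const.sub hr.continuous)).add hrt.continuous
  have hloc : IsLocallyConstant fun x => φ (us - r x) + rt x := by
    rw [IsLocallyConstant.iff_eventually_eq]
    intro x
    have t1 : Tendsto (fun x' => Φ.symm (φ (us - r x') + rt x' - rt x) + r x) (𝓝 x) (𝓝 us) := by
      have hcont : Continuous (fun x' => Φ.symm (φ (us - r x') + rt x' - rt x) + r x) :=
        (Φ.symm.continuous.comp (hψc.sub continuous_const)).add continuous_const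
      have := hcont.tendsto x
      have e : Φ.symm (φ (us - r x) + rt x - rt x) + r x = us := by
        rw [add_sub_cancel_right, ← hΦ, Φ.symm_apply_apply, sub_add_cancel]
      rwa [e] at this
    filter_upwards [t1.eventually hc.isolated] with x' hx'
    have e1 : φ (Φ.symm (φ (us - r x') + rt x' - rt x)) = φ (us - r x') + rt x' - rt x :=
      Φ.apply_symm_apply _
    have e2 := hx' (by
      rw [hdv, e1, sub_add_cancel, hcrit x']; simp)
    have e3 : Φ.symm (φ (us - r x') + rt x' - rt x) = us - r x := eq_sub_of_add_eq e2
    rw [e3] at e1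
    rw [e1]; abel
  obtain ⟨ut, hut⟩ : ∃ ut, ∀ x, φ (us - r x) + rt x = ut :=
    ⟨_, fun x => hloc.apply_eq_of_isPreconnected isPreconnected_univ (Set.mem_univ x)
      (Set.mem_univ x₀)⟩
  have hrtx : ∀ x, rt x = ut - φ (us - r x) := fun x => eq_sub_of_add_eq' (hut x)
  have hfun : ∀ v w, g (us + v - w) = gt (ut + φ v - φ w) + j 0 := by
    intro v w
    obtain ⟨x, hx⟩ := hrs (us - w)
    have := heq' v x
    rw [hrtx, hx, sub_sub_cancel] at this
    rw [show us + v - w = v + (us - w) by abel, show ut + φ v - φ w = φ v + (ut - φ w) by abel]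
    exact this
  have hdw : ∀ v w, fderiv ℝ g (us + v - w) =
      (fderiv ℝ gt (ut + φ v - φ w)).comp (D w : E G →L[ℝ] E G) := by
    intro v w
    have a1 : HasFDerivAt (fun w => g (us + v - w)) ((fderiv ℝ g (us + v - w)).comp
        (-ContinuousLinearMap.id ℝ (E G))) w :=
      HasFDerivAt.comp (f := fun w => us + v - w) w (hgd (us + v - w)).hasFDerivAt
        ((hasFDerivAt_id w).const_sub (us + v))
    have a2 : HasFDerivAt (fun w => gt (ut + φ v - φ w) + j 0)
        ((fderiv ℝ gt (ut + φ v - φ w)).comp (-(D w : E G →L[ℝ] E G))) w :=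
      (HasFDerivAt.comp (f := fun w => ut + φ v - φ w) w (hgtd (ut + φ v - φ w)).hasFDerivAt
        ((hD w).const_sub (ut + φ v))).add_const (j 0)
    have a3 : (fun w => g (us + v - w)) = fun w => gt (ut + φ v - φ w) + j 0 :=
      funext fun w => hfun v w
    rw [a3] at a1
    have := a1.unique a2
    ext d
    have h := DFunLike.congr_fun this d
    simpa using h
  have hgt2 : ∀ w, HasFDerivAt (fderiv ℝ gt)
      (((ContinuousLinearMap.compL ℝ (E G) (E G) ℝ).flip ((D w).symm : E G →L[ℝ] E G)).comp
        (H.comp ((D w).symm : E G →L[ℝ] E G))) ut := by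
    intro w
    have e1 : fderiv ℝ gt = fun y => ((ContinuousLinearMap.compL ℝ (E G) (E G) ℝ).flip
        ((D w).symm : E G →L[ℝ] E G)) (fderiv ℝ g (us + Φ.symm (y - ut + φ w) - w)) := by
      funext y
      have hy : φ (Φ.symm (y - ut + φ w)) = y - ut + φ w := Φ.apply_symm_apply _
      rw [hdw, hy, show ut + (y - ut + φ w) - φ w = y by abel]
      ext d
      simp
    rw [e1]
    have c1 : HasFDerivAt (fun y => us + Φ.symm (y - ut + φ w) - w)
        ((D w).symm : E G →L[ℝ] E G) ut := by
      have b0 := hDs w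
      have b1 : HasFDerivAt (fun y => y - ut + φ w) (ContinuousLinearMap.id ℝ (E G)) ut :=
        ((hasFDerivAt_id ut).sub_const ut).add_const (φ w)
      have b2 : HasFDerivAt Φ.symm ((D w).symm : E G →L[ℝ] E G) (ut - ut + φ w) := by
        rw [sub_self, zero_add]; exact b0
      have b3 := ((HasFDerivAt.comp (f := fun y => y - ut + φ w) ut b2 b1).const_add us).sub_const w
      simpa using b3
    have c2 : HasFDerivAt (fderiv ℝ g) H (us + Φ.symm (ut - ut + φ w) - w) := by
      have : us + Φ.symm (ut - ut + φ w) - w = us := by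
        rw [sub_self, zero_add, ← hΦ, Φ.symm_apply_apply]; abel
      rw [this]; exact hc.hess
    have c3 := HasFDerivAt.comp (f := fun y => us + Φ.symm (y - ut + φ w) - w) ut c2 c1
    exact (ContinuousLinearMap.hasFDerivAt
      ((ContinuousLinearMap.compL ℝ (E G) (E G) ℝ).flip ((D w).symm : E G →L[ℝ] E G))).comp ut c3
  let Ht := fderiv ℝ (fderiv ℝ gt) ut
  have hiso : ∀ v d, Ht (D v d) (D v d) = H d d := by
    intro v d
    simp only [Ht]
    rw [(hgt2 v).fderiv]
    simp
  obtain ⟨A, hA⟩ := affine_of_forms Φ D hD hDs H Ht hc.neg hiso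
  refine ⟨A, ut - A us - φ 0, j 0, hA, fun x => ?_, hj₀⟩
  have := hA (us - r x)
  rw [hΦ, hΦ, map_sub] at this
  rw [hrtx, this]; abel


open Filter Topology in
lemma ndcrit_log {G : ℕ} {f : E G → ℝ} (hf : ContDiff ℝ 1 f) (hpos : ∀ u, 0 < f u)
    (hmax : LocalMaxCondition f) (S : E G ≃L[ℝ] E G) :
    ∃ us H, NDCrit (fun s => Real.log (f (S s))) us H := by
  obtain ⟨u₀, hloc, hcd, hneg⟩ := hmax
  have hfd : Differentiable ℝ f := hf.differentiable (by norm_num)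
  have h0 : fderiv ℝ f u₀ = 0 := hloc.fderiv_eq_zero
  have hS : S (S.symm u₀) = u₀ := S.apply_symm_apply u₀
  have hd1 : ∀ s, HasFDerivAt (fun s => f (S s)) ((fderiv ℝ f (S s)).comp (S : E G →L[ℝ] E G)) s :=
    fun s => HasFDerivAt.comp (f := S) s (hfd (S s)).hasFDerivAt S.hasFDerivAt
  have hd : fderiv ℝ (fun s => Real.log (f (S s))) =
      fun s => (f (S s))⁻¹ • (fderiv ℝ f (S s)).comp (S : E G →L[ℝ] E G) := by
    funext s
    exact ((hd1 s).log (hpos _).ne').fderiv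
  have hdd : DifferentiableAt ℝ (fderiv ℝ f) u₀ :=
    (hcd.fderiv_right (m := 1) (by norm_num)).differentiableAt (by norm_num)
  have hH0 : ∀ v, v ≠ 0 → fderiv ℝ (fderiv ℝ f) u₀ v v < 0 := by
    intro v hv
    have := hneg v hv
    rw [iteratedFDeriv_two_apply] at this
    simpa using this
  let R := (ContinuousLinearMap.compL ℝ (E G) (E G) ℝ).flip (S : E G →L[ℝ] E G)
  have hR : HasFDerivAt (fun s => (fderiv ℝ f (S s)).comp (S : E G →L[ℝ] E G))
      (R.comp ((fderiv ℝ (fderiv ℝ f) u₀).comp (S : E G →L[ℝ] E G))) (S.symm u₀) := by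
    have c1 : HasFDerivAt (fderiv ℝ f) (fderiv ℝ (fderiv ℝ f) u₀) (S (S.symm u₀)) := by
      rw [hS]; exact hdd.hasFDerivAt
    have c2 := HasFDerivAt.comp (f := S) (S.symm u₀) c1 S.hasFDerivAt
    exact R.hasFDerivAt.comp (S.symm u₀) c2
  have hinv : DifferentiableAt ℝ (fun s => (f (S s))⁻¹) (S.symm u₀) :=
    (hd1 _).differentiableAt.inv (hpos _).ne'
  have hfin := hinv.hasFDerivAt.smul hR
  refine ⟨S.symm u₀, fderiv ℝ (fderiv ℝ (fun s => Real.log (f (S s)))) (S.symm u₀), ⟨?_, ?_, ?_⟩⟩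
  · rw [hd]; simp [hS, h0]
  · rw [hd]; exact hfin.differentiableAt.hasFDerivAt
  · intro d hd'
    have h1 : S d ≠ 0 := by simpa using hd'
    have h2 := hH0 _ h1
    have h3 := inv_pos.2 (hpos u₀)
    have h4 := hfin.fderiv
    rw [hd]
    refine lt_of_eq_of_lt ?_ (mul_neg_of_pos_of_neg h3 h2)
    refine (DFunLike.congr_fun (DFunLike.congr_fun h4 d) d).trans ?_
    simp [R, hS, h0]

lemma mulVecE_eq {G : ℕ} (A : Matrix (Fin G) (Fin G) ℝ) (x : E G) :
    mulVecE A x = Matrix.toEuclideanCLM (𝕜 := ℝ) A x := by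
  ext i
  rw [Matrix.ofLp_toEuclideanCLM]; rfl

lemma mulVecE_mul {G : ℕ} (A B : Matrix (Fin G) (Fin G) ℝ) (x : E G) :
    mulVecE (A * B) x = mulVecE A (mulVecE B x) := by
  simp [mulVecE]

lemma mulVecE_one {G : ℕ} (x : E G) :
    mulVecE (1 : Matrix (Fin G) (Fin G) ℝ) x = x := by
  simp [mulVecE]

lemma mulVecE_ext {G : ℕ} {A B : Matrix (Fin G) (Fin G) ℝ}
    (h : ∀ x, mulVecE A x = mulVecE B x) : A = B := by
  apply (Matrix.toEuclideanCLM (𝕜 := ℝ) (n := Fin G)).injective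
  ext1 x
  have h1 := h x
  rw [mulVecE_eq, mulVecE_eq] at h1
  exact h1

lemma det_toEuclideanCLM {G : ℕ} (A : Matrix (Fin G) (Fin G) ℝ) :
    (Matrix.toEuclideanCLM (𝕜 := ℝ) A).det = A.det := by
  have : ((Matrix.toEuclideanCLM (𝕜 := ℝ) A) : E G →ₗ[ℝ] E G) =
      Matrix.toLin (EuclideanSpace.basisFun (Fin G) ℝ).toBasis
        (EuclideanSpace.basisFun (Fin G) ℝ).toBasis A := by
    rfl
  rw [ContinuousLinearMap.det, this, LinearMap.det_toLin]

lemma integral_affine {G : ℕ} (B : Matrix (Fin G) (Fin G) ℝ) (hB : B.det ≠ 0) (d : E G)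
    (h : E G → ℝ) : ∫ u, h u = |B.det| * ∫ u, h (mulVecE B u + d) := by
  have hinj : Function.Injective (fun u : E G => mulVecE B u + d) := by
    intro a b hab
    have h1 : mulVecE B a = mulVecE B b := add_right_cancel hab
    have h2 := congrArg (mulVecE B⁻¹) h1
    rwa [← mulVecE_mul, ← mulVecE_mul, Matrix.nonsing_inv_mul _ hB.isUnit, mulVecE_one,
      mulVecE_one] at h2
  have hsurj : Function.Surjective (fun u : E G => mulVecE B u + d) := by
    intro y
    refine ⟨mulVecE B⁻¹ (y - d), ?_⟩
    simp only
    rw [← mulVecE_mul, Matrix.mul_nonsing_inv _ hB.isUnit, mulVecE_one, sub_add_cancel]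
  have hder : ∀ x : E G, HasFDerivAt (fun u : E G => mulVecE B u + d)
      (Matrix.toEuclideanCLM (𝕜 := ℝ) B) x := by
    intro x
    simp only [mulVecE_eq]
    exact (ContinuousLinearMap.hasFDerivAt _).add_const d
  have := integral_image_eq_integral_abs_det_fderiv_smul (volume : Measure (E G))
    MeasurableSet.univ (fun x _ => (hder x).hasFDerivWithinAt) hinj.injOn h
  rw [Set.image_univ, hsurj.range_eq, Measure.restrict_univ] at this
  rw [this, ← integral_const_mul]
  simp only [det_toEuclideanCLM, smul_eq_mul]

lemma admissible_integrable {G : ℕ} {f : E G → ℝ} (hf : AdmissibleDensity f) :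
    Integrable f ∧ (∀ i, Integrable fun u : E G => u i * f u) ∧
      ∀ i j, Integrable fun u : E G => u i * u j * f u := by
  obtain ⟨hc, hpos, h1, h2, h3⟩ := hf
  have hcont := hc.continuous
  have i0 : Integrable f := by
    by_contra h
    rw [integral_undef h] at h1
    norm_num at h1
  have isq : ∀ i, Integrable fun u : E G => u i * u i * f u := by
    intro i
    by_contra h
    have := h3 i i
    rw [integral_undef h] at this
    simp at this
  refine ⟨i0, fun i => ?_, fun i j => ?_⟩
  · refine (i0.add (isq i)).mono' (by fun_prop) (Filter.Eventually.of_forall fun u => ?_)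
    simp only [Pi.add_apply, Real.norm_eq_abs, abs_mul, abs_of_pos (hpos u)]
    have : |u i| ≤ 1 + u i * u i := by
      rw [← abs_mul_abs_self (u i)]; nlinarith [sq_nonneg (|u i| - 1), abs_nonneg (u i)]
    nlinarith [hpos u]
  · refine ((isq i).add (isq j)).mono' (by fun_prop) (Filter.Eventually.of_forall fun u => ?_)
    simp only [Pi.add_apply, Real.norm_eq_abs, abs_mul, abs_of_pos (hpos u)]
    have : |u i| * |u j| ≤ u i * u i + u j * u j := by
      rw [← abs_mul_abs_self (u i), ← abs_mul_abs_self (u j)]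
      nlinarith [sq_nonneg (|u i| - |u j|), abs_nonneg (u i), abs_nonneg (u j)]
    nlinarith [hpos u]

lemma mulVecE_apply {G : ℕ} (A : Matrix (Fin G) (Fin G) ℝ) (x : E G) (i : Fin G) :
    mulVecE A x i = ∑ k, A i k * x k := rfl

/-- Second moments of a linear image. -/
lemma second_moment {G : ℕ} {f : E G → ℝ} (hf : AdmissibleDensity f)
    (B : Matrix (Fin G) (Fin G) ℝ) (i j : Fin G) :
    ∫ u, mulVecE B u i * mulVecE B u j * f u = (B * Bᵀ) i j := by
  obtain ⟨-, -, i2⟩ := admissible_integrable hf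
  have e : ∀ u : E G, mulVecE B u i * mulVecE B u j * f u =
      ∑ k, ∑ l, (B i k * B j l) * (u k * u l * f u) := by
    intro u
    rw [mulVecE_apply, mulVecE_apply, Finset.sum_mul_sum, Finset.sum_mul]
    refine Finset.sum_congr rfl fun k _ => ?_
    rw [Finset.sum_mul]
    refine Finset.sum_congr rfl fun l _ => by ring
  simp only [e]
  rw [integral_finsetSum _ fun k _ => integrable_finsetSum _ fun l _ => (i2 k l).const_mul _]
  simp only [Matrix.mul_apply, Matrix.transpose_apply]
  refine Finset.sum_congr rfl fun k _ => ?_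
  rw [integral_finsetSum _ fun l _ => (i2 k l).const_mul _]
  simp only [integral_const_mul, hf.2.2.2.2]
  simp

lemma first_moment {G : ℕ} {f : E G → ℝ} (hf : AdmissibleDensity f)
    (B : Matrix (Fin G) (Fin G) ℝ) (d : E G) (i : Fin G) :
    ∫ u, (mulVecE B u + d) i * f u = d i := by
  obtain ⟨i0, i1, -⟩ := admissible_integrable hf
  have e : ∀ u : E G, (mulVecE B u + d) i * f u = (∑ k, B i k * (u k * f u)) + d i * f u := by
    intro u
    rw [PiLp.add_apply, mulVecE_apply, add_mul, Finset.sum_mul]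
    congr 1
    refine Finset.sum_congr rfl fun k _ => by ring
  simp only [e]
  rw [integral_add (integrable_finsetSum _ fun k _ => (i1 k).const_mul _) (i0.const_mul _),
    integral_finsetSum _ fun k _ => (i1 k).const_mul _]
  simp only [integral_const_mul, hf.2.2.2.1, hf.2.2.1]
  simp

lemma moments {G : ℕ} {f ft : E G → ℝ} (hf : AdmissibleDensity f) (hft : AdmissibleDensity ft)
    (B : Matrix (Fin G) (Fin G) ℝ) (hB : B.det ≠ 0) (d : E G) (κ : ℝ)
    (h : ∀ u, ft (mulVecE B u + d) = κ * f u) : d = 0 ∧ B * Bᵀ = 1 := by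
  have hm : |B.det| * κ = 1 := by
    have h1 := integral_affine B hB d ft
    simp only [h, integral_const_mul, hf.2.2.1, hft.2.2.1] at h1
    linarith
  have hIntg : ∀ q : E G → ℝ, ∫ u, q u * ft u = ∫ u, q (mulVecE B u + d) * f u := by
    intro q
    rw [integral_affine B hB d (fun u => q u * ft u)]
    simp only [h]
    have : ∀ u, q (mulVecE B u + d) * (κ * f u) = κ * (q (mulVecE B u + d) * f u) := fun u => by ring
    simp only [this, integral_const_mul]
    rw [← mul_assoc, hm, one_mul]
  have hd : d = 0 := by
    ext i
    have h1 := hIntg (fun u => u i)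
    rw [hft.2.2.2.1 i, first_moment hf] at h1
    rw [← h1]; rfl
  refine ⟨hd, ?_⟩
  ext i j
  have h1 := hIntg (fun u => u i * u j)
  rw [hft.2.2.2.2 i j] at h1
  subst hd
  simp only [add_zero] at h1
  rw [second_moment hf] at h1
  rw [← h1, Matrix.one_apply]


open Filter Topology in
/-- Identification at a single value of `z`. -/
lemma per_z {G K : ℕ} {r₀ : E G → E G} (hr₀lip : LocallyLipschitz r₀)
    (hr₀bij : Function.Bijective r₀) (hr₀inv : LocallyLipschitz (Function.invFun r₀))
    (hr₀det : ∀ᵐ y : E G, DifferentiableAt ℝ r₀ y ∧ 0 < (fderiv ℝ r₀ y).det)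
    {r₁ : E K → E G} (hr₁lip : LocallyLipschitz r₁) (hr₁surj : Function.Surjective r₁)
    (hr₁rank : ∀ᵐ x : E K, DifferentiableAt ℝ r₁ x ∧
      LinearMap.rank (fderiv ℝ r₁ x).toLinearMap = (G : Cardinal))
    {fU : E G → ℝ} (hfU : AdmissibleDensity fU) (hfUmax : LocalMaxCondition fU)
    {σ σt : Matrix (Fin G) (Fin G) ℝ} (hσ : 0 < σ.det) (hσt : 0 < σt.det)
    (hσtT : σtᵀ = σt) (hσT : σᵀ = σ)
    {rt₀ : E G → E G} (hrt₀lip : LocallyLipschitz rt₀) (hrt₀bij : Function.Bijective rt₀)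
    (hrt₀det : ∀ᵐ y : E G, DifferentiableAt ℝ rt₀ y ∧ 0 < (fderiv ℝ rt₀ y).det)
    {rt₁ : E K → E G} (hrt₁lip : LocallyLipschitz rt₁)
    {fUt : E G → ℝ} (hfUt : AdmissibleDensity fUt)
    (h : ∀ᵐ w : E G × E K,
            fU (mulVecE σ⁻¹ (r₀ w.1 + r₁ w.2)) * (σ⁻¹.det * (fderiv ℝ r₀ w.1).det)
              = fUt (mulVecE σt⁻¹ (rt₀ w.1 + rt₁ w.2))
                  * (σt⁻¹.det * (fderiv ℝ rt₀ w.1).det)) :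
    ∃ A : Matrix (Fin G) (Fin G) ℝ, 0 < A.det ∧
      (∀ v, rt₀ (Function.invFun r₀ v) = mulVecE A v + rt₀ (Function.invFun r₀ 0)) ∧
      (∀ y x, rt₀ y + rt₁ x = mulVecE A (r₀ y + r₁ x)) ∧ A * (σ * σ) * Aᵀ = σt * σt := by
  have hσi : 0 < σ⁻¹.det := by
    rw [Matrix.det_nonsing_inv, Ring.inverse_eq_inv']; exact inv_pos.2 hσ
  have hσti : 0 < σt⁻¹.det := by
    rw [Matrix.det_nonsing_inv, Ring.inverse_eq_inv']; exact inv_pos.2 hσt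
  have hli : Function.LeftInverse (Function.invFun r₀) r₀ := Function.leftInverse_invFun hr₀bij.1
  have hri : Function.RightInverse (Function.invFun r₀) r₀ := Function.rightInverse_invFun hr₀bij.2
  let φ : E G → E G := rt₀ ∘ Function.invFun r₀
  have hφr : ∀ y, φ (r₀ y) = rt₀ y := fun y => congrArg rt₀ (hli y)
  have hφlip : LocallyLipschitz φ := hrt₀lip.comp hr₀inv
  have hφbij : Function.Bijective φ :=
    hrt₀bij.comp ⟨hri.injective, hli.surjective⟩
  let g : E G → ℝ := fun s => Real.log (fU (mulVecE σ⁻¹ s))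
  let gt : E G → ℝ := fun s => Real.log (fUt (mulVecE σt⁻¹ s))
  have hcd : ∀ (B : Matrix (Fin G) (Fin G) ℝ) (f : E G → ℝ), AdmissibleDensity f →
      ContDiff ℝ 1 (fun s => Real.log (f (mulVecE B s))) := by
    intro B f hf
    simp only [mulVecE_eq]
    exact (hf.1.comp (ContinuousLinearMap.contDiff _)).log fun s => (hf.2.1 _).ne'
  have hg : ContDiff ℝ 1 g := hcd _ _ hfU
  have hgt : ContDiff ℝ 1 gt := hcd _ _ hfUt
  -- from almost everywhere to everywhere
  let F : E G → E K → ℝ := fun y x => g (r₀ y + r₁ x) - gt (rt₀ y + rt₁ x)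
  have hFx : ∀ y, Continuous (F y) := fun y =>
    (hg.continuous.comp (continuous_const.add hr₁lip.continuous)).sub
      (hgt.continuous.comp (continuous_const.add hrt₁lip.continuous))
  have hFy : ∀ x, Continuous (fun y => F y x) := fun x =>
    (hg.continuous.comp (hr₀lip.continuous.add continuous_const)).sub
      (hgt.continuous.comp (hrt₀lip.continuous.add continuous_const))
  obtain ⟨x₀, -⟩ := hr₁surj 0
  have hFae : ∀ᵐ y : E G, ∀ x, F y x = F y x₀ := by
    rw [Measure.volume_eq_prod] at h
    filter_upwards [Measure.ae_ae_of_ae_prod h, hr₀det, hrt₀det] with y hy h0 ht0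
    have hae : F y =ᵐ[volume] fun _ => Real.log (σt⁻¹.det * (fderiv ℝ rt₀ y).det)
        - Real.log (σ⁻¹.det * (fderiv ℝ r₀ y).det) := by
      filter_upwards [hy] with x hx
      have hx' := congrArg Real.log hx
      rw [Real.log_mul (hfU.2.1 _).ne' (mul_pos hσi h0.2).ne',
        Real.log_mul (hfUt.2.1 _).ne' (mul_pos hσti ht0.2).ne'] at hx'
      simp only [F, g, gt]
      linarith
    have := ((hFx y).ae_eq_iff_eq volume continuous_const).1 hae
    intro x
    rw [this]
  have hF : ∀ y x, F y x = F y x₀ := by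
    intro y x
    have : (fun y => F y x) =ᵐ[volume] (fun y => F y x₀) := by
      filter_upwards [hFae] with y hy using hy x
    exact congrFun (((hFy x).ae_eq_iff_eq volume (hFy x₀)).1 this) y
  let j : E G → ℝ := fun v => F (Function.invFun r₀ v) x₀
  have heq : ∀ v x, g (v + r₁ x) = gt (φ v + rt₁ x) + j v := by
    intro v x
    have h1 := hF (Function.invFun r₀ v) x
    simp only [j, ← h1, F, hri v, φ, Function.comp]
    ring
  -- critical point
  have hSunit : σ⁻¹ * σ = 1 := Matrix.nonsing_inv_mul _ hσ.ne'.isUnit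
  have hSunit' : σ * σ⁻¹ = 1 := Matrix.mul_nonsing_inv _ hσ.ne'.isUnit
  let S : E G ≃L[ℝ] E G := ContinuousLinearEquiv.equivOfInverse
    (Matrix.toEuclideanCLM (𝕜 := ℝ) σ⁻¹) (Matrix.toEuclideanCLM (𝕜 := ℝ) σ)
    (fun x => by rw [← mulVecE_eq, ← mulVecE_eq, ← mulVecE_mul, hSunit', mulVecE_one])
    (fun x => by rw [← mulVecE_eq, ← mulVecE_eq, ← mulVecE_mul, hSunit, mulVecE_one])
  have hS : ∀ s, S s = mulVecE σ⁻¹ s := fun s => (mulVecE_eq _ _).symm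
  obtain ⟨us, H, hc⟩ := ndcrit_log hfU.1 hfU.2.1 hfUmax S
  simp only [hS] at hc
  have hrd : ∀ᵐ x : E K, DifferentiableAt ℝ r₁ x ∧ Function.Surjective (fderiv ℝ r₁ x) := by
    filter_upwards [hr₁rank] with x hx
    refine ⟨hx.1, ?_⟩
    have h1 : LinearMap.range (fderiv ℝ r₁ x).toLinearMap = ⊤ := by
      apply Submodule.eq_top_of_finrank_eq
      have h2 : Module.finrank ℝ (LinearMap.range (fderiv ℝ r₁ x).toLinearMap) = G :=
        Module.finrank_eq_of_rank_eq hx.2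
      rw [h2]; simp
    exact LinearMap.range_eq_top.1 h1
  obtain ⟨A', c, j₀, hA1, hA2, hj⟩ := core_affine volume hg hgt hφlip hφbij hr₁lip hrt₁lip hr₁surj
    hrd heq hc
  obtain ⟨A, rfl⟩ : ∃ A, A' = Matrix.toEuclideanCLM (𝕜 := ℝ) A :=
    by
      obtain ⟨A, hA⟩ := (Matrix.toEuclideanCLM (𝕜 := ℝ) (n := Fin G)).surjective A'
      exact ⟨A, hA.symm⟩
  simp only [← mulVecE_eq] at hA1 hA2
  have hdet : 0 < A.det := by
    obtain ⟨y, h0, ht0⟩ := (hr₀det.and hrt₀det).exists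
    have e : rt₀ = fun y => Matrix.toEuclideanCLM (𝕜 := ℝ) A (r₀ y) + φ 0 := by
      funext y
      rw [← hφr, hA1, mulVecE_eq]
    have hd : HasFDerivAt rt₀ ((Matrix.toEuclideanCLM (𝕜 := ℝ) A).comp (fderiv ℝ r₀ y)) y := by
      rw [e]
      exact ((ContinuousLinearMap.hasFDerivAt _).comp y h0.1.hasFDerivAt).add_const _
    have h2 := ht0.2
    rw [hd.fderiv] at h2
    have h3 : ((Matrix.toEuclideanCLM (𝕜 := ℝ) A).comp (fderiv ℝ r₀ y)).det =
        A.det * (fderiv ℝ r₀ y).det := by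
      rw [← det_toEuclideanCLM A]
      exact LinearMap.det_comp _ _
    rw [h3] at h2
    exact (pos_iff_pos_of_mul_pos h2).2 h0.2
  -- the combined map
  have hadd : ∀ (B : Matrix (Fin G) (Fin G) ℝ) (a b : E G),
      mulVecE B (a + b) = mulVecE B a + mulVecE B b := by
    intro B a b; simp only [mulVecE_eq, map_add]
  have hcomb : ∀ y x, rt₀ y + rt₁ x = mulVecE A (r₀ y + r₁ x) + (φ 0 + c) := by
    intro y x
    rw [hA2, ← hφr, hA1, hadd]; abel
  have hdens : ∀ u, fUt (mulVecE (σt⁻¹ * A * σ) u + mulVecE σt⁻¹ (φ 0 + c)) = Real.exp (-j₀) * fU u := by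
    intro u
    obtain ⟨x, hx⟩ := hr₁surj (mulVecE σ u)
    have h1 := heq 0 x
    rw [hj, ← hri 0, hφr, hcomb, hri 0, hx, zero_add] at h1
    simp only [g, gt] at h1
    rw [← mulVecE_mul, hSunit, mulVecE_one, hadd, ← mulVecE_mul, ← mulVecE_mul] at h1
    rw [← Real.exp_log (hfUt.2.1 (mulVecE (σt⁻¹ * A * σ) u + mulVecE σt⁻¹ (φ 0 + c))),
      ← Real.exp_log (hfU.2.1 u), ← Real.exp_add, h1]
    congr 1; ring
  have hBdet : (σt⁻¹ * A * σ).det ≠ 0 := by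
    rw [Matrix.det_mul, Matrix.det_mul]
    positivity
  obtain ⟨hc0, hBB⟩ := moments hfU hfUt _ hBdet _ _ hdens
  have hStunit' : σt * σt⁻¹ = 1 := Matrix.mul_nonsing_inv _ hσt.ne'.isUnit
  have hc00 : φ 0 + c = 0 := by
    have := congrArg (mulVecE σt) hc0
    rw [← mulVecE_mul, hStunit', mulVecE_one] at this
    rw [this, mulVecE_eq, map_zero]
  refine ⟨A, hdet, hA1, fun y x => by rw [hcomb, hc00, add_zero], ?_⟩
  have hBT : (σt⁻¹ * A * σ)ᵀ = σ * Aᵀ * σt⁻¹ := by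
    rw [Matrix.transpose_mul, Matrix.transpose_mul, Matrix.transpose_nonsing_inv, hσtT, hσT,
      mul_assoc]
  have hSt : σt⁻¹ * σt = 1 := Matrix.nonsing_inv_mul _ hσt.ne'.isUnit
  rw [hBT] at hBB
  calc A * (σ * σ) * Aᵀ = (σt * σt⁻¹) * (A * (σ * σ) * Aᵀ) * (σt⁻¹ * σt) := by
        rw [hStunit', hSt, one_mul, mul_one]
    _ = σt * ((σt⁻¹ * A * σ) * (σ * Aᵀ * σt⁻¹)) * σt := by simp only [mul_assoc]
    _ = σt * σt := by rw [hBB, mul_one]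

lemma isDiag_eq {G : ℕ} {σ : Matrix (Fin G) (Fin G) ℝ} (h : σ.IsDiag) :
    σ = Matrix.diagonal (fun i => σ i i) := h.diagonal_diag.symm

lemma isDiag_det_pos {G : ℕ} {σ : Matrix (Fin G) (Fin G) ℝ} (h : σ.IsDiag)
    (hp : ∀ i, 0 < σ i i) : 0 < σ.det := by
  rw [isDiag_eq h, Matrix.det_diagonal]
  exact Finset.prod_pos fun i _ => hp i

lemma isDiag_transpose {G : ℕ} {σ : Matrix (Fin G) (Fin G) ℝ} (h : σ.IsDiag) : σᵀ = σ := by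
  rw [isDiag_eq h, Matrix.diagonal_transpose]


open Filter Topology in
/-- The forward direction, with the extra information on `σt`. -/
lemma forward_main
    {G K L : ℕ} {ν : Measure (E L)} {Zs : Set (E L)} (hνZ : ν Zsᶜ = 0)
    {zstar : E L}
    (hνzstar : ∀ U : Set (E L), IsOpen U → zstar ∈ U → 0 < ν U)
    {r₀ : E G → E G} (hr₀lip : LocallyLipschitz r₀) (hr₀bij : Function.Bijective r₀)
    (hr₀inv : LocallyLipschitz (Function.invFun r₀))
    (hr₀det : ∀ᵐ y : E G, DifferentiableAt ℝ r₀ y ∧ 0 < (fderiv ℝ r₀ y).det)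
    {r₁ : E K → E L → E G}
    (hr₁lip : ∀ z ∈ Zs, LocallyLipschitz (fun x => r₁ x z))
    (hr₁surj : ∀ z ∈ Zs, Function.Surjective (fun x => r₁ x z))
    (hr₁rank : ∀ z ∈ Zs, ∀ᵐ x : E K, DifferentiableAt ℝ (fun x' => r₁ x' z) x ∧
      LinearMap.rank (fderiv ℝ (fun x' => r₁ x' z) x).toLinearMap = (G : Cardinal))
    {fU : E G → ℝ} (hfU : AdmissibleDensity fU) (hfUmax : LocalMaxCondition fU)
    {σ : E L → Matrix (Fin G) (Fin G) ℝ} (hσ : SkedasticFn σ zstar)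
    {rt₀ : E G → E G} (hrt₀lip : LocallyLipschitz rt₀) (hrt₀bij : Function.Bijective rt₀)
    (hrt₀det : ∀ᵐ y : E G, DifferentiableAt ℝ rt₀ y ∧ 0 < (fderiv ℝ rt₀ y).det)
    {rt₁ : E K → E L → E G}
    (hrt₁lip : ∀ z ∈ Zs, LocallyLipschitz (fun x => rt₁ x z))
    {σt : E L → Matrix (Fin G) (Fin G) ℝ} {fUt : E G → ℝ}
    (hσt : SkedasticFn σt zstar) (hfUt : AdmissibleDensity fUt)
    (h : ∀ᵐ z ∂ν, z ∈ Zs →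
          ∀ᵐ w : E G × E K,
            fU (mulVecE (σ z)⁻¹ (r₀ w.1 + r₁ w.2 z)) * ((σ z)⁻¹.det * (fderiv ℝ r₀ w.1).det)
              = fUt (mulVecE (σt z)⁻¹ (rt₀ w.1 + rt₁ w.2 z))
                  * ((σt z)⁻¹.det * (fderiv ℝ rt₀ w.1).det)) :
    ∃ Q : Matrix (Fin G) (Fin G) ℝ, Q * Qᵀ = 1 ∧ Q.det = 1 ∧
          ∀ᵐ z ∂ν, z ∈ Zs ∧
            (∀ (y : E G) (x : E K), rt₀ y + rt₁ x z = mulVecE Q (r₀ y + r₁ x z)) ∧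
            Q * (σ z * σ z) * Qᵀ = σt z * σt z := by
  have hZ : ∀ᵐ z ∂ν, z ∈ Zs := hνZ
  have hgood : ∀ᵐ z ∂ν, z ∈ Zs ∧ ∃ A : Matrix (Fin G) (Fin G) ℝ, 0 < A.det ∧
      (∀ v, rt₀ (Function.invFun r₀ v) = mulVecE A v + rt₀ (Function.invFun r₀ 0)) ∧
      (∀ y x, rt₀ y + rt₁ x z = mulVecE A (r₀ y + r₁ x z)) ∧
      A * (σ z * σ z) * Aᵀ = σt z * σt z := by
    filter_upwards [h, hZ] with z hz hzZ
    exact ⟨hzZ, per_z hr₀lip hr₀bij hr₀inv hr₀det (hr₁lip z hzZ) (hr₁surj z hzZ) (hr₁rank z hzZ)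
      hfU hfUmax (isDiag_det_pos (hσ.1 z) (hσ.2.1 z)) (isDiag_det_pos (hσt.1 z) (hσt.2.1 z))
      (isDiag_transpose (hσt.1 z)) (isDiag_transpose (hσ.1 z)) hrt₀lip hrt₀bij hrt₀det
      (hrt₁lip z hzZ) hfUt (hz hzZ)⟩
  have hex : ∀ U : Set (E L), U ∈ 𝓝 zstar → ∀ p : E L → Prop, (∀ᵐ z ∂ν, p z) → ∃ z ∈ U, p z := by
    intro U hU p hp
    obtain ⟨V, hVU, hVo, hVz⟩ := mem_nhds_iff.1 hU
    by_contra hcon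
    push Not at hcon
    have h1 : ν V = 0 := measure_mono_null (fun z hz => hcon z (hVU hz)) hp
    exact (hνzstar V hVo hVz).ne' h1
  obtain ⟨z₁, -, hz₁Z, A, hAdet, hA1, -, -⟩ := hex Set.univ univ_mem _ hgood
  have hall : ∀ᵐ z ∂ν, z ∈ Zs ∧
            (∀ (y : E G) (x : E K), rt₀ y + rt₁ x z = mulVecE A (r₀ y + r₁ x z)) ∧
            A * (σ z * σ z) * Aᵀ = σt z * σt z := by
    filter_upwards [hgood] with z hz
    obtain ⟨hzZ, B, hBdet, hB1, hB2, hB3⟩ := hz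
    have hBA : B = A := mulVecE_ext fun v =>
      add_right_cancel ((hB1 v).symm.trans (hA1 v))
    subst hBA
    exact ⟨hzZ, hB2, hB3⟩
  have hAA : A * Aᵀ = 1 := by
    by_contra hne
    have c1 : Tendsto (fun z => A * (σ z * σ z) * Aᵀ) (𝓝 zstar) (𝓝 (A * Aᵀ)) := by
      have hc : ContinuousAt (fun z => A * (σ z * σ z) * Aᵀ) zstar := by
        have := hσ.2.2.2
        exact (continuousAt_const.mul (this.mul this)).mul continuousAt_const
      have := hc.tendsto
      simpa only [hσ.2.2.1, mul_one] using this
    have c2 : Tendsto (fun z => σt z * σt z) (𝓝 zstar) (𝓝 1) := by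
      have hc : ContinuousAt (fun z => σt z * σt z) zstar := hσt.2.2.2.mul hσt.2.2.2
      have := hc.tendsto
      simpa only [hσt.2.2.1, mul_one] using this
    have h1 := (c1.sub c2).eventually_ne (sub_ne_zero.2 hne)
    obtain ⟨z, hz, -, -, hz3⟩ := hex _ h1 _ hall
    exact hz (sub_eq_zero.2 hz3)
  refine ⟨A, hAA, ?_, hall⟩
  have := congrArg Matrix.det hAA
  rw [Matrix.det_mul, Matrix.det_transpose, Matrix.det_one] at this
  nlinarith

lemma isDiag_mul {G : ℕ} {σ τ : Matrix (Fin G) (Fin G) ℝ} (h : σ.IsDiag) (h' : τ.IsDiag) :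
    (σ * τ).IsDiag := by
  rw [isDiag_eq h, isDiag_eq h', Matrix.diagonal_mul_diagonal]
  exact Matrix.isDiag_diagonal _

/-- Rotating an admissible density. -/
lemma admissible_rotate {G : ℕ} {f : E G → ℝ} (hf : AdmissibleDensity f)
    {Q : Matrix (Fin G) (Fin G) ℝ} (hQ : Q * Qᵀ = 1) (hdet : Q.det = 1) :
    AdmissibleDensity (fun u => f (mulVecE Qᵀ u)) := by
  have hQ' : Qᵀ * Q = 1 := mul_eq_one_comm.1 hQ
  have hIntg : ∀ q : E G → ℝ, ∫ u, q u * f (mulVecE Qᵀ u) = ∫ u, q (mulVecE Q u) * f u := by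
    intro q
    rw [integral_affine Q (by rw [hdet]; norm_num) 0 (fun u => q u * f (mulVecE Qᵀ u))]
    simp only [add_zero, ← mulVecE_mul, hQ', mulVecE_one, hdet, abs_one, one_mul]
  refine ⟨?_, fun u => hf.2.1 _, ?_, fun i => ?_, fun i j => ?_⟩
  · simp only [mulVecE_eq]
    exact hf.1.comp (ContinuousLinearMap.contDiff _)
  · have := hIntg (fun _ => 1)
    simp only [one_mul] at this
    rw [this, hf.2.2.1]
  · rw [hIntg (fun u => u i)]
    have := first_moment hf Q 0 i
    simpa using this
  · rw [hIntg (fun u => u i * u j), second_moment hf, hQ, Matrix.one_apply]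

/-- The diagonal square root of the rotated variance. -/
def rotSked {G L : ℕ} (Q : Matrix (Fin G) (Fin G) ℝ) (σ : E L → Matrix (Fin G) (Fin G) ℝ) :
    E L → Matrix (Fin G) (Fin G) ℝ :=
  fun z => Matrix.diagonal fun i => Real.sqrt ((Q * (σ z * σ z) * Qᵀ) i i)

lemma rot_entry {G : ℕ} {Q σ : Matrix (Fin G) (Fin G) ℝ} (hσ : σ.IsDiag) (i : Fin G) :
    (Q * (σ * σ) * Qᵀ) i i = ∑ k, (Q i k * σ k k) ^ 2 := by
  obtain ⟨d, rfl⟩ : ∃ d, σ = Matrix.diagonal d := ⟨_, isDiag_eq hσ⟩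
  rw [Matrix.diagonal_mul_diagonal, Matrix.mul_apply]
  refine Finset.sum_congr rfl fun k _ => ?_
  rw [Matrix.mul_diagonal, Matrix.transpose_apply, Matrix.diagonal_apply_eq]
  ring

lemma rot_entry_pos {G : ℕ} {Q σ : Matrix (Fin G) (Fin G) ℝ} (hσ : σ.IsDiag)
    (hp : ∀ i, 0 < σ i i) (hQ : Q * Qᵀ = 1) (i : Fin G) :
    0 < (Q * (σ * σ) * Qᵀ) i i := by
  rw [rot_entry hσ]
  have h1 : ∑ k, Q i k * Q i k = 1 := by
    have := congrFun (congrFun hQ i) i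
    rwa [Matrix.mul_apply, Matrix.one_apply_eq] at this
  have h2 : ∃ k, Q i k ≠ 0 := by
    by_contra hcon
    push Not at hcon
    simp [hcon] at h1
  obtain ⟨k, hk⟩ := h2
  refine Finset.sum_pos' (fun _ _ => sq_nonneg _) ⟨k, Finset.mem_univ _, ?_⟩
  have := mul_ne_zero hk (hp k).ne'
  positivity

lemma rotSked_sked {G L : ℕ} {Q : Matrix (Fin G) (Fin G) ℝ}
    {σ : E L → Matrix (Fin G) (Fin G) ℝ} {zstar : E L} (hσ : SkedasticFn σ zstar)
    (hQ : Q * Qᵀ = 1) : SkedasticFn (rotSked Q σ) zstar := by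
  refine ⟨fun z => Matrix.isDiag_diagonal _, fun z i => ?_, ?_, ?_⟩
  · rw [rotSked, Matrix.diagonal_apply_eq]
    exact Real.sqrt_pos.2 (rot_entry_pos (hσ.1 z) (hσ.2.1 z) hQ i)
  · simp only [rotSked, hσ.2.2.1, mul_one, hQ, Matrix.one_apply_eq, Real.sqrt_one]
    exact Matrix.diagonal_one
  · have hc : ContinuousAt (fun z => Q * (σ z * σ z) * Qᵀ) zstar :=
      (continuousAt_const.mul (hσ.2.2.2.mul hσ.2.2.2)).mul continuousAt_const
    have h2 : Continuous fun M : Matrix (Fin G) (Fin G) ℝ =>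
        Matrix.diagonal fun i => Real.sqrt (M i i) := by
      fun_prop
    exact h2.continuousAt.comp hc

lemma rot_comm {G : ℕ} {Q σ τ : Matrix (Fin G) (Fin G) ℝ} (hσ : σ.IsDiag)
    (hp : ∀ i, 0 < σ i i) (hτ : τ.IsDiag) (hpτ : ∀ i, 0 < τ i i) (hQ : Q * Qᵀ = 1)
    (h : Q * (σ * σ) * Qᵀ = τ * τ) : τ * Q = Q * σ := by
  have hQ' : Qᵀ * Q = 1 := mul_eq_one_comm.1 hQ
  have h1 : Q * (σ * σ) = τ * τ * Q := by
    rw [← h, mul_assoc _ Qᵀ, hQ', mul_one]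
  obtain ⟨d, rfl⟩ : ∃ d, σ = Matrix.diagonal d := ⟨_, isDiag_eq hσ⟩
  obtain ⟨e, rfl⟩ : ∃ d, τ = Matrix.diagonal d := ⟨_, isDiag_eq hτ⟩
  simp only [Matrix.diagonal_apply_eq] at hp hpτ
  ext i j
  have h2 := congrFun (congrFun h1 i) j
  simp only [Matrix.diagonal_mul_diagonal, Matrix.mul_diagonal, Matrix.diagonal_mul] at h2 ⊢
  rcases eq_or_ne (Q i j) 0 with h0 | h0
  · simp [h0]
  · have h3 : d j * d j = e i * e i := by
      apply mul_left_cancel₀ h0; linarith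
    have h4 : d j = e i := (mul_self_inj (hp j).le (hpτ i).le).1 h3
    rw [h4]; ring

open Filter in
/-- The backward direction at a single `z`. -/
lemma backward_z {G K : ℕ} {r₀ rt₀ : E G → E G}
    (hr₀det : ∀ᵐ y : E G, DifferentiableAt ℝ r₀ y ∧ 0 < (fderiv ℝ r₀ y).det)
    {r₁ rt₁ : E K → E G} {fU : E G → ℝ}
    {Q σ τ : Matrix (Fin G) (Fin G) ℝ} (hσ : 0 < σ.det) (hτ : 0 < τ.det)
    (hQ : Q * Qᵀ = 1) (hdet : Q.det = 1) (hcomm : τ * Q = Q * σ)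
    (h : ∀ y x, rt₀ y + rt₁ x = mulVecE Q (r₀ y + r₁ x)) :
    ∀ᵐ w : E G × E K,
      fU (mulVecE σ⁻¹ (r₀ w.1 + r₁ w.2)) * (σ⁻¹.det * (fderiv ℝ r₀ w.1).det)
        = fU (mulVecE Qᵀ (mulVecE τ⁻¹ (rt₀ w.1 + rt₁ w.2)))
            * (τ⁻¹.det * (fderiv ℝ rt₀ w.1).det) := by
  have hQ' : Qᵀ * Q = 1 := mul_eq_one_comm.1 hQ
  have hdd : τ.det = σ.det := by
    have := congrArg Matrix.det hcomm
    rwa [Matrix.det_mul, Matrix.det_mul, hdet, mul_one, one_mul] at this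
  have hi : Qᵀ * τ⁻¹ * Q = σ⁻¹ := by
    have h1 : σ * σ⁻¹ = 1 := Matrix.mul_nonsing_inv _ hσ.ne'.isUnit
    have h2 : τ⁻¹ * τ = 1 := Matrix.nonsing_inv_mul _ hτ.ne'.isUnit
    calc Qᵀ * τ⁻¹ * Q = Qᵀ * τ⁻¹ * Q * (σ * σ⁻¹) := by rw [h1, mul_one]
      _ = Qᵀ * τ⁻¹ * (Q * σ) * σ⁻¹ := by simp only [mul_assoc]
      _ = Qᵀ * (τ⁻¹ * τ) * Q * σ⁻¹ := by rw [← hcomm]; simp only [mul_assoc]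
      _ = σ⁻¹ := by rw [h2, mul_one, hQ', one_mul]
  have hy : ∀ᵐ w : E G × E K, DifferentiableAt ℝ r₀ w.1 := by
    rw [Measure.volume_eq_prod]
    refine Measure.quasiMeasurePreserving_fst.ae ?_
    filter_upwards [hr₀det] with y hy using hy.1
  filter_upwards [hy] with w hw
  have e : rt₀ = fun y => Matrix.toEuclideanCLM (𝕜 := ℝ) Q (r₀ y) +
      (mulVecE Q (r₁ w.2) - rt₁ w.2) := by
    funext y
    have h1 := h y w.2
    have h2 : mulVecE Q (r₀ y + r₁ w.2) = mulVecE Q (r₀ y) + mulVecE Q (r₁ w.2) := by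
      simp only [mulVecE_eq, map_add]
    rw [h2] at h1
    rw [← mulVecE_eq, eq_sub_of_add_eq h1]; abel
  have hd : HasFDerivAt rt₀ ((Matrix.toEuclideanCLM (𝕜 := ℝ) Q).comp (fderiv ℝ r₀ w.1)) w.1 := by
    rw [e]
    exact ((ContinuousLinearMap.hasFDerivAt _).comp w.1 hw.hasFDerivAt).add_const _
  have h3 : ((Matrix.toEuclideanCLM (𝕜 := ℝ) Q).comp (fderiv ℝ r₀ w.1)).det =
      (fderiv ℝ r₀ w.1).det := by
    rw [← one_mul (fderiv ℝ r₀ w.1).det, ← hdet, ← det_toEuclideanCLM Q]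
    exact LinearMap.det_comp _ _
  rw [hd.fderiv, h3, h, ← mulVecE_mul, ← mulVecE_mul, hi, Matrix.det_nonsing_inv,
    Matrix.det_nonsing_inv, hdd]


/-- **Observational equivalence in the heteroskedastic nonlinear SEM** (Theorem `thm:semhet`),
stated as the equivalence together with the `moreover` clause identifying `σ̃²`. -/
theorem sem_heteroskedastic_identification
    (G K L : ℕ) (hG : 1 ≤ G) (hGK : G ≤ K) (hL : 1 ≤ L)
    (ν : Measure (E L)) (Zs : Set (E L)) (hνZ : ν Zsᶜ = 0)
    (zstar : E L) (hzstar : zstar ∈ Zs)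
    (hνzstar : ∀ U : Set (E L), IsOpen U → zstar ∈ U → 0 < ν U)
    (r₀ : E G → E G) (hr₀lip : LocallyLipschitz r₀) (hr₀bij : Function.Bijective r₀)
    (hr₀inv : LocallyLipschitz (Function.invFun r₀))
    (hr₀det : ∀ᵐ y : E G, DifferentiableAt ℝ r₀ y ∧ 0 < (fderiv ℝ r₀ y).det)
    (r₁ : E K → E L → E G)
    (hr₁lip : ∀ z ∈ Zs, LocallyLipschitz (fun x => r₁ x z))
    (hr₁surj : ∀ z ∈ Zs, Function.Surjective (fun x => r₁ x z))
    (hr₁rank : ∀ z ∈ Zs, ∀ᵐ x : E K, DifferentiableAt ℝ (fun x' => r₁ x' z) x ∧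
      LinearMap.rank (fderiv ℝ (fun x' => r₁ x' z) x).toLinearMap = (G : Cardinal))
    (fU : E G → ℝ) (hfU : AdmissibleDensity fU) (hfUmax : LocalMaxCondition fU)
    (σ : E L → Matrix (Fin G) (Fin G) ℝ) (hσ : SkedasticFn σ zstar)
    (rt₀ : E G → E G) (hrt₀lip : LocallyLipschitz rt₀) (hrt₀bij : Function.Bijective rt₀)
    (hrt₀det : ∀ᵐ y : E G, DifferentiableAt ℝ rt₀ y ∧ 0 < (fderiv ℝ rt₀ y).det)
    (rt₁ : E K → E L → E G)
    (hrt₁lip : ∀ z ∈ Zs, LocallyLipschitz (fun x => rt₁ x z)) :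
    ((∃ (σt : E L → Matrix (Fin G) (Fin G) ℝ) (fUt : E G → ℝ),
        SkedasticFn σt zstar ∧ AdmissibleDensity fUt ∧
        ∀ᵐ z ∂ν, z ∈ Zs →
          ∀ᵐ w : E G × E K,
            fU (mulVecE (σ z)⁻¹ (r₀ w.1 + r₁ w.2 z)) * ((σ z)⁻¹.det * (fderiv ℝ r₀ w.1).det)
              = fUt (mulVecE (σt z)⁻¹ (rt₀ w.1 + rt₁ w.2 z))
                  * ((σt z)⁻¹.det * (fderiv ℝ rt₀ w.1).det))
      ↔ ∃ Q : Matrix (Fin G) (Fin G) ℝ, Q * Qᵀ = 1 ∧ Q.det = 1 ∧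
          ∀ᵐ z ∂ν, z ∈ Zs →
            (∀ (y : E G) (x : E K), rt₀ y + rt₁ x z = mulVecE Q (r₀ y + r₁ x z)) ∧
            (Q * (σ z * σ z) * Qᵀ).IsDiag)
    ∧
    (∀ (σt : E L → Matrix (Fin G) (Fin G) ℝ) (fUt : E G → ℝ)
        (Q : Matrix (Fin G) (Fin G) ℝ),
      SkedasticFn σt zstar → AdmissibleDensity fUt →
      (∀ᵐ z ∂ν, z ∈ Zs →
        ∀ᵐ w : E G × E K,
          fU (mulVecE (σ z)⁻¹ (r₀ w.1 + r₁ w.2 z)) * ((σ z)⁻¹.det * (fderiv ℝ r₀ w.1).det)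
            = fUt (mulVecE (σt z)⁻¹ (rt₀ w.1 + rt₁ w.2 z))
                * ((σt z)⁻¹.det * (fderiv ℝ rt₀ w.1).det)) →
      Q * Qᵀ = 1 → Q.det = 1 →
      (∀ᵐ z ∂ν, z ∈ Zs →
        (∀ (y : E G) (x : E K), rt₀ y + rt₁ x z = mulVecE Q (r₀ y + r₁ x z)) ∧
        (Q * (σ z * σ z) * Qᵀ).IsDiag) →
      ∀ᵐ z ∂ν, z ∈ Zs → σt z * σt z = Q * (σ z * σ z) * Qᵀ) := by
  have hZ : ∀ᵐ z ∂ν, z ∈ Zs := hνZ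
  have hexz : ∀ p : E L → Prop, (∀ᵐ z ∂ν, p z) → ∃ z, p z := by
    intro p hp
    by_contra hcon
    push Not at hcon
    have h1 : ν Set.univ = 0 := measure_mono_null (fun z _ => hcon z) hp
    exact (hνzstar Set.univ isOpen_univ (Set.mem_univ _)).ne' h1
  refine ⟨⟨?_, ?_⟩, ?_⟩
  · rintro ⟨σt, fUt, hσt, hfUt, h⟩
    obtain ⟨Q, hQ, hdet, hall⟩ := forward_main hνZ hνzstar hr₀lip hr₀bij hr₀inv hr₀det hr₁lip
      hr₁surj hr₁rank hfU hfUmax hσ hrt₀lip hrt₀bij hrt₀det hrt₁lip hσt hfUt h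
    refine ⟨Q, hQ, hdet, ?_⟩
    filter_upwards [hall] with z hz _
    refine ⟨hz.2.1, ?_⟩
    rw [hz.2.2]
    exact isDiag_mul (hσt.1 z) (hσt.1 z)
  · rintro ⟨Q, hQ, hdet, hall⟩
    have hs := rotSked_sked hσ hQ
    refine ⟨rotSked Q σ, fun u => fU (mulVecE Qᵀ u), hs, admissible_rotate hfU hQ hdet, ?_⟩
    filter_upwards [hall] with z hz hzZ
    obtain ⟨h1, h2⟩ := hz hzZ
    have h3 : Q * (σ z * σ z) * Qᵀ = rotSked Q σ z * rotSked Q σ z := by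
      rw [rotSked, Matrix.diagonal_mul_diagonal]
      conv_lhs => rw [isDiag_eq h2]
      congr 1
      funext i
      exact (Real.mul_self_sqrt (rot_entry_pos (hσ.1 z) (hσ.2.1 z) hQ i).le).symm
    exact backward_z (rt₁ := fun x => rt₁ x z) (r₁ := fun x => r₁ x z) hr₀det (isDiag_det_pos (hσ.1 z) (hσ.2.1 z))
      (isDiag_det_pos (hs.1 z) (hs.2.1 z)) hQ hdet
      (rot_comm (hσ.1 z) (hσ.2.1 z) (hs.1 z) (hs.2.1 z) hQ h3) h1
  · intro σt fUt Q hσt hfUt h hQ hdet hall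
    obtain ⟨Q₀, hQ₀, hdet₀, hall₀⟩ := forward_main hνZ hνzstar hr₀lip hr₀bij hr₀inv hr₀det hr₁lip
      hr₁surj hr₁rank hfU hfUmax hσ hrt₀lip hrt₀bij hrt₀det hrt₁lip hσt hfUt h
    obtain ⟨z, hz, hzZ, hz0, hz00⟩ := hexz _ (hall.and hall₀)
    have hQQ : Q = Q₀ := by
      apply mulVecE_ext
      intro v
      obtain ⟨x, hx⟩ := hr₁surj z hzZ 0
      obtain ⟨y, hy⟩ := hr₀bij.2 v
      have h1 := (hz hzZ).1 y x
      rw [hz0 y x] at h1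
      simp only at hx
      rw [hx, hy, add_zero] at h1
      exact h1.symm
    subst hQQ
    filter_upwards [hall₀] with z hz _
    exact hz.2.2.symm
end
end

section
/- Let p ≥ 1 and let f : ℝ^p → ℝ^p be either a piecewise linear function or a threshold affine function, with associated matrices Φ⁽¹⁾, …, Φ⁽ᴸ⁾ ∈ ℝ^{p×p}. Then f is a bijection of ℝ^p and both f and f⁻¹ are Lipschitz continuous, if and only if the determinantal condition holds: sgn det Φ⁽ˡ⁾ = sgn det Φ⁽¹⁾ ≠ 0 for all ℓ ∈ {1, …, L}. -/
open MeasureTheory Matrix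

noncomputable section

/-- A (continuous) piecewise affine function `f` with regimes `Z`, intercepts `φ`
and coefficient matrices `Φ`: the regimes are convex, nonempty, and partition `ℝ^p`,
and `f z = φ ℓ + Φ ℓ z` on the regime `Z ℓ`. -/
def IsPiecewiseAffine {p L : ℕ} (f : E p → E p) (Z : Fin L → Set (E p))
    (φ : Fin L → E p) (Φ : Fin L → Matrix (Fin p) (Fin p) ℝ) : Prop :=
  Continuous f ∧ (∀ ℓ, Convex ℝ (Z ℓ)) ∧ (∀ ℓ, (Z ℓ).Nonempty) ∧
    (∀ z : E p, ∃! ℓ, z ∈ Z ℓ) ∧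
    ∀ ℓ, ∀ z ∈ Z ℓ, f z = φ ℓ + mulVecE (Φ ℓ) z

/-- The cone `C_I` determined by the vectors `a` and the index set `I`. -/
def coneOf {p : ℕ} (a : Fin p → E p) (I : Set (Fin p)) : Set (E p) :=
  {z | (∀ i ∈ I, 0 ≤ ∑ j, a i j * z j) ∧ (∀ i ∉ I, (∑ j, a i j * z j) < 0)}

/-- A (continuous) piecewise linear function: piecewise affine with zero intercepts, where each
regime is a union of cones `C_I` determined by a fixed basis `a₁, …, a_p` of `ℝ^p`. -/
def IsPiecewiseLinear {p L : ℕ} (f : E p → E p) (Z : Fin L → Set (E p))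
    (φ : Fin L → E p) (Φ : Fin L → Matrix (Fin p) (Fin p) ℝ) : Prop :=
  IsPiecewiseAffine f Z φ Φ ∧ (∀ ℓ, φ ℓ = 0) ∧
    ∃ a : Fin p → E p, LinearIndependent ℝ a ∧ Submodule.span ℝ (Set.range a) = ⊤ ∧
      ∀ ℓ, ∃ S : Set (Set (Fin p)), Z ℓ = ⋃ I ∈ S, coneOf a I

/-- A (continuous) threshold affine function: piecewise affine, whose regimes are the bands
`{z : τ_{ℓ-1} < aᵀz ≤ τ_ℓ}` for some `a ≠ 0` and thresholds `-∞ = τ₀ < τ₁ < ⋯ < τ_L = +∞`. -/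
def IsThresholdAffine {p L : ℕ} (f : E p → E p) (Z : Fin L → Set (E p))
    (φ : Fin L → E p) (Φ : Fin L → Matrix (Fin p) (Fin p) ℝ) : Prop :=
  IsPiecewiseAffine f Z φ Φ ∧
    ∃ a : E p, a ≠ 0 ∧ ∃ τ : Fin (L + 1) → EReal, StrictMono τ ∧
      τ 0 = ⊥ ∧ τ (Fin.last L) = ⊤ ∧
      ∀ ℓ : Fin L, Z ℓ =
        {z : E p | τ ℓ.castSucc < ((∑ j, a j * z j : ℝ) : EReal) ∧
          ((∑ j, a j * z j : ℝ) : EReal) ≤ τ ℓ.succ}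


open Set Filter Topology

lemma mv_add {p : ℕ} (M : Matrix (Fin p) (Fin p) ℝ) (x y : E p) :
    mulVecE M (x + y) = mulVecE M x + mulVecE M y := by
  ext i; simp [mulVecE, Matrix.mulVec_add]

lemma mv_smul {p : ℕ} (M : Matrix (Fin p) (Fin p) ℝ) (c : ℝ) (x : E p) :
    mulVecE M (c • x) = c • mulVecE M x := by
  ext i; simp [mulVecE, Matrix.mulVec_smul]

/-- The action as a bilinear map. -/
def mvL (p : ℕ) : Matrix (Fin p) (Fin p) ℝ →ₗ[ℝ] E p →ₗ[ℝ] E p :=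
  LinearMap.mk₂ ℝ (fun M x => mulVecE M x)
    (by intro M N x; ext i; simp [mulVecE, Matrix.add_mulVec])
    (by intro c M x; ext i; simp [mulVecE, Matrix.smul_mulVec])
    (fun M x y => mv_add M x y) (fun c M x => mv_smul M c x)

lemma mvL_apply {p : ℕ} (M : Matrix (Fin p) (Fin p) ℝ) (x : E p) :
    mvL p M x = mulVecE M x := rfl

lemma mv_cont {p : ℕ} : Continuous (fun q : Matrix (Fin p) (Fin p) ℝ × E p => mulVecE q.1 q.2) := by
  unfold mulVecE
  refine (PiLp.continuous_toLp 2 _).comp ?_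
  exact Continuous.matrix_mulVec continuous_fst ((PiLp.continuous_ofLp 2 _).comp continuous_snd)

lemma mv_cont' {p : ℕ} (M : Matrix (Fin p) (Fin p) ℝ) : Continuous (fun x : E p => mulVecE M x) :=
  mv_cont.comp (Continuous.prodMk continuous_const continuous_id)

lemma det_ne_zero_of_mv {p : ℕ} (M : Matrix (Fin p) (Fin p) ℝ)
    (h : ∀ u : E p, mulVecE M u = 0 → u = 0) : M.det ≠ 0 := by
  intro h0
  obtain ⟨v, hv, hMv⟩ := Matrix.exists_mulVec_eq_zero_iff.mpr h0
  apply hv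
  have := h (WithLp.toLp 2 v) (by ext i; simp [mulVecE, hMv])
  simpa using this

lemma mv_eq_zero {p : ℕ} {M : Matrix (Fin p) (Fin p) ℝ} (hM : M.det ≠ 0) {u : E p}
    (h : mulVecE M u = 0) : u = 0 := by
  have : M *ᵥ u = 0 := by simpa [mulVecE] using h
  have := Matrix.eq_zero_of_mulVec_eq_zero hM this
  simpa using this

lemma eq_on_closure {p L : ℕ} {f : E p → E p} {Z : Fin L → Set (E p)}
    {φ : Fin L → E p} {Φ : Fin L → Matrix (Fin p) (Fin p) ℝ}
    (hf : IsPiecewiseAffine f Z φ Φ) {l : Fin L} {z : E p} (hz : z ∈ closure (Z l)) :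
    f z = φ l + mulVecE (Φ l) z := by
  have hc : IsClosed {z | f z = φ l + mulVecE (Φ l) z} :=
    isClosed_eq hf.1 (continuous_const.add (mv_cont' _))
  exact closure_minimal (fun z hz => hf.2.2.2.2 l z hz) hc hz

lemma mem_closure_of_ray {p : ℕ} {S : Set (E p)} {z u : E p} {ε₀ : ℝ} (h0 : 0 < ε₀)
    (h : ∀ ε, 0 < ε → ε < ε₀ → z + ε • u ∈ S) : z ∈ closure S := by
  have ht : Tendsto (fun ε : ℝ => z + ε • u) (𝓝[>] 0) (𝓝 z) := by
    have : Continuous (fun ε : ℝ => z + ε • u) := by fun_prop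
    have := (this.tendsto 0).mono_left (nhdsWithin_le_nhds (s := Ioi 0))
    simpa using this
  refine mem_closure_of_tendsto ht ?_
  filter_upwards [Ioo_mem_nhdsGT h0] with ε hε using h ε hε.1 hε.2

lemma ray_formula {p L : ℕ} {f : E p → E p} {Z : Fin L → Set (E p)}
    {φ : Fin L → E p} {Φ : Fin L → Matrix (Fin p) (Fin p) ℝ}
    (hf : IsPiecewiseAffine f Z φ Φ) {l : Fin L} {z u : E p} {ε₀ : ℝ} (h0 : 0 < ε₀)
    (h : ∀ ε, 0 < ε → ε < ε₀ → z + ε • u ∈ Z l) {ε : ℝ} (hε : 0 ≤ ε) (hε' : ε < ε₀) :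
    f (z + ε • u) = f z + ε • mulVecE (Φ l) u := by
  have hz := eq_on_closure hf (mem_closure_of_ray h0 h)
  rcases hε.eq_or_lt with rfl | hp
  · simp
  · rw [hz, hf.2.2.2.2 l _ (h ε hp hε'), mv_add, mv_smul, add_assoc]

lemma exists_ray {p L : ℕ} {f : E p → E p} {Z : Fin L → Set (E p)}
    {φ : Fin L → E p} {Φ : Fin L → Matrix (Fin p) (Fin p) ℝ}
    (hf : IsPiecewiseAffine f Z φ Φ) (z u : E p) :
    ∃ l, ∃ ε₀ > (0:ℝ), ∀ ε : ℝ, 0 < ε → ε < ε₀ → z + ε • u ∈ Z l := by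
  have h1 : ∃ l, ∃ᶠ ε : ℝ in 𝓝[>] 0, z + ε • u ∈ Z l := by
    by_contra hcon
    push Not at hcon
    have h2 : ∀ᶠ ε : ℝ in 𝓝[>] 0, ∀ l, z + ε • u ∉ Z l := by
      rw [eventually_all]; exact fun l => by simpa using hcon l
    obtain ⟨ε, hε⟩ := h2.exists
    obtain ⟨l, hl, -⟩ := hf.2.2.2.1 (z + ε • u)
    exact hε l hl
  obtain ⟨l, hl⟩ := h1
  have hex : ∀ δ > (0:ℝ), ∃ ε : ℝ, 0 < ε ∧ ε < δ ∧ z + ε • u ∈ Z l := by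
    intro δ hδ
    obtain ⟨ε, h, h'⟩ := (hl.and_eventually (Ioo_mem_nhdsGT hδ)).exists
    exact ⟨ε, h'.1, h'.2, h⟩
  obtain ⟨ε₁, h1, -, hz1⟩ := hex 1 one_pos
  refine ⟨l, ε₁, h1, fun ε hε hε' => ?_⟩
  obtain ⟨ε₂, h2, h2', hz2⟩ := hex ε hε
  have hd : 0 < ε₁ - ε₂ := by linarith
  have ha : 0 ≤ (ε₁ - ε) / (ε₁ - ε₂) := div_nonneg (by linarith) hd.le
  have hb : 0 ≤ (ε - ε₂) / (ε₁ - ε₂) := div_nonneg (by linarith) hd.le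
  have := hf.2.1 l hz2 hz1 ha hb (by field_simp; ring)
  convert this using 1
  have e1 : ((ε₁ - ε) / (ε₁ - ε₂)) + ((ε - ε₂) / (ε₁ - ε₂)) = 1 := by field_simp; ring
  have e2 : ((ε₁ - ε) / (ε₁ - ε₂)) * ε₂ + ((ε - ε₂) / (ε₁ - ε₂)) * ε₁ = ε := by field_simp; ring
  calc z + ε • u = (((ε₁ - ε) / (ε₁ - ε₂)) + ((ε - ε₂) / (ε₁ - ε₂))) • z +
        (((ε₁ - ε) / (ε₁ - ε₂)) * ε₂ + ((ε - ε₂) / (ε₁ - ε₂)) * ε₁) • u := by rw [e1, e2, one_smul]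
    _ = _ := by module

/-- Mean value property. -/
lemma mean_value {p L : ℕ} {f : E p → E p} {Z : Fin L → Set (E p)}
    {φ : Fin L → E p} {Φ : Fin L → Matrix (Fin p) (Fin p) ℝ}
    (hf : IsPiecewiseAffine f Z φ Φ) (x y : E p) :
    ∃ M ∈ convexHull ℝ (range Φ), f x - f y = mulVecE M (x - y) := by
  set d := x - y with hd
  have him := ((mvL p).flip d).image_convexHull (range Φ)
  set K := convexHull ℝ ((mvL p).flip d '' range Φ) with hK
  have hKc : IsClosed K := ((finite_range Φ).image _).isClosed_convexHull ℝ
  suffices h : f x - f y ∈ K by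
    rw [← him] at h
    obtain ⟨M, hM, h⟩ := h
    exact ⟨M, hM, h.symm⟩
  by_contra hcon
  obtain ⟨ψ, u, hψ, hu⟩ := geometric_hahn_banach_closed_point (convex_convexHull ℝ _) hKc hcon
  have hγ : Continuous (fun t : ℝ => ψ (f (y + t • d))) :=
    ψ.continuous.comp (hf.1.comp (by fun_prop))
  have hder : ∀ t : ℝ, ∃ q, q < u ∧
      HasDerivWithinAt (fun t : ℝ => ψ (f (y + t • d))) q (Ici t) t := by
    intro t
    obtain ⟨l, ε₀, h0, hl⟩ := exists_ray hf (y + t • d) d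
    refine ⟨ψ (mulVecE (Φ l) d), hψ _ (subset_convexHull ℝ _ ⟨Φ l, ⟨l, rfl⟩, rfl⟩), ?_⟩
    have h1 : HasDerivWithinAt (fun s : ℝ => ψ (f (y + t • d)) + (s - t) * ψ (mulVecE (Φ l) d))
        (ψ (mulVecE (Φ l) d)) (Ici t) t := by
      have := (((hasDerivAt_id t).sub_const t).mul_const (ψ (mulVecE (Φ l) d))).const_add
        (ψ (f (y + t • d)))
      simpa using this.hasDerivWithinAt
    refine h1.congr_of_eventuallyEq ?_ (by simp)
    have : Ico t (t + ε₀) ∈ 𝓝[≥] t := Ico_mem_nhdsGE (by linarith)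
    filter_upwards [this] with s hs
    have := ray_formula hf h0 hl (ε := s - t) (by linarith [hs.1]) (by linarith [hs.2])
    have e : y + t • d + (s - t) • d = y + s • d := by module
    rw [e] at this
    rw [this]; simp
  choose q hq hq' using hder
  have key := image_le_of_deriv_right_le_deriv_boundary (a := 0) (b := 1)
    (f := fun t : ℝ => ψ (f (y + t • d))) (f' := q) hγ.continuousOn
    (fun t _ => hq' t) (B := fun t => ψ (f y) + t * u) (B' := fun _ => u) (by simp)
    (by fun_prop) (fun t _ => by
      have := ((hasDerivAt_id t).mul_const u).const_add (ψ (f y))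
      simpa using this.hasDerivWithinAt) (fun t _ => (hq t).le)
    (right_mem_Icc.mpr zero_le_one)
  have e : y + (1:ℝ) • d = x := by rw [hd]; module
  simp only [e] at key
  rw [map_sub] at hu
  linarith

lemma hull_compact {p L : ℕ} (Φ : Fin L → Matrix (Fin p) (Fin p) ℝ) :
    IsCompact (convexHull ℝ (range Φ)) := (finite_range Φ).isCompact_convexHull ℝ

lemma lip_of_pwa {p L : ℕ} {f : E p → E p} {Z : Fin L → Set (E p)}
    {φ : Fin L → E p} {Φ : Fin L → Matrix (Fin p) (Fin p) ℝ}
    (hf : IsPiecewiseAffine f Z φ Φ) : ∃ C : NNReal, LipschitzWith C f := by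
  have hc : IsCompact ((convexHull ℝ (range Φ)) ×ˢ Metric.sphere (0 : E p) 1) :=
    (hull_compact Φ).prod (isCompact_sphere 0 1)
  obtain ⟨C, hC⟩ := hc.exists_bound_of_continuousOn (mv_cont (p := p)).continuousOn
  refine ⟨C.toNNReal, LipschitzWith.of_dist_le_mul fun x y => ?_⟩
  obtain ⟨M, hM, h⟩ := mean_value hf x y
  rw [dist_eq_norm, dist_eq_norm, h]
  by_cases hxy : x - y = 0
  · rw [hxy]; simp [← mvL_apply]
  have hn : 0 < ‖x - y‖ := norm_pos_iff.mpr hxy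
  have h1 := hC (M, ‖x - y‖⁻¹ • (x - y)) ⟨hM, by simp [norm_smul, hn.ne']⟩
  simp only [mv_smul, norm_smul, norm_inv, norm_norm] at h1
  rw [inv_mul_le_iff₀ hn] at h1
  have := Real.le_coe_toNNReal C
  nlinarith

lemma antilip_of_pwa {p L : ℕ} {f : E p → E p} {Z : Fin L → Set (E p)}
    {φ : Fin L → E p} {Φ : Fin L → Matrix (Fin p) (Fin p) ℝ}
    (hf : IsPiecewiseAffine f Z φ Φ) (hH : ∀ M ∈ convexHull ℝ (range Φ), M.det ≠ 0) :
    ∃ C : NNReal, AntilipschitzWith C f := by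
  have hc : IsCompact ((convexHull ℝ (range Φ)) ×ˢ Metric.sphere (0 : E p) 1) :=
    (hull_compact Φ).prod (isCompact_sphere 0 1)
  have hcont : ContinuousOn (fun q : Matrix (Fin p) (Fin p) ℝ × E p => ‖mulVecE q.1 q.2‖⁻¹)
      ((convexHull ℝ (range Φ)) ×ˢ Metric.sphere (0 : E p) 1) := by
    refine ContinuousOn.inv₀ (mv_cont (p := p)).norm.continuousOn ?_
    rintro ⟨M, v⟩ ⟨hM, hv⟩ h0
    have := mv_eq_zero (hH M hM) (norm_eq_zero.mp h0)
    simp only at hv this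
    simp [this] at hv
  obtain ⟨C, hC⟩ := hc.exists_bound_of_continuousOn hcont
  refine ⟨C.toNNReal, AntilipschitzWith.of_le_mul_dist fun x y => ?_⟩
  obtain ⟨M, hM, h⟩ := mean_value hf x y
  rw [dist_eq_norm, dist_eq_norm, h]
  by_cases hxy : x - y = 0
  · rw [hxy]; simp [← mvL_apply]
  have hn : 0 < ‖x - y‖ := norm_pos_iff.mpr hxy
  have hM0 : 0 < ‖mulVecE M (x - y)‖ := norm_pos_iff.mpr fun h => hxy (mv_eq_zero (hH M hM) h)
  have h1 := hC (M, ‖x - y‖⁻¹ • (x - y)) ⟨hM, by simp [norm_smul, hn.ne']⟩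
  simp only [mv_smul, norm_smul, norm_inv, norm_norm, norm_mul, mul_inv, inv_inv] at h1
  rw [← div_eq_mul_inv, div_le_iff₀ hM0] at h1
  exact h1.trans (mul_le_mul_of_nonneg_right (Real.le_coe_toNNReal C) hM0.le)

lemma concl_of_hull {p L : ℕ} {f : E p → E p} {Z : Fin L → Set (E p)}
    {φ : Fin L → E p} {Φ : Fin L → Matrix (Fin p) (Fin p) ℝ}
    (hf : IsPiecewiseAffine f Z φ Φ) (hH : ∀ M ∈ convexHull ℝ (range Φ), M.det ≠ 0)
    (hs : Function.Surjective f) :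
    (Function.Bijective f ∧ (∃ C : NNReal, LipschitzWith C f) ∧
        (∃ C : NNReal, LipschitzWith C (Function.invFun f))) := by
  obtain ⟨C, hC⟩ := antilip_of_pwa hf hH
  exact ⟨⟨hC.injective, hs⟩, lip_of_pwa hf, C,
    hC.to_rightInverse (Function.rightInverse_invFun hs)⟩

/-- Adjacent regimes of an injective map have determinants of the same sign. -/
lemma adj {p L : ℕ} {f : E p → E p} {Z : Fin L → Set (E p)}
    {φ : Fin L → E p} {Φ : Fin L → Matrix (Fin p) (Fin p) ℝ}
    (hf : IsPiecewiseAffine f Z φ Φ) (hinj : Function.Injective f) (l m : Fin L) (z : E p)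
    (α : E p → ℝ) (hα : ∀ u, α (-u) = - α u)
    (h0 : ∀ u, α u = 0 → mulVecE (Φ l) u = mulVecE (Φ m) u)
    (hpos : ∀ u, 0 ≤ α u → ∃ ε₀ > (0:ℝ), ∀ ε : ℝ, 0 < ε → ε < ε₀ → z + ε • u ∈ Z l)
    (hneg : ∀ u, α u < 0 → ∃ ε₀ > (0:ℝ), ∀ ε : ℝ, 0 < ε → ε < ε₀ → z + ε • u ∈ Z m) :
    0 < (Φ l).det * (Φ m).det := by
  -- it suffices to treat vectors with `0 ≤ α u`
  have main : ∀ t : ℝ, 0 ≤ t → t ≤ 1 → ∀ u, 0 ≤ α u →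
      mulVecE (t • Φ l + (1 - t) • Φ m) u = 0 → u = 0 := by
    intro t ht ht1 u hu hk
    obtain ⟨ε₁, h1, H1⟩ := hpos u hu
    have H2 : ∃ ε₂ > (0:ℝ), ∀ ε : ℝ, 0 ≤ ε → ε < ε₂ → f (z + ε • (-u)) = f z + ε • mulVecE (Φ m) (-u) := by
      rcases hu.eq_or_lt with h | h
      · obtain ⟨ε₂, h2, H2⟩ := hpos (-u) (by rw [hα, ← h]; simp)
        refine ⟨ε₂, h2, fun ε he he' => ?_⟩
        rw [ray_formula hf h2 H2 he he', h0 (-u) (by rw [hα, ← h]; simp)]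
      · obtain ⟨ε₂, h2, H2⟩ := hneg (-u) (by rw [hα]; linarith)
        exact ⟨ε₂, h2, fun ε he he' => ray_formula hf h2 H2 he he'⟩
    obtain ⟨ε₂, h2, H2⟩ := H2
    set ε := min ε₁ ε₂ / 2 with hε
    have hm : 0 < min ε₁ ε₂ := lt_min h1 h2
    have hεp : 0 < ε := by positivity
    have hε1 : ε < ε₁ := by have := min_le_left ε₁ ε₂; linarith
    have hε2 : ε < ε₂ := by have := min_le_right ε₁ ε₂; linarith
    have e1 := ray_formula hf h1 H1 (ε := ε * t) (by positivity) (by nlinarith)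
    have e2 := H2 (ε * (1 - t)) (mul_nonneg hεp.le (by linarith)) (by nlinarith)
    have hk' : t • mulVecE (Φ l) u + (1 - t) • mulVecE (Φ m) u = 0 := by
      simpa only [← mvL_apply, map_add, map_smul, LinearMap.add_apply, LinearMap.smul_apply] using hk
    have : f (z + (ε * t) • u) = f (z + (ε * (1 - t)) • (-u)) := by
      rw [e1, e2, ← sub_eq_zero]
      have : mulVecE (Φ m) (-u) = - mulVecE (Φ m) u := by simp [← mvL_apply]
      rw [this]
      calc _ = ε • (t • mulVecE (Φ l) u + (1 - t) • mulVecE (Φ m) u) := by module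
        _ = 0 := by rw [hk', smul_zero]
    have := hinj this
    have h3 : ε • u = 0 := by
      calc ε • u = (z + (ε * t) • u) - (z + (ε * (1 - t)) • (-u)) := by module
        _ = 0 := by rw [this, sub_self]
    exact (smul_eq_zero.mp h3).resolve_left hεp.ne'
  have hdet : ∀ t ∈ Icc (0:ℝ) 1, (t • Φ l + (1 - t) • Φ m).det ≠ 0 := by
    intro t ht
    refine det_ne_zero_of_mv _ fun u hu => ?_
    rcases le_total 0 (α u) with h | h
    · exact main t ht.1 ht.2 u h hu
    · have := main t ht.1 ht.2 (-u) (by rw [hα]; linarith) (by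
        rw [← mvL_apply, map_neg, mvL_apply, hu, neg_zero])
      simpa using this
  have hcont : ContinuousOn (fun t : ℝ => (t • Φ l + (1 - t) • Φ m).det) (Icc 0 1) := by
    apply Continuous.continuousOn
    apply Continuous.matrix_det
    fun_prop
  by_contra hcon
  have h0' := hdet 0 (by simp)
  have h1' := hdet 1 (by simp)
  simp at h0' h1'
  rcases lt_or_gt_of_ne h0' with a | a <;> rcases lt_or_gt_of_ne h1' with b | b
  · exact hcon (mul_pos_of_neg_of_neg b a)
  · obtain ⟨t, ht, h⟩ := intermediate_value_Icc zero_le_one hcont (show (0:ℝ) ∈ Icc _ _ by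
      simp; exact ⟨a.le, b.le⟩)
    exact hdet t ht h
  · obtain ⟨t, ht, h⟩ := intermediate_value_Icc' zero_le_one hcont (show (0:ℝ) ∈ Icc _ _ by
      simp; exact ⟨b.le, a.le⟩)
    exact hdet t ht h
  · exact hcon (mul_pos b a)

/-- The linear functional `z ↦ aᵀ z`. -/
def al {p : ℕ} (a : E p) : E p →ₗ[ℝ] ℝ where
  toFun z := ∑ j, a j * z j
  map_add' x y := by simp [mul_add, Finset.sum_add_distrib]
  map_smul' c x := by simp [Finset.mul_sum, mul_left_comm]

lemma al_apply {p : ℕ} (a z : E p) : al a z = ∑ j, a j * z j := rfl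

lemma exists_unit {p : ℕ} {a : E p} (ha : a ≠ 0) : ∃ e : E p, al a e = 1 := by
  have h1 : al a a = ‖a‖ ^ 2 := by
    rw [al_apply, EuclideanSpace.norm_sq_eq]
    simp [sq]
  have h2 : 0 < ‖a‖ := norm_pos_iff.mpr ha
  refine ⟨(‖a‖ ^ 2)⁻¹ • a, ?_⟩
  rw [map_smul, h1, smul_eq_mul]
  field_simp

lemma mv_mul {p : ℕ} (M N : Matrix (Fin p) (Fin p) ℝ) (x : E p) :
    mulVecE (M * N) x = mulVecE M (mulVecE N x) := by
  ext i; simp [mulVecE]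

lemma mv_one {p : ℕ} (x : E p) : mulVecE (1 : Matrix (Fin p) (Fin p) ℝ) x = x := by
  ext i; simp [mulVecE]

lemma mat_ext {p : ℕ} {M N : Matrix (Fin p) (Fin p) ℝ} (h : ∀ x, mulVecE M x = mulVecE N x) :
    M = N := by
  apply Matrix.ext_of_mulVec_single
  intro i
  have := h (WithLp.toLp 2 (Pi.single i 1))
  simpa [mulVecE] using this

lemma det_rank_one {p : ℕ} {M N : Matrix (Fin p) (Fin p) ℝ} (hN : N.det ≠ 0) {a e : E p}
    (he : al a e = 1) (h : ∀ u, al a u = 0 → mulVecE M u = mulVecE N u) :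
    M.det = N.det * al a (mulVecE N⁻¹ (mulVecE M e)) := by
  set w := mulVecE M e - mulVecE N e with hw
  have hM : M = N + Matrix.replicateCol Unit w * Matrix.replicateRow Unit a := by
    apply mat_ext
    intro x
    have h1 := h (x - al a x • e) (by simp [he])
    simp only [← mvL_apply, map_sub, map_smul] at h1
    simp only [mvL_apply] at h1
    have h2 : mulVecE M x = mulVecE N x + al a x • w := by
      rw [hw, smul_sub]
      have := eq_add_of_sub_eq h1
      rw [this]; abel
    have h3 : mulVecE (Matrix.replicateCol Unit w * Matrix.replicateRow Unit a) x = al a x • w := by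
      ext i
      simp [mulVecE, Matrix.mulVec, dotProduct, al_apply, Matrix.mul_apply, Finset.mul_sum, mul_comm,
        mul_left_comm, mul_assoc]
    rw [← mvL_apply (N + _), map_add, LinearMap.add_apply, mvL_apply, mvL_apply, h3, h2]
  have hu : IsUnit N.det := hN.isUnit
  have h4 : M.det = N.det * (1 + al a (mulVecE N⁻¹ w)) := by
    conv_lhs => rw [hM]
    rw [Matrix.det_add_replicateCol_mul_replicateRow hu]
    congr 1
    rw [Matrix.mul_assoc]
    simp only [Matrix.det_unique]
    simp [Matrix.mul_apply, al_apply, mulVecE, Matrix.mulVec, dotProduct]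
  rw [h4, hw]
  congr 1
  have h5 : mulVecE N⁻¹ (mulVecE N e) = e := by
    rw [← mv_mul, Matrix.nonsing_inv_mul _ hu, mv_one]
  rw [← mvL_apply N⁻¹, map_sub, map_sub, mvL_apply, mvL_apply, h5, he]
  ring

lemma thr_backward {p L : ℕ} {f : E p → E p} {Z : Fin L → Set (E p)}
    {φ : Fin L → E p} {Φ : Fin L → Matrix (Fin p) (Fin p) ℝ}
    (hf : IsPiecewiseAffine f Z φ Φ) (l₀ : Fin L) {a : E p} (ha : a ≠ 0)
    (hagree : ∀ l u, al a u = 0 → mulVecE (Φ l) u = mulVecE (Φ l₀) u)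
    (hdet : ∀ l, 0 < (Φ l).det * (Φ l₀).det) :
    (∀ M ∈ convexHull ℝ (range Φ), M.det ≠ 0) ∧ Function.Surjective f := by
  obtain ⟨e, he⟩ := exists_unit ha
  have hN : (Φ l₀).det ≠ 0 := fun h => by have := hdet l₀; simp [h] at this
  set N := Φ l₀ with hNdef
  have hu : IsUnit N.det := hN.isUnit
  have hGN : ∀ x, mulVecE N (mulVecE N⁻¹ x) = x := fun x => by
    rw [← mv_mul, Matrix.mul_nonsing_inv _ hu, mv_one]
  -- the linear functional giving the determinant
  let T : Matrix (Fin p) (Fin p) ℝ →ₗ[ℝ] ℝ := (al a) ∘ₗ (mvL p N⁻¹) ∘ₗ ((mvL p).flip e)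
  have hT : ∀ M, T M = al a (mulVecE N⁻¹ (mulVecE M e)) := fun M => rfl
  have hpos : ∀ l, 0 < T (Φ l) := by
    intro l
    have h1 := hdet l
    rw [det_rank_one hN he (hagree l), ← hT] at h1
    have h2 : N.det * T (Φ l) * N.det = N.det ^ 2 * T (Φ l) := by ring
    rw [h2] at h1
    exact (mul_pos_iff_of_pos_left (by positivity)).mp h1
  have : Nonempty (Fin L) := ⟨l₀⟩
  obtain ⟨l₁, hl₁⟩ := Finite.exists_min (fun l => T (Φ l))
  set δ := T (Φ l₁) with hδ
  have hδ0 : 0 < δ := hpos l₁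
  have hhull : ∀ M ∈ convexHull ℝ (range Φ), δ ≤ T M := by
    intro M hM
    have hc : Convex ℝ {M | δ ≤ T M} := convex_halfSpace_ge T.isLinear δ
    exact convexHull_min (by rintro _ ⟨l, rfl⟩; exact hl₁ l) hc hM
  have hhull2 : ∀ M ∈ convexHull ℝ (range Φ), ∀ u, al a u = 0 → mulVecE M u = mulVecE N u := by
    intro M hM u hu'
    have hc : Convex ℝ {M | (mvL p).flip u M = mulVecE N u} := by
      intro A hA B hB s t hs ht hst
      simp only [mem_ofPred_eq, map_add, map_smul] at *
      rw [hA, hB, ← add_smul, hst, one_smul]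
    exact convexHull_min (by rintro _ ⟨l, rfl⟩; exact hagree l u hu') hc hM
  refine ⟨fun M hM => ?_, fun b => ?_⟩
  · rw [det_rank_one hN he (hhull2 M hM), ← hT]
    exact mul_ne_zero hN (hδ0.trans_le (hhull M hM)).ne'
  · set h : ℝ → ℝ := fun s => al a (mulVecE N⁻¹ (f (s • e))) with hh
    have hcont : Continuous h := by
      have h1 : Continuous (al a) := LinearMap.continuous_of_finiteDimensional _
      exact h1.comp ((mv_cont' _).comp (hf.1.comp (by fun_prop)))
    have hdiff : ∀ s s', ∃ q, δ ≤ q ∧ h s - h s' = (s - s') * q := by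
      intro s s'
      obtain ⟨M, hM, hMe⟩ := mean_value hf (s • e) (s' • e)
      refine ⟨T M, hhull M hM, ?_⟩
      have : h s - h s' = al a (mulVecE N⁻¹ (f (s • e) - f (s' • e))) := by
        simp only [hh, ← mvL_apply, map_sub]
      rw [this, hMe, ← sub_smul, mv_smul, mv_smul, map_smul, hT, smul_eq_mul]
    have hsurj : Function.Surjective h := by
      apply hcont.surjective
      · have h1 : Tendsto (fun s : ℝ => h 0 + s * δ) atTop atTop :=
          tendsto_atTop_add_const_left _ _ (tendsto_id.atTop_mul_const hδ0)
        refine tendsto_atTop_mono' _ ?_ h1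
        filter_upwards [eventually_ge_atTop 0] with s hs
        obtain ⟨q, hq, hq'⟩ := hdiff s 0
        nlinarith
      · have h1 : Tendsto (fun s : ℝ => h 0 + s * δ) atBot atBot :=
          tendsto_atBot_add_const_left _ _ (tendsto_id.atBot_mul_const hδ0)
        refine tendsto_atBot_mono' _ ?_ h1
        filter_upwards [eventually_le_atBot 0] with s hs
        obtain ⟨q, hq, hq'⟩ := hdiff s 0
        nlinarith
    obtain ⟨s, hs⟩ := hsurj (al a (mulVecE N⁻¹ b))
    refine ⟨s • e + mulVecE N⁻¹ (b - f (s • e)), ?_⟩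
    obtain ⟨M, hM, hMe⟩ := mean_value hf (s • e + mulVecE N⁻¹ (b - f (s • e))) (s • e)
    rw [add_sub_cancel_left, hhull2 M hM, hGN] at hMe
    · exact sub_left_injective hMe
    · have : mulVecE N⁻¹ (b - f (s • e)) = mulVecE N⁻¹ b - mulVecE N⁻¹ (f (s • e)) := by
        simp only [← mvL_apply, map_sub]
      rw [this, map_sub, ← hs]
      simp [hh]

lemma agree_of_inv {p L : ℕ} {f : E p → E p} {Z : Fin L → Set (E p)}
    {φ : Fin L → E p} {Φ : Fin L → Matrix (Fin p) (Fin p) ℝ}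
    (hf : IsPiecewiseAffine f Z φ Φ) {a : E p}
    (hinv : ∀ l z u, al a u = 0 → z ∈ Z l → z + u ∈ Z l) (l m : Fin L) (u : E p)
    (hu : al a u = 0) : mulVecE (Φ l) u = mulVecE (Φ m) u := by
  obtain ⟨C, hC⟩ := lip_of_pwa hf
  obtain ⟨z, hz⟩ := hf.2.2.1 l
  obtain ⟨y, hy⟩ := hf.2.2.1 m
  have hray : ∀ (k : Fin L) (x : E p), x ∈ Z k → ∀ t : ℝ,
      f (x + t • u) = f x + t • mulVecE (Φ k) u := by
    intro k x hx t
    rw [hf.2.2.2.2 k x hx, hf.2.2.2.2 k _ (hinv k x (t • u) (by simp [hu]) hx), mv_add, mv_smul,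
      add_assoc]
  rw [← sub_eq_zero]
  by_contra hne
  set w := mulVecE (Φ l) u - mulVecE (Φ m) u with hw
  have hwn : 0 < ‖w‖ := norm_pos_iff.mpr hne
  have hb : ∀ t : ℝ, |t| * ‖w‖ ≤ C * ‖z - y‖ + ‖f z - f y‖ := by
    intro t
    have h1 := hC.dist_le_mul (z + t • u) (y + t • u)
    rw [hray l z hz, hray m y hy, dist_eq_norm, dist_eq_norm, add_sub_add_right_eq_sub] at h1
    have h2 : t • w = (f z + t • mulVecE (Φ l) u - (f y + t • mulVecE (Φ m) u)) - (f z - f y) := by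
      rw [hw]; module
    have h3 : ‖t • w‖ ≤ _ := h2 ▸ norm_sub_le _ _
    rw [norm_smul, Real.norm_eq_abs] at h3
    linarith
  have h4 := hb ((C * ‖z - y‖ + ‖f z - f y‖ + 1) / ‖w‖)
  have h5 : (0:ℝ) ≤ (C * ‖z - y‖ + ‖f z - f y‖ + 1) / ‖w‖ := by positivity
  rw [abs_of_nonneg h5, div_mul_cancel₀ _ hwn.ne'] at h4
  linarith

lemma small_eps (c v : ℝ) (hc : 0 < c) :
    ∃ ε₀ > (0:ℝ), ∀ ε : ℝ, 0 < ε → ε < ε₀ → |ε * v| < c := by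
  have hv : 0 < |v| + 1 := by positivity
  refine ⟨c / (|v| + 1), by positivity, fun ε h h' => ?_⟩
  rw [lt_div_iff₀ hv] at h'
  rw [abs_mul, abs_of_pos h]
  nlinarith

lemma thr_forward {p L : ℕ} (hL : 1 ≤ L) {f : E p → E p} {Z : Fin L → Set (E p)}
    {φ : Fin L → E p} {Φ : Fin L → Matrix (Fin p) (Fin p) ℝ}
    (hf : IsPiecewiseAffine f Z φ Φ) (hinj : Function.Injective f) {a : E p} (ha : a ≠ 0)
    (hagree : ∀ l m u, al a u = 0 → mulVecE (Φ l) u = mulVecE (Φ m) u)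
    (τ : Fin (L + 1) → EReal) (hτ : StrictMono τ) (h0 : τ 0 = ⊥) (hlast : τ (Fin.last L) = ⊤)
    (hZ : ∀ ℓ : Fin L, ∀ z, z ∈ Z ℓ ↔ τ ℓ.castSucc < ((al a z : ℝ) : EReal) ∧
          ((al a z : ℝ) : EReal) ≤ τ ℓ.succ) :
    ∀ ℓ : Fin L, 0 < (Φ ℓ).det * (Φ ⟨0, hL⟩).det := by
  obtain ⟨e, he⟩ := exists_unit ha
  have hcoord : ∀ (r ε : ℝ) (u : E p), al a (r • e + ε • u) = r + ε * al a u := by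
    intro r ε u; simp [he]
  suffices h : ∀ n (hn : n < L), 0 < (Φ ⟨n, hn⟩).det * (Φ ⟨0, hL⟩).det from fun l => h l.1 l.2
  intro n
  induction n with
  | zero =>
    intro _
    have h1 : (⊥ : EReal) < τ (Fin.succ ⟨0, hL⟩) := by
      rw [← h0]; exact hτ (Fin.succ_pos _)
    obtain ⟨q, -, hq⟩ := EReal.lt_iff_exists_real_btwn.mp h1
    obtain ⟨q', hq1, hq2⟩ := EReal.lt_iff_exists_real_btwn.mp hq
    have hqq : q < q' := by exact_mod_cast hq1
    refine adj hf hinj _ _ (q • e) (fun _ => 0) (by simp) (fun _ _ => rfl) (fun u _ => ?_)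
      (fun u h => absurd h (lt_irrefl _))
    obtain ⟨ε₀, hε₀, H⟩ := small_eps (q' - q) (al a u) (by linarith)
    refine ⟨ε₀, hε₀, fun ε h h' => (hZ _ _).mpr ⟨?_, ?_⟩⟩
    · have : τ (Fin.castSucc ⟨0, hL⟩) = ⊥ := h0
      rw [this]; exact EReal.bot_lt_coe _
    · rw [hcoord]
      refine le_trans ?_ hq2.le
      have := (abs_lt.mp (H ε h h')).2
      exact_mod_cast (by linarith : q + ε * al a u ≤ q')
  | succ n ih =>
    intro hn
    have ih' := ih (by omega)
    have hadj : 0 < (Φ ⟨n, by omega⟩).det * (Φ ⟨n + 1, hn⟩).det := by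
      set i : Fin L := ⟨n, by omega⟩
      set j : Fin L := ⟨n + 1, hn⟩
      have hij : i.succ = j.castSucc := rfl
      have hb : ⊥ < τ i.succ := by rw [← h0]; exact hτ (Fin.succ_pos _)
      have ht : τ i.succ < ⊤ := by rw [← hlast, hij]; exact hτ (Fin.castSucc_lt_last _)
      obtain ⟨r, hr⟩ : ∃ r : ℝ, (r : EReal) = τ i.succ :=
        ⟨_, EReal.coe_toReal ht.ne hb.ne'⟩
      have hl : τ i.castSucc < r := by rw [hr]; exact hτ Fin.castSucc_lt_succ
      have hg : r < τ j.succ := by rw [hr, hij]; exact hτ Fin.castSucc_lt_succ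
      obtain ⟨q, hq1, hq2⟩ := EReal.lt_iff_exists_real_btwn.mp hl
      obtain ⟨q', hq1', hq2'⟩ := EReal.lt_iff_exists_real_btwn.mp hg
      have hqr : q < r := by exact_mod_cast hq2
      have hrq : r < q' := by exact_mod_cast hq1'
      refine adj hf hinj i j (r • e) (fun u => - al a u) (by simp)
        (fun u hu => hagree i j u (by simpa using hu)) (fun u hu => ?_) (fun u hu => ?_)
      · obtain ⟨ε₀, hε₀, H⟩ := small_eps (r - q) (al a u) (by linarith)
        refine ⟨ε₀, hε₀, fun ε h h' => (hZ _ _).mpr ⟨?_, ?_⟩⟩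
        · rw [hcoord]
          refine hq1.trans ?_
          have := (abs_lt.mp (H ε h h')).1
          exact_mod_cast (by linarith : q < r + ε * al a u)
        · rw [hcoord, ← hr]
          exact_mod_cast (by nlinarith : r + ε * al a u ≤ r)
      · obtain ⟨ε₀, hε₀, H⟩ := small_eps (q' - r) (al a u) (by linarith)
        refine ⟨ε₀, hε₀, fun ε h h' => (hZ _ _).mpr ⟨?_, ?_⟩⟩
        · rw [hcoord, ← hij, ← hr]
          exact_mod_cast (by nlinarith : r < r + ε * al a u)
        · rw [hcoord]
          refine le_trans ?_ hq2'.le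
          have := (abs_lt.mp (H ε h h')).2
          exact_mod_cast (by linarith : r + ε * al a u ≤ q')
    have h6 := mul_pos hadj ih'
    have h7 : (Φ ⟨n, by omega⟩).det ≠ 0 := fun h => by simp [h] at hadj
    have h8 : 0 < (Φ ⟨n, by omega⟩).det ^ 2 := by positivity
    refine (mul_pos_iff_of_pos_left h8).mp ?_
    calc 0 < _ := h6
      _ = _ := by ring

lemma thr_main (p L : ℕ) (hL : 1 ≤ L)
    (f : E p → E p) (Z : Fin L → Set (E p)) (φ : Fin L → E p)
    (Φ : Fin L → Matrix (Fin p) (Fin p) ℝ) (hT : IsThresholdAffine f Z φ Φ) :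
    (Function.Bijective f ∧ (∃ C : NNReal, LipschitzWith C f) ∧
        (∃ C : NNReal, LipschitzWith C (Function.invFun f)))
      ↔ ∀ ℓ : Fin L, 0 < (Φ ℓ).det * (Φ ⟨0, hL⟩).det := by
  obtain ⟨hf, a, ha, τ, hτ, h0, hlast, hZ⟩ := hT
  have hZ' : ∀ ℓ : Fin L, ∀ z, z ∈ Z ℓ ↔ τ ℓ.castSucc < ((al a z : ℝ) : EReal) ∧
          ((al a z : ℝ) : EReal) ≤ τ ℓ.succ := fun l z => by rw [hZ l]; rfl
  have hagree := agree_of_inv hf (a := a) (fun l z u hu hz => by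
    rw [hZ'] at hz ⊢
    rwa [map_add, hu, add_zero])
  constructor
  · rintro ⟨hb, -⟩
    exact thr_forward hL hf hb.1 ha hagree τ hτ h0 hlast hZ'
  · intro hd
    obtain ⟨h1, h2⟩ := thr_backward hf ⟨0, hL⟩ ha (fun l => hagree l _) hd
    exact concl_of_hull hf h1 h2

/-- One coordinate of a piecewise linear map. -/
def pl {p : ℕ} (s : ℝ) (A B : E p) : E p := max s 0 • A - max (-s) 0 • B

lemma pl_nonneg {p : ℕ} {s : ℝ} (hs : 0 ≤ s) (A B : E p) : pl s A B = s • A := by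
  simp [pl, hs]

lemma pl_nonpos {p : ℕ} {s : ℝ} (hs : s ≤ 0) (A B : E p) : pl s A B = s • B := by
  simp [pl, hs]

lemma pl_self {p : ℕ} (s : ℝ) (A : E p) : pl s A A = s • A := by
  rcases le_total 0 s with h | h
  · exact pl_nonneg h _ _
  · exact pl_nonpos h _ _

lemma pl_sub_opp {p : ℕ} {s t : ℝ} (hs : s ≤ 0) (ht : 0 ≤ t) (hst : s < t) (A B : E p) :
    ∃ C ∈ segment ℝ A B, s • A - t • B = (s - t) • C := by
  have hd : 0 < t - s := by linarith
  refine ⟨(-s / (t - s)) • A + (t / (t - s)) • B,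
    ⟨_, _, div_nonneg (by linarith) hd.le, div_nonneg ht hd.le, by field_simp; ring, rfl⟩, ?_⟩
  rw [smul_add, smul_smul, smul_smul]
  have e1 : (s - t) * (-s / (t - s)) = s := by field_simp; ring
  have e2 : (s - t) * (t / (t - s)) = -t := by field_simp; ring
  rw [e1, e2]; module

lemma pl_sub {p : ℕ} (s t : ℝ) (A B : E p) :
    ∃ C ∈ segment ℝ A B, pl s A B - pl t A B = (s - t) • C := by
  rcases le_total 0 s with hs | hs <;> rcases le_total 0 t with ht | ht
  · exact ⟨A, left_mem_segment _ _ _, by rw [pl_nonneg hs, pl_nonneg ht, sub_smul]⟩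
  · rcases hs.eq_or_lt with h | h
    · subst h
      exact ⟨B, right_mem_segment _ _ _, by rw [pl_nonpos le_rfl, pl_nonpos ht, sub_smul]⟩
    · obtain ⟨C, hC, hC'⟩ := pl_sub_opp ht hs (by linarith) B A
      refine ⟨C, by rwa [segment_symm], ?_⟩
      rw [pl_nonneg hs, pl_nonpos ht, ← neg_sub, hC']; module
  · rcases ht.eq_or_lt with h | h
    · subst h
      exact ⟨B, right_mem_segment _ _ _, by rw [pl_nonpos le_rfl, pl_nonpos hs, sub_smul]⟩
    · obtain ⟨C, hC, hC'⟩ := pl_sub_opp hs ht (by linarith) B A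
      refine ⟨C, by rwa [segment_symm], ?_⟩
      rw [pl_nonneg ht, pl_nonpos hs, hC']
  · exact ⟨B, right_mem_segment _ _ _, by rw [pl_nonpos hs, pl_nonpos ht, sub_smul]⟩

lemma pl_surj {p : ℕ} (S : Finset (Fin p)) : ∀ (A B : Fin p → E p), (∀ i ∉ S, A i = B i) →
    (∀ C : Fin p → E p, (∀ i, C i ∈ segment ℝ (A i) (B i)) →
      ∀ u : Fin p → ℝ, ∑ i, u i • C i = 0 → u = 0) →
    ∀ y : E p, ∃ x : Fin p → ℝ, ∑ i, pl (x i) (A i) (B i) = y := by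
  classical
  induction S using Finset.induction_on with
  | empty =>
    intro A B hAB H y
    have hAB' : A = B := funext fun i => hAB i (by simp)
    subst hAB'
    have hinj : Function.Injective (Fintype.linearCombination ℝ A) := by
      rw [injective_iff_map_eq_zero]
      intro u hu
      exact H A (fun i => left_mem_segment _ _ _) u (by simpa [Fintype.linearCombination_apply] using hu)
    have hsurj := (LinearMap.injective_iff_surjective_of_finrank_eq_finrank (by simp)).mp hinj
    obtain ⟨x, hx⟩ := hsurj y
    refine ⟨x, ?_⟩
    rw [← hx, Fintype.linearCombination_apply]
    exact Finset.sum_congr rfl fun i _ => pl_self _ _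
  | insert k S hk ih =>
    intro A B hAB H y
    set B' := Function.update B k (A k) with hB'
    set A' := Function.update A k (B k) with hA'
    have hB'k : B' k = A k := by simp [hB']
    have hA'k : A' k = B k := by simp [hA']
    have hB'n : ∀ i, i ≠ k → B' i = B i := fun i hi => by simp [hB', hi]
    have hA'n : ∀ i, i ≠ k → A' i = A i := fun i hi => by simp [hA', hi]
    obtain ⟨x, hx⟩ := ih A B' (fun i hi => by
        by_cases h : i = k
        · rw [h, hB'k]
        · rw [hB'n i h]; exact hAB i (by simp [h, hi]))
      (fun C hC => H C fun i => by
        have := hC i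
        by_cases h : i = k
        · subst h; rw [hB'k, segment_same] at this
          rw [mem_singleton_iff.mp this]; exact left_mem_segment _ _ _
        · rwa [hB'n i h] at this) y
    obtain ⟨w, hw⟩ := ih A' B (fun i hi => by
        by_cases h : i = k
        · rw [h, hA'k]
        · rw [hA'n i h]; exact hAB i (by simp [h, hi]))
      (fun C hC => H C fun i => by
        have := hC i
        by_cases h : i = k
        · subst h; rw [hA'k, segment_same] at this
          rw [mem_singleton_iff.mp this]; exact right_mem_segment _ _ _
        · rwa [hA'n i h] at this) y
    by_cases hxk : 0 ≤ x k
    · refine ⟨x, ?_⟩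
      rw [← hx]
      refine Finset.sum_congr rfl fun i _ => ?_
      by_cases h : i = k
      · subst h; rw [pl_nonneg hxk, pl_nonneg hxk]
      · rw [hB'n i h]
    by_cases hwk : w k ≤ 0
    · refine ⟨w, ?_⟩
      rw [← hw]
      refine Finset.sum_congr rfl fun i _ => ?_
      by_cases h : i = k
      · subst h; rw [pl_nonpos hwk, pl_nonpos hwk]
      · rw [hA'n i h]
    exfalso
    push Not at hxk hwk
    have hC : ∀ i, ∃ C ∈ segment ℝ (A i) (B i),
        pl (x i) (A i) (B' i) - pl (w i) (A' i) (B i) = (x i - w i) • C := by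
      intro i
      by_cases h : i = k
      · subst h
        rw [hB'k, hA'k, pl_self, pl_self]
        exact pl_sub_opp hxk.le hwk.le (by linarith) _ _
      · rw [hB'n i h, hA'n i h]
        exact pl_sub _ _ _ _
    choose C hC hC' using hC
    have := H C hC (fun i => x i - w i) (by
      rw [← Finset.sum_congr rfl (fun i _ => hC' i), Finset.sum_sub_distrib, hx, hw, sub_self])
    have := congrFun this k
    simp at this
    linarith

lemma ml_pos {p : ℕ} (G : E p [⋀^Fin p]→ₗ[ℝ] ℝ) (σ : ℝ) (A B : Fin p → E p)
    (hv : ∀ v : Fin p → E p, (∀ i, v i = A i ∨ v i = B i) → 0 < σ * G v) (S : Finset (Fin p)) :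
    ∀ v : Fin p → E p, (∀ i ∈ S, v i ∈ segment ℝ (A i) (B i)) →
      (∀ i ∉ S, v i = A i ∨ v i = B i) → 0 < σ * G v := by
  classical
  induction S using Finset.induction_on with
  | empty => intro v _ h; exact hv v fun i => h i (by simp)
  | insert k S hk ih =>
    intro v h1 h2
    obtain ⟨s, t, hs, ht, hst, hvk⟩ := h1 k (by simp)
    have key : ∀ X, (X = A k ∨ X = B k) → 0 < σ * G (Function.update v k X) := by
      intro X hX
      refine ih _ (fun i hi => ?_) (fun i hi => ?_)
      · have : i ≠ k := fun h => hk (h ▸ hi)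
        rw [Function.update_of_ne this]
        exact h1 i (by simp [hi])
      · by_cases h : i = k
        · subst h; simpa using hX
        · rw [Function.update_of_ne h]
          exact h2 i (by simp [h, hi])
    have hA := key (A k) (Or.inl rfl)
    have hB := key (B k) (Or.inr rfl)
    have : G v = s * G (Function.update v k (A k)) + t * G (Function.update v k (B k)) := by
      conv_lhs => rw [← Function.update_eq_self k v, ← hvk]
      rw [G.map_update_add, G.map_update_smul, G.map_update_smul, smul_eq_mul, smul_eq_mul]
    rw [this]
    have e : σ * (s * G (Function.update v k (A k)) + t * G (Function.update v k (B k))) =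
      s * (σ * G (Function.update v k (A k))) + t * (σ * G (Function.update v k (B k))) := by ring
    rw [e]
    rcases hs.eq_or_lt with h | h
    · have : t = 1 := by linarith
      rw [← h, this]; linarith
    · have := mul_pos h hA
      have := mul_nonneg ht hB.le
      linarith

lemma dual_basis {p : ℕ} (a : Fin p → E p) (hli : LinearIndependent ℝ a) :
    ∃ b : Fin p → E p, ∃ c : ℝ, ∃ G : E p [⋀^Fin p]→ₗ[ℝ] ℝ, c ≠ 0 ∧
      (∀ i j, al (a i) (b j) = if i = j then 1 else 0) ∧
      (∀ z, z = ∑ i, al (a i) z • b i) ∧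
      ∀ M : Matrix (Fin p) (Fin p) ℝ, G (fun i => mulVecE M (b i)) = M.det * c := by
  set A : Matrix (Fin p) (Fin p) ℝ := Matrix.of (fun i j => a i j) with hA
  have hAu : IsUnit A := by
    rw [← Matrix.linearIndependent_rows_iff_isUnit]
    exact hli.map' (WithLp.linearEquiv 2 ℝ (Fin p → ℝ)).toLinearMap
      (LinearEquiv.ker _)
  have hd : IsUnit A.det := (Matrix.isUnit_iff_isUnit_det A).mp hAu
  refine ⟨fun j => WithLp.toLp 2 (fun k => A⁻¹ k j), A⁻¹.det,
    Matrix.detRowAlternating.compLinearMap (WithLp.linearEquiv 2 ℝ (Fin p → ℝ)).toLinearMap,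
    ?_, ?_, ?_, ?_⟩
  · rw [Matrix.det_nonsing_inv]
    simpa using hd.ne_zero
  · intro i j
    have := congrFun (congrFun (Matrix.mul_nonsing_inv A hd) i) j
    rw [Matrix.mul_apply, Matrix.one_apply] at this
    exact this
  · intro z
    have h : A⁻¹ *ᵥ (A *ᵥ z) = z := by
      rw [Matrix.mulVec_mulVec, Matrix.nonsing_inv_mul A hd, Matrix.one_mulVec]
    ext k
    have hk := congrFun h k
    rw [← hk]
    simp [Matrix.mulVec, dotProduct, al_apply, hA, mul_comm]
  · intro M
    rw [← Matrix.det_mul, ← Matrix.det_transpose]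
    rfl

section PL

variable {p L : ℕ} {f : E p → E p} {Z : Fin L → Set (E p)}
    {φ : Fin L → E p} {Φ : Fin L → Matrix (Fin p) (Fin p) ℝ} {a b : Fin p → E p}

lemma al_sum (hb : ∀ i j, al (a i) (b j) = if i = j then 1 else 0) (x : Fin p → ℝ) (i : Fin p) :
    al (a i) (∑ j, x j • b j) = x i := by
  simp [hb]

lemma cone_sub (hcone : ∀ ℓ, ∃ S : Set (Set (Fin p)), Z ℓ = ⋃ I ∈ S, coneOf a I)
    {l : Fin L} {z : E p} (hz : z ∈ Z l) : coneOf a {i | 0 ≤ al (a i) z} ⊆ Z l := by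
  obtain ⟨S, hS⟩ := hcone l
  rw [hS] at hz ⊢
  simp only [mem_iUnion] at hz
  obtain ⟨I, hI, hzI⟩ := hz
  have : {i | 0 ≤ al (a i) z} = I := by
    ext i
    constructor
    · intro h
      by_contra hi
      exact absurd (hzI.2 i hi) (not_lt.mpr h)
    · intro h; exact hzI.1 i h
  rw [this]
  exact subset_iUnion₂_of_subset I hI subset_rfl

lemma mem_cone (z : E p) : z ∈ coneOf a {i | 0 ≤ al (a i) z} :=
  ⟨fun _ h => h, fun _ h => not_le.mp h⟩

open Classical in
lemma cone_exists (hf : IsPiecewiseAffine f Z φ Φ)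
    (hcone : ∀ ℓ, ∃ S : Set (Set (Fin p)), Z ℓ = ⋃ I ∈ S, coneOf a I)
    (hb : ∀ i j, al (a i) (b j) = if i = j then 1 else 0) (I : Set (Fin p)) :
    ∃ l, coneOf a I ⊆ Z l := by
  set z : E p := ∑ j, (if j ∈ I then (1:ℝ) else -1) • b j with hz
  have hzi : ∀ i, al (a i) z = if i ∈ I then (1:ℝ) else -1 := fun i => al_sum hb _ i
  obtain ⟨l, hl, -⟩ := hf.2.2.2.1 z
  refine ⟨l, ?_⟩
  have := cone_sub hcone hl
  have e : {i | 0 ≤ al (a i) z} = I := by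
    ext i
    by_cases h : i ∈ I
    · simp [hzi, h]
    · simp [hzi, h]
  rwa [e] at this

open Classical in
lemma cone_col (hf : IsPiecewiseAffine f Z φ Φ) (hφ : ∀ l, φ l = 0)
    (hb : ∀ i j, al (a i) (b j) = if i = j then 1 else 0) {I : Set (Fin p)} {l : Fin L}
    (hI : coneOf a I ⊆ Z l) (i : Fin p) :
    mulVecE (Φ l) (b i) = if i ∈ I then f (b i) else - f (- b i) := by
  set u : E p := ∑ j, (if j ∈ I then (1:ℝ) else -1) • b j with hu
  have hui : ∀ i, al (a i) u = if i ∈ I then (1:ℝ) else -1 := fun i => al_sum hb _ i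
  have key : ∀ z, (∀ j ∈ I, 0 ≤ al (a j) z) → (∀ j ∉ I, al (a j) z ≤ 0) →
      f z = mulVecE (Φ l) z := by
    intro z h1 h2
    have : z ∈ closure (Z l) := by
      refine mem_closure_of_ray (u := u) one_pos fun ε h _ => hI ⟨fun j hj => ?_, fun j hj => ?_⟩
      · change 0 ≤ al (a j) _
        rw [map_add, map_smul, hui, if_pos hj]
        have := h1 j hj
        simp; linarith
      · change al (a j) _ < 0
        rw [map_add, map_smul, hui, if_neg hj]
        have := h2 j hj
        simp; linarith
    rw [eq_on_closure hf this, hφ, zero_add]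
  by_cases hi : i ∈ I
  · rw [if_pos hi, key]
    · intro j _; rw [hb]; split_ifs <;> norm_num
    · intro j hj; rw [hb, if_neg (fun h : j = i => hj (h ▸ hi))]
  · rw [if_neg hi, key (- b i)]
    · simp [← mvL_apply]
    · intro j hj; rw [map_neg, hb, if_neg (fun h : j = i => hi (h ▸ hj))]; simp
    · intro j _; rw [map_neg, hb]; split_ifs <;> norm_num

open Classical in
lemma pl_forward (hp : 1 ≤ p) (hf : IsPiecewiseAffine f Z φ Φ) (hφ : ∀ l, φ l = 0)
    (hinj : Function.Injective f)
    (hcone : ∀ ℓ, ∃ S : Set (Set (Fin p)), Z ℓ = ⋃ I ∈ S, coneOf a I)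
    (hb : ∀ i j, al (a i) (b j) = if i = j then 1 else 0)
    (hexp : ∀ z, z = ∑ i, al (a i) z • b i) (l₀ l₁ : Fin L) :
    0 < (Φ l₁).det * (Φ l₀).det := by
  choose ell hell using cone_exists hf hcone hb
  have hmv : ∀ l u, mulVecE (Φ l) u = ∑ i, al (a i) u • mulVecE (Φ l) (b i) := by
    intro l u
    conv_lhs => rw [hexp u]
    simp only [← mvL_apply, map_sum, map_smul]
  have hadj : ∀ (J : Set (Fin p)) (k : Fin p), k ∉ J →
      0 < (Φ (ell (insert k J))).det * (Φ (ell J)).det := by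
    intro J k hk
    set x : Fin p → ℝ := fun i => if i = k then 0 else if i ∈ J then 1 else -1 with hx
    set z : E p := ∑ j, x j • b j with hz
    have hzi : ∀ i, al (a i) z = x i := fun i => al_sum hb _ i
    have hsmall : ∀ u : E p, ∃ ε₀ > (0:ℝ), ∀ ε : ℝ, 0 < ε → ε < ε₀ → ∀ i,
        |ε * al (a i) u| < 1 := by
      intro u
      obtain ⟨ε₀, h0, h⟩ := small_eps 1 (∑ i, |al (a i) u|) one_pos
      refine ⟨ε₀, h0, fun ε he he' i => lt_of_le_of_lt ?_ (h ε he he')⟩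
      rw [abs_mul, abs_mul]
      refine mul_le_mul_of_nonneg_left ?_ (abs_nonneg _)
      refine le_trans ?_ (le_abs_self _)
      exact Finset.single_le_sum (f := fun i => |al (a i) u|) (fun i _ => abs_nonneg _)
        (Finset.mem_univ i)
    have hkx : x k = 0 := by simp [hx]
    have hJx : ∀ i ∈ J, x i = 1 := fun i hi => by
      have : i ≠ k := fun h => hk (h ▸ hi)
      simp [hx, this, hi]
    have hnx : ∀ i, i ∉ J → i ≠ k → x i = -1 := fun i hi h => by simp [hx, h, hi]
    refine adj hf hinj _ _ z (al (a k)) (by simp) (fun u hu => ?_) (fun u hu => ?_) (fun u hu => ?_)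
    · rw [hmv, hmv (ell J)]
      refine Finset.sum_congr rfl fun i _ => ?_
      by_cases h : i = k
      · subst h; rw [hu]; simp
      · rw [cone_col hf hφ hb (hell _), cone_col hf hφ hb (hell _)]
        simp [h]
    · obtain ⟨ε₀, h0, H⟩ := hsmall u
      refine ⟨ε₀, h0, fun ε he he' => hell _ ⟨fun i hi => ?_, fun i hi => ?_⟩⟩
      · change 0 ≤ al (a i) _
        rw [map_add, map_smul, hzi, smul_eq_mul]
        have := abs_lt.mp (H ε he he' i)
        rcases hi with rfl | hi
        · rw [hkx]; have := mul_nonneg he.le hu; linarith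
        · rw [hJx i hi]; linarith
      · change al (a i) _ < 0
        rw [map_add, map_smul, hzi, smul_eq_mul]
        have := abs_lt.mp (H ε he he' i)
        rw [hnx i (fun h => hi (Or.inr h)) (fun h => hi (Or.inl h))]; linarith
    · obtain ⟨ε₀, h0, H⟩ := hsmall u
      refine ⟨ε₀, h0, fun ε he he' => hell _ ⟨fun i hi => ?_, fun i hi => ?_⟩⟩
      · change 0 ≤ al (a i) _
        rw [map_add, map_smul, hzi, smul_eq_mul]
        have := abs_lt.mp (H ε he he' i)
        rw [hJx i hi]; linarith
      · change al (a i) _ < 0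
        rw [map_add, map_smul, hzi, smul_eq_mul]
        have := abs_lt.mp (H ε he he' i)
        by_cases h : i = k
        · subst h
          rw [hkx]; have := mul_neg_of_pos_of_neg he hu; linarith
        · rw [hnx i hi h]; linarith
  have htrans : ∀ x y z : ℝ, 0 < x * y → 0 < y * z → 0 < x * z := by
    intro x y z h1 h2
    have hy : y ≠ 0 := fun h => by simp [h] at h1
    have h3 : 0 < y ^ 2 := by positivity
    refine (mul_pos_iff_of_pos_left h3).mp ?_
    calc 0 < _ := mul_pos h1 h2
      _ = _ := by ring
  have hall : ∀ J : Finset (Fin p), 0 < (Φ (ell (J : Set (Fin p)))).det * (Φ (ell ∅)).det := by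
    intro J
    induction J using Finset.induction_on with
    | empty =>
      have h := hadj ∅ ⟨0, hp⟩ (by simp)
      have h' : (Φ (ell ∅)).det ≠ 0 := fun h0 => by simp [h0] at h
      rw [Finset.coe_empty]
      exact mul_self_pos.mpr h'
    | insert k J hk ih =>
      rw [Finset.coe_insert]
      exact htrans _ _ _ (hadj J k (by simpa using hk)) ih
  have hl : ∀ l, 0 < (Φ l).det * (Φ (ell ∅)).det := by
    intro l
    obtain ⟨z, hz⟩ := hf.2.2.1 l
    have h1 := hell {i | 0 ≤ al (a i) z} (mem_cone z)
    have h2 := (hf.2.2.2.1 z).unique hz h1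
    have h3 := hall (Finset.univ.filter (fun i => 0 ≤ al (a i) z))
    have e : ((Finset.univ.filter (fun i => 0 ≤ al (a i) z) : Finset (Fin p)) : Set (Fin p)) =
      {i | 0 ≤ al (a i) z} := by ext i; simp
    rw [e] at h3
    rwa [h2]
  exact htrans _ _ _ (hl l₁) (by rw [mul_comm]; exact hl l₀)

open Classical in
lemma pl_backward (hf : IsPiecewiseAffine f Z φ Φ) (hφ : ∀ l, φ l = 0)
    (hcone : ∀ ℓ, ∃ S : Set (Set (Fin p)), Z ℓ = ⋃ I ∈ S, coneOf a I)
    (hb : ∀ i j, al (a i) (b j) = if i = j then 1 else 0)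
    {c : ℝ} (hc : c ≠ 0) (G : E p [⋀^Fin p]→ₗ[ℝ] ℝ)
    (hG : ∀ M : Matrix (Fin p) (Fin p) ℝ, G (fun i => mulVecE M (b i)) = M.det * c)
    (l₀ : Fin L) (hdet : ∀ l, 0 < (Φ l).det * (Φ l₀).det) :
    (∀ M ∈ convexHull ℝ (range Φ), M.det ≠ 0) ∧ Function.Surjective f := by
  set A : Fin p → E p := fun i => f (b i) with hA
  set B : Fin p → E p := fun i => - f (- b i) with hB
  have hvert : ∀ v : Fin p → E p, (∀ i, v i = A i ∨ v i = B i) →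
      0 < ((Φ l₀).det * c) * G v := by
    intro v hv
    obtain ⟨l, hl⟩ := cone_exists hf hcone hb {i | v i = A i}
    have : v = fun i => mulVecE (Φ l) (b i) := by
      funext i
      rw [cone_col hf hφ hb hl]
      split_ifs with h
      · exact h
      · exact (hv i).resolve_left h
    rw [this, hG]
    have h2 : 0 < c ^ 2 := by positivity
    have := mul_pos (hdet l) h2
    calc 0 < _ := this
      _ = _ := by ring
  have hseg : ∀ v : Fin p → E p, (∀ i, v i ∈ segment ℝ (A i) (B i)) → G v ≠ 0 := by
    intro v hv h0
    have := ml_pos G _ A B hvert Finset.univ v (fun i _ => hv i) (fun i hi => by simp at hi)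
    simp [h0] at this
  refine ⟨fun M hM h0 => ?_, fun y => ?_⟩
  · have hcv : Convex ℝ {M | ∀ i, (mvL p).flip (b i) M ∈ segment ℝ (A i) (B i)} := by
      intro M hM N hN s t hs ht hst i
      rw [map_add, map_smul, map_smul]
      exact convex_segment _ _ (hM i) (hN i) hs ht hst
    have hsub : range Φ ⊆ {M | ∀ i, (mvL p).flip (b i) M ∈ segment ℝ (A i) (B i)} := by
      rintro _ ⟨l, rfl⟩ i
      obtain ⟨z, hz⟩ := hf.2.2.1 l
      change mulVecE (Φ l) (b i) ∈ _
      rw [cone_col hf hφ hb (cone_sub hcone hz)]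
      split_ifs
      · exact left_mem_segment _ _ _
      · exact right_mem_segment _ _ _
    refine hseg _ (convexHull_min hsub hcv hM) ?_
    have := hG M
    rw [h0, zero_mul] at this
    exact this
  · obtain ⟨x, hx⟩ := pl_surj Finset.univ A B (fun i hi => by simp at hi) (fun C hC u hu => by
      have hli : LinearIndependent ℝ C := by
        by_contra h
        exact hseg C hC (G.map_linearDependent C h)
      exact funext (Fintype.linearIndependent_iff.mp hli u hu)) y
    refine ⟨∑ j, x j • b j, ?_⟩
    rw [← hx]
    set z : E p := ∑ j, x j • b j with hz
    have hzi : ∀ i, al (a i) z = x i := fun i => al_sum hb _ i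
    obtain ⟨l, hl, -⟩ := hf.2.2.2.1 z
    have hcol := cone_col hf hφ hb (cone_sub hcone hl)
    rw [hf.2.2.2.2 l z hl, hφ, zero_add]
    have : mulVecE (Φ l) z = ∑ i, x i • mulVecE (Φ l) (b i) := by
      rw [hz]
      simp only [← mvL_apply, map_sum, map_smul]
    rw [this]
    refine Finset.sum_congr rfl fun i _ => ?_
    rw [hcol i]
    by_cases h : 0 ≤ x i
    · rw [pl_nonneg h, if_pos (by change 0 ≤ al (a i) z; rwa [hzi])]
    · rw [pl_nonpos (not_le.mp h).le, if_neg (by change ¬ 0 ≤ al (a i) z; rwa [hzi])]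

end PL

/-- **Invertibility of piecewise linear / threshold affine maps** (Proposition
`prop:pwacondition` (1)): `f` is a bi-Lipschitz bijection if and only if the determinants
of the regime matrices are nonzero and share a common sign. -/
theorem piecewise_affine_invertibility
    (p L : ℕ) (hp : 1 ≤ p) (hL : 1 ≤ L)
    (f : E p → E p) (Z : Fin L → Set (E p)) (φ : Fin L → E p)
    (Φ : Fin L → Matrix (Fin p) (Fin p) ℝ)
    (hf : IsPiecewiseLinear f Z φ Φ ∨ IsThresholdAffine f Z φ Φ) :
    (Function.Bijective f ∧ (∃ C : NNReal, LipschitzWith C f) ∧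
        (∃ C : NNReal, LipschitzWith C (Function.invFun f)))
      ↔ ∀ ℓ : Fin L, 0 < (Φ ℓ).det * (Φ ⟨0, hL⟩).det := by
  rcases hf with hf | hf
  · obtain ⟨hf, hφ, a, hli, -, hcone⟩ := hf
    obtain ⟨b, c, G, hc, hb, hexp, hG⟩ := dual_basis a hli
    constructor
    · rintro ⟨hbij, -⟩ l
      exact pl_forward hp hf hφ hbij.1 hcone hb hexp _ l
    · intro hd
      obtain ⟨h1, h2⟩ := pl_backward hf hφ hcone hb hc G hG ⟨0, hL⟩ hd
      exact concl_of_hull hf h1 h2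
  · exact thr_main p L hL f Z φ Φ hf
end
end

section
/- Let p, m ≥ 1 and let f : ℝ^p → ℝ^p be either a piecewise linear function or a threshold affine function, with associated matrices Φ⁽¹⁾, …, Φ⁽ᴸ⁾ ∈ ℝ^{p×p} satisfying the determinantal condition: sgn det Φ⁽ˡ⁾ = sgn det Φ⁽¹⁾ ≠ 0 for all ℓ. Let K : ℝ^p → ℝ be m times continuously differentiable and non-negative, with ∫_{ℝ^p} K(u) du = 1, ∫_{ℝ^p} u K(u) du = 0, ∫_{ℝ^p} ‖u‖ K(u) du < ∞, and ∫_{ℝ^p} ‖u‖ |∂_{u_{α₁}} ⋯ ∂_{u_{αₙ}} K(u)| du < ∞ for every 1 ≤ n ≤ m and every choice of indices α₁, …, αₙ ∈ {1, …, p}. Define f_K(z) := ∫_{ℝ^p} f(z + u) K(u) du. Then f_K is a bijection of ℝ^p, both f_K and f_K⁻¹ are Lipschitz continuous, and f_K is m times continuously differentiable. -/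
open MeasureTheory Matrix

noncomputable section

lemma aux_weight {p : ℕ} (G : E p → ℝ) (hG : Continuous G)
    (h : Integrable fun u : E p => ‖u‖ * |G u|) :
    Integrable fun u : E p => (1 + ‖u‖) * |G u| := by
  have h1 : Integrable ((Metric.closedBall (0 : E p) 1).indicator fun u => |G u|) := by
    rw [integrable_indicator_iff measurableSet_closedBall]
    exact hG.abs.continuousOn.integrableOn_compact (isCompact_closedBall _ _)
  refine ((h1.add h).add h).mono' (by fun_prop) (Filter.Eventually.of_forall fun u => ?_)
  have hn := norm_nonneg u
  have ha := abs_nonneg (G u)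
  rw [Real.norm_of_nonneg (by positivity)]
  simp only [Pi.add_apply]
  by_cases hu : u ∈ Metric.closedBall (0 : E p) 1
  · rw [Set.indicator_of_mem hu]; nlinarith
  · rw [Set.indicator_of_notMem hu]
    have : 1 < ‖u‖ := by simpa using hu
    nlinarith

lemma aux_growth {p : ℕ} {g : E p → E p} {C : NNReal} (hg : LipschitzWith C g) (z u : E p) :
    ‖g (z + u)‖ ≤ (‖g z‖ + C) * (1 + ‖u‖) := by
  have h1 : ‖g (z + u) - g z‖ ≤ C * ‖u‖ := by
    simpa using hg.norm_sub_le (z + u) z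
  have h2 : ‖g (z + u)‖ ≤ ‖g (z + u) - g z‖ + ‖g z‖ := by
    simpa using norm_add_le (g (z + u) - g z) (g z)
  have := norm_nonneg u
  have := norm_nonneg (g z)
  have := C.2
  nlinarith [mul_nonneg (norm_nonneg (g z)) (norm_nonneg u), C.coe_nonneg]

lemma aux_int {p : ℕ} {g : E p → E p} {C : NNReal} (hg : LipschitzWith C g)
    {K : E p → ℝ} (hK : Continuous K) (hi : Integrable fun u : E p => (1 + ‖u‖) * |K u|)
    (z : E p) : Integrable fun u : E p => K u • g (z + u) := by
  have hc := hg.continuous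
  refine (hi.const_mul (‖g z‖ + C)).mono' (by fun_prop) (Filter.Eventually.of_forall fun u => ?_)
  rw [norm_smul, Real.norm_eq_abs]
  have := aux_growth hg z u
  nlinarith [abs_nonneg (K u)]

lemma aux_int0 {p : ℕ} {K : E p → ℝ} (hK : Continuous K)
    (hi : Integrable fun u : E p => (1 + ‖u‖) * |K u|) : Integrable K := by
  refine hi.mono' (by fun_prop) (Filter.Eventually.of_forall fun u => ?_)
  rw [Real.norm_eq_abs]
  nlinarith [abs_nonneg (K u), norm_nonneg u, mul_nonneg (norm_nonneg u) (abs_nonneg (K u))]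

lemma aux_cont {p : ℕ} {g : E p → E p} {C : NNReal} (hg : LipschitzWith C g)
    {K : E p → ℝ} (hK : Continuous K) (hi : Integrable fun u : E p => (1 + ‖u‖) * |K u|) :
    Continuous fun z : E p => ∫ u : E p, K u • g (z + u) := by
  have h0 := aux_int0 hK hi
  refine LipschitzWith.continuous (K := Real.toNNReal (C * ∫ u, |K u|)) ?_
  refine LipschitzWith.of_dist_le_mul fun z w => ?_
  rw [Real.coe_toNNReal _ (mul_nonneg C.coe_nonneg (integral_nonneg fun u : E p => abs_nonneg (K u))),
    dist_eq_norm, ← integral_sub (aux_int hg hK hi z) (aux_int hg hK hi w)]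
  have : C * (∫ u, |K u|) * dist z w = ∫ u, |K u| * (C * dist z w) := by
    rw [integral_mul_const]; ring
  rw [this]
  refine norm_integral_le_of_norm_le (h0.abs.mul_const _) (Filter.Eventually.of_forall fun u => ?_)
  rw [← smul_sub, norm_smul, Real.norm_eq_abs]
  gcongr
  have := hg.dist_le_mul (z + u) (w + u)
  simpa [dist_eq_norm] using this

lemma aux_hasFDeriv {p : ℕ} {F : E p → E p} {D : E p → (E p →L[ℝ] E p)} (hD : Continuous D)
    (h : ∀ z v, F (z + v) - F z = ∫ t in (0:ℝ)..1, D (z + t • v) v) (z : E p) :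
    HasFDerivAt F (D z) z := by
  rw [hasFDerivAt_iff_isLittleO_nhds_zero, Asymptotics.isLittleO_iff]
  intro ε hε
  obtain ⟨δ, hδ, hb⟩ := Metric.continuous_iff.1 hD z ε hε
  filter_upwards [Metric.ball_mem_nhds (0 : E p) hδ] with v hv
  have hv' : ‖v‖ < δ := by simpa using hv
  have e : F (z + v) - F z - D z v = ∫ t in (0:ℝ)..1, (D (z + t • v) v - D z v) := by
    rw [intervalIntegral.integral_sub, ← h]
    · simp
    · exact Continuous.intervalIntegrable (by fun_prop) _ _
    · exact Continuous.intervalIntegrable (by fun_prop) _ _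
  rw [e]
  have := intervalIntegral.norm_integral_le_of_norm_le_const (a := (0:ℝ)) (b := 1)
    (f := fun t => D (z + t • v) v - D z v) (C := ε * ‖v‖) ?_
  · simpa using this
  · intro t ht
    rw [Set.uIoc_of_le zero_le_one] at ht
    rw [← _root_.sub_apply]
    refine (ContinuousLinearMap.le_opNorm _ _).trans ?_
    gcongr
    rw [← dist_eq_norm]
    refine (hb _ ?_).le
    rw [dist_eq_norm, add_sub_cancel_left, norm_smul, Real.norm_eq_abs, abs_of_pos ht.1]
    nlinarith [ht.2, norm_nonneg v]

lemma aux_fubini {p : ℕ} {g : E p → E p} {C : NNReal} (hg : LipschitzWith C g)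
    {K : E p → ℝ} (hK : ContDiff ℝ 1 K) (hi : Integrable fun u : E p => (1 + ‖u‖) * |K u|)
    (v : E p) (hd : Integrable fun u : E p => (1 + ‖u‖) * |fderiv ℝ K u v|) (z : E p) :
    (∫ u : E p, K u • g (z + v + u)) - (∫ u : E p, K u • g (z + u)) =
      ∫ t in (0:ℝ)..1, -∫ u : E p, (fderiv ℝ K u v) • g (z + t • v + u) := by
  have hgc := hg.continuous
  have hKc := hK.continuous
  have hDc : Continuous (fderiv ℝ K) := hK.continuous_fderiv one_ne_zero
  have hDv : Continuous fun u => fderiv ℝ K u v := by fun_prop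
  have e1 : (∫ u : E p, K u • g (z + v + u)) = ∫ y : E p, K (y - v) • g (z + y) := by
    rw [← integral_add_right_eq_self (fun y => K (y - v) • g (z + y)) v]
    refine integral_congr_ae (Filter.Eventually.of_forall fun u => ?_)
    simp only [add_sub_cancel_right]
    congr 2; abel
  have i1 : Integrable fun y : E p => K (y - v) • g (z + y) := by
    have := (aux_int hg hKc hi (z + v)).comp_sub_right v
    refine this.congr (Filter.Eventually.of_forall fun u => ?_)
    simp only; congr 2; abel
  have e2 : ∀ y, K (y - v) - K y = ∫ t in (0:ℝ)..1, -(fderiv ℝ K (y - t • v) v) := by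
    intro y
    have := intervalIntegral.integral_eq_sub_of_hasDerivAt (a := (0:ℝ)) (b := 1)
      (f := fun t => K (y - t • v)) (f' := fun t => -(fderiv ℝ K (y - t • v) v)) ?_ ?_
    · rw [this]; simp
    · intro t _
      have hk := (hK.differentiable one_ne_zero (y - t • v)).hasFDerivAt
      have hl : HasDerivAt (fun t : ℝ => y - t • v) (-v) t := by
        simpa using ((hasDerivAt_id t).smul_const v).const_sub y
      simpa [Function.comp_def] using hk.comp_hasDerivAt t hl
    · exact Continuous.intervalIntegrable (by fun_prop) _ _
  rw [e1, ← integral_sub i1 (aux_int hg hKc hi z)]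
  have e3 : ∀ y, K (y - v) • g (z + y) - K y • g (z + y) =
      ∫ t in Set.Ioc (0:ℝ) 1, (-(fderiv ℝ K (y - t • v) v)) • g (z + y) := by
    intro y
    rw [← sub_smul, e2, intervalIntegral.integral_of_le zero_le_one, integral_smul_const]
  simp_rw [e3]
  have i2 : ∀ t : ℝ, Integrable fun y : E p =>
      (-(fderiv ℝ K (y - t • v) v)) • g (z + y) := by
    intro t
    have := (aux_int hg hDv hd (z + t • v)).neg.comp_sub_right (t • v)
    refine this.congr (Filter.Eventually.of_forall fun u => ?_)
    simp only [Pi.neg_apply, neg_smul]; congr 3; abel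
  have tr : ∀ t : ℝ, ∀ G : E p → ℝ, ∫ y, G (y - t • v) = ∫ u, G u := fun t G => 
    integral_sub_right_eq_self G (t • v)
  have i3 : Integrable (Function.uncurry fun (y : E p) (t : ℝ) =>
      (-(fderiv ℝ K (y - t • v) v)) • g (z + y))
      ((volume : Measure (E p)).prod (volume.restrict (Set.Ioc (0:ℝ) 1))) := by
    have hm : Continuous (Function.uncurry fun (y : E p) (t : ℝ) =>
      (-(fderiv ℝ K (y - t • v) v)) • g (z + y)) := by
      unfold Function.uncurry; fun_prop
    rw [integrable_prod_iff' hm.aestronglyMeasurable]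
    refine ⟨Filter.Eventually.of_forall fun t => i2 t, ?_⟩
    have hmm : AEStronglyMeasurable (fun t : ℝ => ∫ y : E p, ‖Function.uncurry (fun (y : E p) (t : ℝ) =>
      (-(fderiv ℝ K (y - t • v) v)) • g (z + y)) (y, t)‖) (volume.restrict (Set.Ioc (0:ℝ) 1)) := by
      have := (hm.norm.comp continuous_swap).aestronglyMeasurable
        (μ := (volume.restrict (Set.Ioc (0:ℝ) 1)).prod (volume : Measure (E p)))
      exact this.integral_prod_right'
    obtain ⟨B, hB⟩ : ∃ B : ℝ, ∀ t ∈ Set.Ioc (0:ℝ) 1, ‖g (z + t • v)‖ ≤ B := by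
      have hc : ContinuousOn (fun t : ℝ => g (z + t • v)) (Set.Icc 0 1) := by fun_prop
      obtain ⟨B, hB⟩ := isCompact_Icc.exists_bound_of_continuousOn hc
      exact ⟨B, fun t ht => hB t (Set.Ioc_subset_Icc_self ht)⟩
    refine (integrable_const (∫ u, (B + C) * ((1 + ‖u‖) * |fderiv ℝ K u v|))).mono' hmm ?_
    rw [ae_restrict_iff' measurableSet_Ioc]
    refine Filter.Eventually.of_forall fun t ht => ?_
    rw [Real.norm_of_nonneg (integral_nonneg fun _ => norm_nonneg _)]
    rw [← tr t fun u => (B + C) * ((1 + ‖u‖) * |fderiv ℝ K u v|)]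
    refine integral_mono (i2 t).norm ?_ fun y => ?_
    · exact (hd.const_mul (B + C)).comp_sub_right (t • v)
    · simp only [Function.uncurry, norm_smul, norm_neg, Real.norm_eq_abs]
      have h1 := aux_growth hg (z + t • v) (y - t • v)
      rw [show z + t • v + (y - t • v) = z + y by abel] at h1
      have h2 : ‖g (z + y)‖ ≤ (B + C) * (1 + ‖y - t • v‖) :=
        h1.trans (by gcongr; exact hB t ht)
      nlinarith [abs_nonneg (fderiv ℝ K (y - t • v) v)]
  rw [integral_integral_swap i3, intervalIntegral.integral_of_le zero_le_one]
  refine integral_congr_ae (Filter.Eventually.of_forall fun t => ?_)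
  simp only
  rw [← integral_neg, ← integral_add_right_eq_self _ (t • v)]
  refine integral_congr_ae (Filter.Eventually.of_forall fun u => ?_)
  simp only [add_sub_cancel_right, neg_smul]
  congr 3; abel

lemma aux_fderiv_sum {p : ℕ} (T : E p →L[ℝ] ℝ) (v : E p) :
    T v = ∑ i, v i * T (EuclideanSpace.single i 1) := by
  have : v = ∑ i, v i • (EuclideanSpace.single i (1:ℝ) : E p) := by
    ext j; simp [Finset.sum_apply, Pi.single_apply]
  conv_lhs => rw [this]
  simp

lemma aux_contDiff {p : ℕ} {g : E p → E p} {C : NNReal} (hg : LipschitzWith C g) (m : ℕ) :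
    ∀ K : E p → ℝ, ContDiff ℝ m K → (∀ n ≤ m, ∀ α : Fin n → Fin p, Integrable fun u : E p =>
      (1 + ‖u‖) * |iteratedFDeriv ℝ n K u (fun j => EuclideanSpace.single (α j) (1 : ℝ))|) →
      ContDiff ℝ m fun z : E p => ∫ u : E p, K u • g (z + u) := by
  induction m with
  | zero =>
    intro K hK hi
    have h0 := hi 0 le_rfl Fin.elim0
    simp only [iteratedFDeriv_zero_apply] at h0
    exact contDiff_zero.2 (aux_cont hg hK.continuous h0)
  | succ m ih =>
    intro K hK hi
    have h0 := hi 0 (Nat.zero_le _) Fin.elim0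
    simp only [iteratedFDeriv_zero_apply] at h0
    have hK1 : ContDiff ℝ 1 K := hK.of_le (by exact_mod_cast Nat.succ_le_succ (Nat.zero_le m))
    have hDK : ContDiff ℝ m (fderiv ℝ K) := hK.fderiv_right (by simp)
    have hDi : ∀ i : Fin p, ContDiff ℝ m fun u => fderiv ℝ K u (EuclideanSpace.single i 1) :=
      fun i => hDK.clm_apply contDiff_const
    have hId : ∀ i : Fin p, ∀ n ≤ m, ∀ α : Fin n → Fin p, Integrable fun u : E p =>
      (1 + ‖u‖) * |iteratedFDeriv ℝ n (fun u => fderiv ℝ K u (EuclideanSpace.single i 1)) u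
        (fun j => EuclideanSpace.single (α j) (1 : ℝ))| := by
      intro i n hn α
      refine (hi (n + 1) (Nat.succ_le_succ hn) (Fin.snoc α i)).congr
        (Filter.Eventually.of_forall fun u => ?_)
      simp only
      congr 2
      rw [iteratedFDeriv_succ_apply_right]
      have := ContinuousLinearMap.iteratedFDeriv_comp_left
        (ContinuousLinearMap.apply ℝ ℝ (EuclideanSpace.single i (1:ℝ) : E p))
        (hDK.contDiffAt (x := u)) (i := n) (by exact_mod_cast hn)
      have e : (fun u => fderiv ℝ K u (EuclideanSpace.single i 1)) =
        (ContinuousLinearMap.apply ℝ ℝ (EuclideanSpace.single i (1:ℝ) : E p)) ∘ fderiv ℝ K := rfl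
      rw [e, this]
      simp [Fin.init_def]
    have hI1 : ∀ i : Fin p, Integrable fun u : E p =>
      (1 + ‖u‖) * |fderiv ℝ K u (EuclideanSpace.single i 1)| := by
      intro i
      have := hId i 0 (Nat.zero_le _) Fin.elim0
      simpa only [iteratedFDeriv_zero_apply] using this
    have hIv : ∀ v : E p, Integrable fun u : E p => (1 + ‖u‖) * |fderiv ℝ K u v| := by
      intro v
      have hc := hDK.continuous
      refine (integrable_finsetSum Finset.univ fun i _ => (hI1 i).const_mul |v i|).mono'
        (by fun_prop) (Filter.Eventually.of_forall fun u => ?_)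
      rw [Real.norm_of_nonneg (by positivity), aux_fderiv_sum]
      calc (1 + ‖u‖) * |∑ i, v i * fderiv ℝ K u (EuclideanSpace.single i 1)|
          ≤ (1 + ‖u‖) * ∑ i, |v i * fderiv ℝ K u (EuclideanSpace.single i 1)| := by
            gcongr; exact Finset.abs_sum_le_sum_abs _ _
        _ = _ := by
            rw [Finset.mul_sum]; refine Finset.sum_congr rfl fun i _ => ?_
            rw [abs_mul]; ring
    let P : Fin p → E p → E p := fun i z =>
      -∫ u : E p, (fderiv ℝ K u (EuclideanSpace.single i 1)) • g (z + u)
    have hP : ∀ i, ContDiff ℝ m (P i) := fun i => (ih _ (hDi i) (hId i)).neg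
    let D : E p → (E p →L[ℝ] E p) := fun z =>
      ∑ i, (EuclideanSpace.proj i : E p →L[ℝ] ℝ).smulRight (P i z)
    have hD : ContDiff ℝ m D := by
      refine ContDiff.sum fun i _ => ?_
      exact contDiff_const.smulRight (hP i)
    have hDv : ∀ z v, D z v = -∫ u : E p, (fderiv ℝ K u v) • g (z + u) := by
      intro z v
      simp only [D, P, _root_.sum_apply, ContinuousLinearMap.smulRight_apply,
        smul_neg, Finset.sum_neg_distrib]
      congr 1
      simp_rw [← integral_smul]
      rw [← integral_finsetSum]
      · refine integral_congr_ae (Filter.Eventually.of_forall fun u => ?_)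
        simp only
        rw [aux_fderiv_sum _ v, Finset.sum_smul]
        simp_rw [mul_smul]
        rfl
      · intro i _
        exact (aux_int hg (hDi i).continuous (hI1 i) z).smul (v i)
    have hF : ∀ z, HasFDerivAt (fun z : E p => ∫ u : E p, K u • g (z + u)) (D z) z := by
      intro z
      refine aux_hasFDeriv hD.continuous (fun z v => ?_) z
      rw [aux_fubini hg hK1 h0 v (hIv v) z]
      simp_rw [hDv]
    have : ((m + 1 : ℕ) : WithTop ℕ∞) = (m : WithTop ℕ∞) + 1 := by push_cast; rfl
    rw [this, contDiff_succ_iff_hasFDerivAt]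
    exact ⟨D, hD, hF⟩

lemma mulVecE_add {p : ℕ} (A : Matrix (Fin p) (Fin p) ℝ) (x y : E p) :
    mulVecE A (x + y) = mulVecE A x + mulVecE A y := by
  ext i; simp [mulVecE, Matrix.mulVec_add]

lemma mulVecE_smul {p : ℕ} (A : Matrix (Fin p) (Fin p) ℝ) (c : ℝ) (x : E p) :
    mulVecE A (c • x) = c • mulVecE A x := by
  ext i; simp [mulVecE, Matrix.mulVec_smul]

lemma add_mulVecE {p : ℕ} (A B : Matrix (Fin p) (Fin p) ℝ) (x : E p) :
    mulVecE (A + B) x = mulVecE A x + mulVecE B x := by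
  ext i; simp [mulVecE, Matrix.add_mulVec]

lemma smul_mulVecE {p : ℕ} (c : ℝ) (A : Matrix (Fin p) (Fin p) ℝ) (x : E p) :
    mulVecE (c • A) x = c • mulVecE A x := by
  ext i; simp [mulVecE, Matrix.smul_mulVec]

lemma mulVecE_continuous {p : ℕ} :
    Continuous fun y : Matrix (Fin p) (Fin p) ℝ × E p => mulVecE y.1 y.2 := by
  unfold mulVecE
  refine (PiLp.continuous_toLp 2 _).comp ?_
  exact continuous_fst.matrix_mulVec ((PiLp.continuous_ofLp 2 _).comp continuous_snd)

lemma stepA {p L : ℕ} {f : E p → E p} {Z : Fin L → Set (E p)} {φ : Fin L → E p}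
    {Φ : Fin L → Matrix (Fin p) (Fin p) ℝ} (hf : IsPiecewiseAffine f Z φ Φ) (x v : E p)
    (q : E p →L[ℝ] ℝ) (c : ℝ) (h : ∀ ℓ, q (mulVecE (Φ ℓ) v) ≤ c) : q (f (x + v) - f x) ≤ c := by
  obtain ⟨hc, -, -, hpart, hval⟩ := hf
  have key := image_le_of_liminf_slope_right_le_deriv_boundary
    (f := fun t : ℝ => q (f (x + t • v) - f x)) (a := 0) (b := 1) (by fun_prop)
    (B := fun t => c * t) (B' := fun _ => c) (by simp) (by fun_prop)
    (fun t _ => by simpa using ((hasDerivAt_id t).const_mul c).hasDerivWithinAt) ?_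
    (x := 1) (by simp)
  · simpa using key
  intro t _ r hr
  have : ∃ ℓ, ∃ᶠ s in nhdsWithin t (Set.Ioi t), x + s • v ∈ Z ℓ := by
    by_contra hcon
    push Not at hcon
    have h1 : ∀ᶠ s in nhdsWithin t (Set.Ioi t), ∀ ℓ, x + s • v ∉ Z ℓ :=
      Filter.eventually_all.2 fun ℓ => by simpa using hcon ℓ
    obtain ⟨s, hs⟩ := h1.exists
    obtain ⟨ℓ, hℓ, -⟩ := hpart (x + s • v)
    exact hs ℓ hℓ
  obtain ⟨ℓ, hℓ⟩ := this
  have ht : f (x + t • v) = φ ℓ + mulVecE (Φ ℓ) (x + t • v) := by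
    have hcl : IsClosed {y : E p | f y = φ ℓ + mulVecE (Φ ℓ) y} :=
      isClosed_eq hc (continuous_const.add
        (mulVecE_continuous.comp (continuous_const.prodMk continuous_id)))
    have htd : Filter.Tendsto (fun s : ℝ => x + s • v) (nhdsWithin t (Set.Ioi t))
        (nhds (x + t • v)) :=
      ((by fun_prop : Continuous fun s : ℝ => x + s • v).tendsto t).mono_left nhdsWithin_le_nhds
    exact hcl.mem_of_frequently_of_tendsto (hℓ.mono fun s hs => hval ℓ _ hs) htd
  refine (hℓ.and_eventually self_mem_nhdsWithin).mono fun s hs => ?_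
  have hst : t < s := hs.2
  rw [slope_def_field, div_lt_iff₀ (by linarith)]
  have e : f (x + s • v) - f x - (f (x + t • v) - f x) = (s - t) • mulVecE (Φ ℓ) v := by
    rw [hval ℓ _ hs.1, ht]
    simp only [mulVecE_add, mulVecE_smul, sub_smul]
    abel
  rw [← map_sub, e, map_smul, smul_eq_mul]
  have := h ℓ
  nlinarith

lemma bounds {p L : ℕ} (hp : 1 ≤ p) (hL : 1 ≤ L) (Φ : Fin L → Matrix (Fin p) (Fin p) ℝ)
    (hdet : ∀ M ∈ convexHull ℝ (Set.range Φ), M.det ≠ 0) :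
    ∃ c : ℝ, 0 < c ∧ ∃ C : ℝ, 0 ≤ C ∧ ∀ v w : E p,
      (∀ (q : E p →L[ℝ] ℝ) (c : ℝ), (∀ ℓ, q (mulVecE (Φ ℓ) v) ≤ c) → q w ≤ c) →
      c * ‖v‖ ≤ ‖w‖ ∧ ‖w‖ ≤ C * ‖v‖ := by
  have hcomp : IsCompact ((convexHull ℝ (Set.range Φ)) ×ˢ (Metric.sphere (0 : E p) 1)) :=
    ((Set.finite_range Φ).isCompact_convexHull ℝ).prod (isCompact_sphere _ _)
  have hne : ((convexHull ℝ (Set.range Φ)) ×ˢ (Metric.sphere (0 : E p) 1)).Nonempty := by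
    refine Set.Nonempty.prod ⟨Φ ⟨0, hL⟩, subset_convexHull ℝ _ ⟨_, rfl⟩⟩ ?_
    exact ⟨EuclideanSpace.single ⟨0, hp⟩ 1, by simp⟩
  have hcont := (mulVecE_continuous (p := p)).norm
  obtain ⟨a, ha, hamin⟩ := hcomp.exists_isMinOn hne hcont.continuousOn
  obtain ⟨b, hb, hbmax⟩ := hcomp.exists_isMaxOn hne hcont.continuousOn
  have hmin : ∀ M v, M ∈ convexHull ℝ (Set.range Φ) → v ∈ Metric.sphere (0 : E p) 1 →
      ‖mulVecE a.1 a.2‖ ≤ ‖mulVecE M v‖ := fun M v hM hv =>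
    isMinOn_iff.1 hamin (M, v) (Set.mk_mem_prod hM hv)
  have hmax : ∀ M v, M ∈ convexHull ℝ (Set.range Φ) → v ∈ Metric.sphere (0 : E p) 1 →
      ‖mulVecE M v‖ ≤ ‖mulVecE b.1 b.2‖ := fun M v hM hv =>
    isMaxOn_iff.1 hbmax (M, v) (Set.mk_mem_prod hM hv)
  refine ⟨‖mulVecE a.1 a.2‖, ?_, ‖mulVecE b.1 b.2‖, norm_nonneg _, ?_⟩
  · rw [norm_pos_iff]
    intro h0
    have h1 : a.1.mulVec a.2 = 0 := by
      have := congrArg WithLp.ofLp h0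
      simpa [mulVecE] using this
    have h2 := Matrix.eq_zero_of_mulVec_eq_zero (hdet _ ha.1) h1
    have h3 : ‖a.2‖ = 1 := by simpa using ha.2
    have h4 : a.2 = 0 := by ext i; simpa using congrFun h2 i
    simp [h4] at h3
  · intro v w h
    have hmem : w ∈ convexHull ℝ (Set.range fun ℓ => mulVecE (Φ ℓ) v) := by
      by_contra hw
      obtain ⟨q, u, h1, h2⟩ := geometric_hahn_banach_closed_point (convex_convexHull ℝ _)
        ((Set.finite_range fun ℓ => mulVecE (Φ ℓ) v).isClosed_convexHull ℝ) hw
      have := h q u fun ℓ => (h1 _ (subset_convexHull ℝ _ ⟨ℓ, rfl⟩)).le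
      linarith
    have hlin : IsLinearMap ℝ fun M : Matrix (Fin p) (Fin p) ℝ => mulVecE M v :=
      ⟨fun A B => add_mulVecE A B v, fun c A => smul_mulVecE c A v⟩
    have him := hlin.image_convexHull (Set.range Φ)
    rw [← Set.range_comp] at him
    have hmem' : w ∈ (fun M => mulVecE M v) '' convexHull ℝ (Set.range Φ) := by
      rw [him]; exact hmem
    obtain ⟨M, hM, rfl⟩ := hmem'
    by_cases hv : v = 0
    · subst hv
      have : mulVecE M (0 : E p) = 0 := by ext i; simp [mulVecE]
      simp [this]
    · have hvp : 0 < ‖v‖ := norm_pos_iff.2 hv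
      have hy : ‖v‖⁻¹ • v ∈ Metric.sphere (0 : E p) 1 := by
        simp [norm_smul, hvp.ne']
      have h1 : ‖mulVecE a.1 a.2‖ ≤ ‖mulVecE M (‖v‖⁻¹ • v)‖ := hmin _ _ hM hy
      have h2 : ‖mulVecE M (‖v‖⁻¹ • v)‖ ≤ ‖mulVecE b.1 b.2‖ := hmax _ _ hM hy
      rw [mulVecE_smul, norm_smul, norm_inv, norm_norm, ← div_eq_inv_mul] at h1 h2
      exact ⟨(le_div_iff₀ hvp).1 h1, (div_le_iff₀ hvp).1 h2⟩

lemma surj_of {p : ℕ} {F : E p → E p} (hF : ContDiff ℝ 1 F) {C : NNReal}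
    (hC : LipschitzWith C F) {c : ℝ} (hc : 0 < c)
    (h : ∀ x y, c * ‖x - y‖ ≤ ‖F x - F y‖) : Function.Surjective F := by
  have hanti : AntilipschitzWith (Real.toNNReal c⁻¹) F := by
    refine AntilipschitzWith.of_le_mul_dist fun x y => ?_
    rw [Real.coe_toNNReal _ (by positivity), dist_eq_norm, dist_eq_norm, inv_mul_eq_div,
      le_div_iff₀ hc, mul_comm]
    exact h x y
  have hopen : IsOpenMap F := by
    rw [isOpenMap_iff_nhds_le]
    intro x
    have hs : HasStrictFDerivAt F (fderiv ℝ F x) x := (hF.contDiffAt (x := x)).hasStrictFDerivAt one_ne_zero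
    have hinj : Function.Injective (fderiv ℝ F x) := by
      rw [injective_iff_map_eq_zero]
      intro v hv
      have hd : HasDerivAt (fun t : ℝ => F (x + t • v)) (fderiv ℝ F x v) 0 := by
        have hl : HasDerivAt (fun t : ℝ => x + t • v) v 0 := by
          simpa using ((hasDerivAt_id (0:ℝ)).smul_const v).const_add x
        have h0 : HasFDerivAt F (fderiv ℝ F x) (x + (0:ℝ) • v) := by simpa using hs.hasFDerivAt
        exact h0.comp_hasDerivAt (0:ℝ) hl
      rw [hv, hasDerivAt_iff_tendsto_slope] at hd
      have h1 : c * ‖v‖ ≤ ‖(0 : E p)‖ := by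
        refine ge_of_tendsto hd.norm ?_
        filter_upwards [self_mem_nhdsWithin] with t ht
        have ht0 : t ≠ 0 := ht
        have := h (x + t • v) x
        rw [slope_def_module, norm_smul, norm_inv, sub_zero, zero_smul, add_zero]
        rw [add_sub_cancel_left, norm_smul] at this
        rw [← div_eq_inv_mul, le_div_iff₀ (norm_pos_iff.2 ht0)]
        linarith
      rw [norm_zero] at h1
      have : ‖v‖ ≤ 0 := by nlinarith
      exact norm_le_zero_iff.1 this
    have hsurj : Function.Surjective (fderiv ℝ F x) :=
      (LinearMap.injective_iff_surjective (f := (fderiv ℝ F x).toLinearMap)).1 hinj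
    exact (hs.map_nhds_eq_of_surj (LinearMap.range_eq_top.2 hsurj)).ge
  have hcl : IsClosed (Set.range F) :=
    hanti.isClosed_range hC.uniformContinuous
  have : IsClopen (Set.range F) := ⟨hcl, hopen.isOpen_range⟩
  exact Set.range_eq_univ.1 (this.eq_univ (Set.range_nonempty F))

lemma det_threshold {p L : ℕ} (hL : 1 ≤ L) {f : E p → E p} {Z : Fin L → Set (E p)}
    {φ : Fin L → E p} {Φ : Fin L → Matrix (Fin p) (Fin p) ℝ} (hf : IsThresholdAffine f Z φ Φ)
    (hdet : ∀ ℓ : Fin L, 0 < (Φ ℓ).det * (Φ ⟨0, hL⟩).det) :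
    ∀ M ∈ convexHull ℝ (Set.range Φ), M.det ≠ 0 := by
  obtain ⟨⟨hc, -, hne, hpart, hval⟩, a, ha, τ, -, -, -, hZ⟩ := hf
  have h1 : ∀ v : E p, ∑ j, a j * v j = 0 → ∀ ℓ, mulVecE (Φ ℓ) v = mulVecE (Φ ⟨0, hL⟩) v := by
    intro v hv
    have hinv : ∀ ℓ, ∀ z ∈ Z ℓ, z + v ∈ Z ℓ := by
      intro ℓ z hz
      rw [hZ] at hz ⊢
      simpa [mul_add, Finset.sum_add_distrib, hv] using hz
    have hD : ∀ ℓ, ∀ z ∈ Z ℓ, f (z + v) - f z = mulVecE (Φ ℓ) v := by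
      intro ℓ z hz
      rw [hval ℓ z hz, hval ℓ _ (hinv ℓ z hz), mulVecE_add]; abel
    have hfin : (Set.range fun z => f (z + v) - f z).Finite := by
      refine (Set.finite_range fun ℓ => mulVecE (Φ ℓ) v).subset ?_
      rintro _ ⟨z, rfl⟩
      obtain ⟨ℓ, hℓ, -⟩ := hpart z
      exact ⟨ℓ, (hD ℓ z hℓ).symm⟩
    have hpre : IsPreconnected (Set.range fun z => f (z + v) - f z) :=
      isPreconnected_range (by fun_prop)
    have hsub : (Set.range fun z => f (z + v) - f z).Subsingleton := by
      by_contra hns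
      exact hpre.infinite_of_nontrivial (Set.not_subsingleton_iff.1 hns) hfin
    intro ℓ
    obtain ⟨z, hz⟩ := hne ℓ
    obtain ⟨z', hz'⟩ := hne ⟨0, hL⟩
    rw [← hD ℓ z hz, ← hD _ z' hz']
    exact hsub ⟨z, rfl⟩ ⟨z', rfl⟩
  set A := Φ ⟨0, hL⟩ with hA
  have hA0 : A.det ≠ 0 := by
    have := hdet ⟨0, hL⟩
    intro h; rw [← hA, h] at this; simp at this
  have haa : 0 < ∑ j, a j * a j := by
    have : ∑ j, a j * a j = ‖a‖ ^ 2 := by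
      rw [EuclideanSpace.real_norm_sq_eq]; simp [sq]
    rw [this]
    have := norm_pos_iff.2 ha
    positivity
  -- rank-one structure
  have h2 : ∀ ℓ, ∃ d : Fin p → ℝ, Φ ℓ = A + Matrix.vecMulVec d a := by
    intro ℓ
    refine ⟨(∑ j, a j * a j)⁻¹ • ((Φ ℓ - A).mulVec a), ?_⟩
    refine Matrix.ext_of_mulVec_single fun i => ?_
    set s : ℝ := a i / ∑ j, a j * a j with hs
    have hv := h1 (WithLp.toLp 2 (Pi.single i 1 - s • a.ofLp)) (by
      simp only [Pi.sub_apply, Pi.smul_apply, smul_eq_mul, mul_sub, Finset.sum_sub_distrib]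
      have : ∑ j, a j * (s * a j) = s * ∑ j, a j * a j := by
        rw [Finset.mul_sum]; refine Finset.sum_congr rfl fun _ _ => by ring
      rw [this, hs, div_mul_cancel₀ _ haa.ne']
      simp [Pi.single_apply]) ℓ
    have hv' : (Φ ℓ).mulVec (Pi.single i 1 - s • a.ofLp) = A.mulVec (Pi.single i 1 - s • a.ofLp) :=
      congrArg WithLp.ofLp hv
    rw [Matrix.mulVec_sub, Matrix.mulVec_sub, Matrix.mulVec_smul, Matrix.mulVec_smul] at hv'
    rw [Matrix.add_mulVec, Matrix.vecMulVec_mulVec]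
    have : (Φ ℓ).mulVec (Pi.single i 1) = A.mulVec (Pi.single i 1) +
      s • ((Φ ℓ - A).mulVec a) := by
      rw [Matrix.sub_mulVec, smul_sub]
      linear_combination hv'
    rw [this]
    congr 1
    ext k
    simp [hs]
    ring
  have h3 : ∀ d : Fin p → ℝ, (A + Matrix.vecMulVec d a).det = A.det * (1 + a.ofLp ⬝ᵥ A⁻¹.mulVec d) := by
    intro d
    have h := Matrix.det_add_replicateCol_mul_replicateRow (ι := Unit)
      (isUnit_iff_ne_zero.2 hA0) d a.ofLp
    rw [← Matrix.vecMulVec_eq] at h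
    rw [h, Matrix.mul_assoc, ← Matrix.replicateCol_mulVec, Matrix.replicateRow_mul_replicateCol]
    simp
  intro M hM
  have : convexHull ℝ (Set.range Φ) ⊆
      {M | ∃ d : Fin p → ℝ, M = A + Matrix.vecMulVec d a ∧ 0 < 1 + a.ofLp ⬝ᵥ A⁻¹.mulVec d} := by
    refine convexHull_min ?_ ?_
    · rintro _ ⟨ℓ, rfl⟩
      obtain ⟨d, hd⟩ := h2 ℓ
      refine ⟨d, hd, ?_⟩
      have := hdet ℓ
      rw [hd, h3] at this
      have hsq : 0 < A.det * A.det := mul_self_pos.2 hA0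
      by_contra hcon
      push Not at hcon
      nlinarith
    · rintro _ ⟨d, rfl, hd⟩ _ ⟨d', rfl, hd'⟩ s t hs ht hst
      refine ⟨s • d + t • d', ?_, ?_⟩
      · rw [Matrix.add_vecMulVec, Matrix.smul_vecMulVec, Matrix.smul_vecMulVec, smul_add, smul_add]
        have : A = s • A + t • A := by rw [← add_smul, hst, one_smul]
        nth_rw 3 [this]
        abel
      · rw [Matrix.mulVec_add, Matrix.mulVec_smul, Matrix.mulVec_smul, dotProduct_add,
          dotProduct_smul, dotProduct_smul, smul_eq_mul, smul_eq_mul]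
        rcases hs.eq_or_lt with h | h
        · subst h
          have : t = 1 := by linarith
          subst this; linarith
        · nlinarith [mul_pos h hd, mul_nonneg ht hd'.le]
  obtain ⟨d, rfl, hd⟩ := this hM
  rw [h3]
  exact mul_ne_zero hA0 hd.ne'

lemma det_multi {p : ℕ} (P N : Fin p → Fin p → ℝ) (e : ℝ)
    (h : ∀ s : Finset (Fin p), 0 < Matrix.det (Matrix.of (s.piecewise P N)) * e)
    (lam mu : Fin p → ℝ) (hl : ∀ i, 0 ≤ lam i) (hm : ∀ i, 0 ≤ mu i) (h1 : ∀ i, lam i + mu i = 1) :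
    0 < Matrix.det (Matrix.of fun i => lam i • P i + mu i • N i) * e := by
  have key : Matrix.det (Matrix.of fun i => lam i • P i + mu i • N i) =
      ∑ s : Finset (Fin p), ((∏ i ∈ s, lam i) * ∏ i ∈ sᶜ, mu i) *
        Matrix.det (Matrix.of (s.piecewise P N)) := by
    have := (Matrix.detRowAlternating (n := Fin p) (R := ℝ)).map_add_univ
      (fun i => lam i • P i) (fun i => mu i • N i)
    refine this.trans (Finset.sum_congr rfl fun s _ => ?_)
    have e1 : s.piecewise (fun i => lam i • P i) (fun i => mu i • N i) =
      fun i => (s.piecewise lam mu) i • (s.piecewise P N) i := by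
      ext i; by_cases hi : i ∈ s <;> simp [hi]
    rw [e1, AlternatingMap.map_smul_univ, smul_eq_mul]
    congr 1
    rw [Finset.prod_piecewise]
    simp [Finset.compl_eq_univ_sdiff]
  rw [key, Finset.sum_mul]
  have hsum : ∑ s : Finset (Fin p), ((∏ i ∈ s, lam i) * ∏ i ∈ sᶜ, mu i) = 1 := by
    rw [← Fintype.prod_add]; simp [h1]
  have hnn : ∀ s : Finset (Fin p), 0 ≤ (∏ i ∈ s, lam i) * ∏ i ∈ sᶜ, mu i := fun s =>
    mul_nonneg (Finset.prod_nonneg fun i _ => hl i) (Finset.prod_nonneg fun i _ => hm i)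
  refine Finset.sum_pos' (fun s _ => ?_) ?_
  · rw [mul_assoc]; exact mul_nonneg (hnn s) (h s).le
  · by_contra hcon
    push Not at hcon
    have : ∀ s : Finset (Fin p), (∏ i ∈ s, lam i) * ∏ i ∈ sᶜ, mu i = 0 := by
      intro s
      by_contra hne
      have hpos := lt_of_le_of_ne (hnn s) (Ne.symm hne)
      have := hcon s (Finset.mem_univ _)
      rw [mul_assoc] at this
      nlinarith [mul_pos hpos (h s)]
    simp [this] at hsum

lemma det_linear {p L : ℕ} (hL : 1 ≤ L) {f : E p → E p} {Z : Fin L → Set (E p)}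
    {φ : Fin L → E p} {Φ : Fin L → Matrix (Fin p) (Fin p) ℝ} (hf : IsPiecewiseLinear f Z φ Φ)
    (hdet : ∀ ℓ : Fin L, 0 < (Φ ℓ).det * (Φ ⟨0, hL⟩).det) :
    ∀ M ∈ convexHull ℝ (Set.range Φ), M.det ≠ 0 := by
  classical
  obtain ⟨⟨hc, -, hne, hpart, hval⟩, hφ, a, hli, -, hZ⟩ := hf
  set A : Matrix (Fin p) (Fin p) ℝ := Matrix.of fun i j => a i j with hA
  have hAu : IsUnit A := by
    rw [← Matrix.linearIndependent_rows_iff_isUnit]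
    have := hli.map' (WithLp.linearEquiv 2 ℝ (Fin p → ℝ)).toLinearMap (LinearEquiv.ker _)
    exact this
  have hAdet : IsUnit A.det := (Matrix.isUnit_iff_isUnit_det _).1 hAu
  set B := A⁻¹ with hB
  have hAB : A * B = 1 := Matrix.mul_nonsing_inv _ hAdet
  have hBdet : B.det ≠ 0 := by
    intro h0
    have := congrArg Matrix.det hAB
    rw [Matrix.det_mul, h0] at this; simp at this
  -- point with prescribed coordinates
  let pt : (Fin p → ℝ) → E p := fun x => mulVecE B (WithLp.toLp 2 x)
  have hpt : ∀ x i, ∑ j, a i j * pt x j = x i := by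
    intro x i
    have : A.mulVec (B.mulVec x) = x := by rw [Matrix.mulVec_mulVec, hAB, Matrix.one_mulVec]
    exact congrFun this i
  have hpc : Continuous pt :=
    mulVecE_continuous.comp (continuous_const.prodMk (PiLp.continuous_toLp 2 _))
  have hmc : ∀ ℓ, Continuous fun x => mulVecE (Φ ℓ) x := fun ℓ =>
    mulVecE_continuous.comp (continuous_const.prodMk continuous_id)
  -- sign vector of a cone
  let sg : Set (Fin p) → Fin p → ℝ := fun I j => if j ∈ I then 1 else -1
  have hmem : ∀ (I : Set (Fin p)) (x : Fin p → ℝ), (∀ j ∈ I, 0 ≤ x j) → (∀ j ∉ I, x j < 0) →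
      pt x ∈ coneOf a I := by
    intro I x h1 h2
    exact ⟨fun i hi => by rw [hpt]; exact h1 i hi, fun i hi => by rw [hpt]; exact h2 i hi⟩
  have hclos : ∀ (I : Set (Fin p)) ℓ, coneOf a I ⊆ Z ℓ → ∀ x : Fin p → ℝ, (∀ j ∈ I, 0 ≤ x j) →
      (∀ j ∉ I, x j ≤ 0) → f (pt x) = mulVecE (Φ ℓ) (pt x) := by
    intro I ℓ hI x h1 h2
    have hcl : IsClosed {e : ℝ | f (pt (x + e • sg I)) = mulVecE (Φ ℓ) (pt (x + e • sg I))} :=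
      isClosed_eq (by fun_prop) ((hmc ℓ).comp (by fun_prop))
    have hsub : Set.Ioi (0:ℝ) ⊆
        {e : ℝ | f (pt (x + e • sg I)) = mulVecE (Φ ℓ) (pt (x + e • sg I))} := by
      intro e he
      have he' : 0 < e := he
      have hz : pt (x + e • sg I) ∈ Z ℓ := by
        refine hI (hmem I _ (fun j hj => ?_) fun j hj => ?_)
        · have := h1 j hj
          simp only [Pi.add_apply, Pi.smul_apply, sg, hj, if_true, smul_eq_mul]; linarith
        · have := h2 j hj
          simp only [Pi.add_apply, Pi.smul_apply, sg, hj, if_false, smul_eq_mul]; linarith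
      have := hval ℓ _ hz
      rwa [hφ, zero_add] at this
    have h0 : (0:ℝ) ∈ closure (Set.Ioi (0:ℝ)) := by simp
    have := (hcl.closure_subset_iff.2 hsub) h0
    simpa using this
  -- every cone is in some regime
  have hcone : ∀ I : Set (Fin p), ∃ ℓ, coneOf a I ⊆ Z ℓ := by
    intro I
    have hz0 : pt (sg I) ∈ coneOf a I := by
      refine hmem I _ (fun j hj => ?_) fun j hj => ?_ <;> simp [sg, hj]
    obtain ⟨ℓ, hℓ, -⟩ := hpart (pt (sg I))
    refine ⟨ℓ, ?_⟩
    obtain ⟨S, hS⟩ := hZ ℓ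
    rw [hS] at hℓ ⊢
    simp only [Set.mem_iUnion] at hℓ
    obtain ⟨J, hJ, hzJ⟩ := hℓ
    have : I = J := by
      ext i
      by_contra hcon
      by_cases h1 : i ∈ I
      · have h2 : i ∉ J := fun h => hcon ⟨fun _ => h, fun _ => h1⟩
        have := hz0.1 i h1
        have := hzJ.2 i h2
        linarith
      · have h2 : i ∈ J := by by_contra h; exact hcon ⟨fun h' => absurd h' h1, fun h' => absurd h' h⟩
        have := hz0.2 i h1
        have := hzJ.1 i h2
        linarith
    subst this
    exact Set.subset_biUnion_of_mem (u := fun I => coneOf a I) hJ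
  have hreg : ∀ ℓ, ∃ I, coneOf a I ⊆ Z ℓ := by
    intro ℓ
    obtain ⟨z, hz⟩ := hne ℓ
    obtain ⟨S, hS⟩ := hZ ℓ
    rw [hS] at hz ⊢
    simp only [Set.mem_iUnion] at hz
    obtain ⟨J, hJ, -⟩ := hz
    exact ⟨J, Set.subset_biUnion_of_mem (u := fun I => coneOf a I) hJ⟩
  -- columns
  let P : Fin p → Fin p → ℝ := fun i => (f (pt (Pi.single i 1))).ofLp
  let N : Fin p → Fin p → ℝ := fun i => (-f (pt (-Pi.single i 1))).ofLp
  have hcol : ∀ (I : Set (Fin p)) ℓ, coneOf a I ⊆ Z ℓ →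
      (Φ ℓ * B)ᵀ = Matrix.of fun i => if i ∈ I then P i else N i := by
    intro I ℓ hI
    ext i k
    have e1 : (Φ ℓ * B)ᵀ i k = (mulVecE (Φ ℓ) (pt (Pi.single i 1))) k := by
      have : (mulVecE (Φ ℓ) (pt (Pi.single i 1))).ofLp = (Φ ℓ).mulVec (B.mulVec (Pi.single i 1)) := rfl
      rw [this, Matrix.mulVec_mulVec, Matrix.mulVec_single_one]
      rfl
    rw [e1]
    by_cases hi : i ∈ I
    · have := hclos I ℓ hI (Pi.single i 1) (fun j _ => by
        by_cases h : j = i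
        · subst h; simp
        · simp [h]) (fun j hj => by
        have h : j ≠ i := fun h => hj (h ▸ hi)
        simp [h])
      simp [hi, P, this]
    · have := hclos I ℓ hI (-Pi.single i 1) (fun j hj => by
        have h : j ≠ i := fun h => hi (h ▸ hj)
        simp [h]) (fun j hj => by
        by_cases h : j = i
        · subst h; simp
        · simp [h])
      have e2 : pt (-Pi.single i 1) = (-1 : ℝ) • pt (Pi.single i 1) := by
        simp only [pt]
        rw [← mulVecE_smul]; congr 1; ext; simp [Pi.single_apply]
      simp only [Matrix.of_apply, hi, if_false, N, this]
      rw [e2, mulVecE_smul]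
      simp
  have hvert : ∀ s : Finset (Fin p), 0 < Matrix.det (Matrix.of (s.piecewise P N)) *
      ((Φ ⟨0, hL⟩).det * B.det) := by
    intro s
    obtain ⟨ℓ, hℓ⟩ := hcone (s : Set (Fin p))
    have h1 := hcol _ ℓ hℓ
    have h2 : Matrix.of (s.piecewise P N) = (Φ ℓ * B)ᵀ := by
      rw [h1]; ext i k; by_cases hi : i ∈ s <;> simp [hi]
    rw [h2, Matrix.det_transpose, Matrix.det_mul]
    have := hdet ℓ
    have hb : 0 < B.det * B.det := mul_self_pos.2 hBdet
    nlinarith [mul_pos this hb]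
  intro M hM
  have hsub : convexHull ℝ (Set.range Φ) ⊆ {M | ∃ lam mu : Fin p → ℝ, (∀ i, 0 ≤ lam i) ∧
      (∀ i, 0 ≤ mu i) ∧ (∀ i, lam i + mu i = 1) ∧
      (M * B)ᵀ = Matrix.of fun i => lam i • P i + mu i • N i} := by
    refine convexHull_min ?_ ?_
    · rintro _ ⟨ℓ, rfl⟩
      obtain ⟨I, hI⟩ := hreg ℓ
      refine ⟨fun i => if i ∈ I then 1 else 0, fun i => if i ∈ I then 0 else 1, ?_, ?_, ?_, ?_⟩
      · intro i; dsimp only; split_ifs <;> norm_num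
      · intro i; dsimp only; split_ifs <;> norm_num
      · intro i; dsimp only; split_ifs <;> norm_num
      · rw [hcol I ℓ hI]
        ext i k
        by_cases hi : i ∈ I <;> simp [hi]
    · rintro M₁ ⟨l₁, m₁, h1, h2, h3, h4⟩ M₂ ⟨l₂, m₂, g1, g2, g3, g4⟩ s t hs ht hst
      refine ⟨s • l₁ + t • l₂, s • m₁ + t • m₂, fun i => ?_, fun i => ?_, fun i => ?_, ?_⟩
      · exact add_nonneg (mul_nonneg hs (h1 i)) (mul_nonneg ht (g1 i))
      · exact add_nonneg (mul_nonneg hs (h2 i)) (mul_nonneg ht (g2 i))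
      · simp only [Pi.add_apply, Pi.smul_apply, smul_eq_mul]
        linear_combination s * h3 i + t * g3 i + hst
      · rw [add_mul, Matrix.smul_mul, Matrix.smul_mul, Matrix.transpose_add,
          Matrix.transpose_smul, Matrix.transpose_smul, h4, g4]
        ext i k
        simp
        ring
  obtain ⟨lam, mu, h1, h2, h3, h4⟩ := hsub hM
  have := det_multi P N _ hvert lam mu h1 h2 h3
  rw [← h4, Matrix.det_transpose, Matrix.det_mul] at this
  intro h0
  rw [h0] at this
  simp at this

/-- **Smoothing preserves invertibility** (Proposition `prop:pwacondition` (2)): if `f` is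
piecewise linear or threshold affine and satisfies the determinantal condition, and `K` is an
`m`-times continuously differentiable kernel with the stated moment and integrability
conditions, then the convolution `f_K(z) = ∫ f(z + u) K(u) du` is a bi-Lipschitz bijection
that is `m` times continuously differentiable. -/
theorem smoothed_piecewise_affine_invertibility
    (p L m : ℕ) (hp : 1 ≤ p) (hL : 1 ≤ L) (hm : 1 ≤ m)
    (f : E p → E p) (Z : Fin L → Set (E p)) (φ : Fin L → E p)
    (Φ : Fin L → Matrix (Fin p) (Fin p) ℝ)
    (hf : IsPiecewiseLinear f Z φ Φ ∨ IsThresholdAffine f Z φ Φ)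
    (hdet : ∀ ℓ : Fin L, 0 < (Φ ℓ).det * (Φ ⟨0, hL⟩).det)
    (K : E p → ℝ) (hKsmooth : ContDiff ℝ m K) (hKpos : ∀ u, 0 ≤ K u)
    (hKone : (∫ u, K u) = 1)
    (hKmean : ∀ i, (∫ u : E p, u i * K u) = 0)
    (hKnorm : Integrable fun u : E p => ‖u‖ * K u)
    (hKderiv : ∀ n : ℕ, 1 ≤ n → n ≤ m → ∀ α : Fin n → Fin p,
      Integrable fun u : E p =>
        ‖u‖ * |iteratedFDeriv ℝ n K u (fun j => EuclideanSpace.single (α j) (1 : ℝ))|) :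
    Function.Bijective (fun z : E p => ∫ u : E p, K u • f (z + u)) ∧
    (∃ C : NNReal, LipschitzWith C (fun z : E p => ∫ u : E p, K u • f (z + u))) ∧
    (∃ C : NNReal,
      LipschitzWith C (Function.invFun (fun z : E p => ∫ u : E p, K u • f (z + u)))) ∧
    ContDiff ℝ m (fun z : E p => ∫ u : E p, K u • f (z + u)) := by
  have hpa : IsPiecewiseAffine f Z φ Φ := hf.elim (fun h => h.1) (fun h => h.1)
  have hH : ∀ M ∈ convexHull ℝ (Set.range Φ), M.det ≠ 0 :=
    hf.elim (fun h => det_linear hL h hdet) (fun h => det_threshold hL h hdet)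
  obtain ⟨c, hc, C, hC, hb⟩ := bounds hp hL Φ hH
  have hlip : LipschitzWith (Real.toNNReal C) f := by
    refine LipschitzWith.of_dist_le_mul fun x y => ?_
    rw [Real.coe_toNNReal _ hC, dist_eq_norm, dist_eq_norm]
    refine (hb (x - y) (f x - f y) fun q d h => ?_).2
    have := stepA hpa y (x - y) q d h
    rwa [add_sub_cancel] at this
  have hKc : Continuous K := hKsmooth.continuous
  have hKint : Integrable K := by
    by_contra h
    rw [integral_undef h] at hKone
    exact zero_ne_one hKone
  have hall : ∀ n ≤ m, ∀ α : Fin n → Fin p, Integrable fun u : E p =>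
      (1 + ‖u‖) * |iteratedFDeriv ℝ n K u (fun j => EuclideanSpace.single (α j) (1 : ℝ))| := by
    intro n hn α
    refine aux_weight _ ?_ ?_
    · have h1 : Continuous (iteratedFDeriv ℝ n K) :=
        hKsmooth.continuous_iteratedFDeriv (by exact_mod_cast hn)
      exact (ContinuousMultilinearMap.apply ℝ (fun _ : Fin n => E p) ℝ _).continuous.comp h1
    · rcases Nat.eq_zero_or_pos n with rfl | h
      · simp only [iteratedFDeriv_zero_apply]
        refine hKnorm.congr (Filter.Eventually.of_forall fun u => ?_)
        simp only [abs_of_nonneg (hKpos u)]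
      · exact hKderiv n h hn α
  have hi0 : Integrable fun u : E p => (1 + ‖u‖) * |K u| := by
    have := hall 0 (Nat.zero_le _) Fin.elim0
    simpa only [iteratedFDeriv_zero_apply] using this
  have hcd : ContDiff ℝ m (fun z : E p => ∫ u : E p, K u • f (z + u)) :=
    aux_contDiff hlip m K hKsmooth hall
  have hbd : ∀ x y : E p,
      c * ‖x - y‖ ≤ ‖(∫ u : E p, K u • f (x + u)) - ∫ u : E p, K u • f (y + u)‖ ∧
      ‖(∫ u : E p, K u • f (x + u)) - ∫ u : E p, K u • f (y + u)‖ ≤ C * ‖x - y‖ := by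
    intro x y
    refine hb (x - y) _ fun q d h => ?_
    have ix := aux_int hlip hKc hi0 x
    have iy := aux_int hlip hKc hi0 y
    have ixy : Integrable fun u : E p => K u • f (x + u) - K u • f (y + u) := ix.sub iy
    rw [← integral_sub ix iy, ← ContinuousLinearMap.integral_comp_comm q ixy]
    calc ∫ u : E p, q (K u • f (x + u) - K u • f (y + u))
        ≤ ∫ u : E p, K u * d := by
          refine integral_mono (q.integrable_comp ixy) (hKint.mul_const d) fun u => ?_
          simp only
          rw [← smul_sub, map_smul, smul_eq_mul]
          refine mul_le_mul_of_nonneg_left ?_ (hKpos u)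
          have := stepA hpa (y + u) (x - y) q d h
          rwa [show y + u + (x - y) = x + u by abel] at this
      _ = d := by rw [integral_mul_const, hKone, one_mul]
  set F : E p → E p := fun z : E p => ∫ u : E p, K u • f (z + u) with hF
  have hFlip : LipschitzWith (Real.toNNReal C) F := by
    refine LipschitzWith.of_dist_le_mul fun x y => ?_
    rw [Real.coe_toNNReal _ hC, dist_eq_norm, dist_eq_norm]
    exact (hbd x y).2
  have hanti : AntilipschitzWith (Real.toNNReal c⁻¹) F := by
    refine AntilipschitzWith.of_le_mul_dist fun x y => ?_
    rw [Real.coe_toNNReal _ (by positivity), dist_eq_norm, dist_eq_norm, inv_mul_eq_div,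
      le_div_iff₀ hc, mul_comm]
    exact (hbd x y).1
  have hsurj : Function.Surjective F :=
    surj_of (hcd.of_le (by exact_mod_cast hm)) hFlip hc fun x y => (hbd x y).1
  exact ⟨⟨hanti.injective, hsurj⟩, ⟨_, hFlip⟩,
    ⟨_, hanti.to_rightInverse (Function.rightInverse_invFun hsurj)⟩, hcd⟩
end
end

section
/- Let p ≥ 1 and let f : ℝ^p → ℝ^p be a piecewise affine function with associated matrices Φ⁽¹⁾, …, Φ⁽ᴸ⁾ ∈ ℝ^{p×p}. Then for every x′, x″ ∈ ℝ^p there exists a matrix Φ in the convex hull of {Φ⁽¹⁾, …, Φ⁽ᴸ⁾} such that f(x″) − f(x′) = Φ(x″ − x′). -/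
open MeasureTheory Matrix

noncomputable section

/-- **Mean-value property of piecewise affine maps** (Lemma `lem:pwa-conhull`): the difference
`f(x″) − f(x′)` equals `Φ (x″ − x′)` for some `Φ` in the convex hull of the regime matrices. -/
theorem piecewise_affine_convex_hull_difference
    (p L : ℕ) (hp : 1 ≤ p) (hL : 1 ≤ L)
    (f : E p → E p) (Z : Fin L → Set (E p)) (φ : Fin L → E p)
    (Φ : Fin L → Matrix (Fin p) (Fin p) ℝ)
    (hf : IsPiecewiseAffine f Z φ Φ) :
    ∀ x' x'' : E p, ∃ M ∈ convexHull ℝ (Set.range Φ),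
      f x'' - f x' = mulVecE M (x'' - x') := by
  intro x' x''
  obtain ⟨hc, -, -, hpart, haff⟩ := hf
  set v : E p := x'' - x' with hv
  let T : Matrix (Fin p) (Fin p) ℝ →ₗ[ℝ] E p :=
    { toFun := fun A => mulVecE A v
      map_add' := fun A B => by
        ext i; simp [mulVecE, Matrix.add_mulVec]
      map_smul' := fun c A => by
        ext i; simp [mulVecE, Matrix.smul_mulVec] }
  have hcont : ∀ A : Matrix (Fin p) (Fin p) ℝ, Continuous (fun x : E p => mulVecE A x) := by
    intro A
    unfold mulVecE
    fun_prop
  have hsub : ∀ (A : Matrix (Fin p) (Fin p) ℝ) (x y : E p) (s : ℝ),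
      mulVecE A (x + s • y) = mulVecE A x + s • mulVecE A y := by
    intro A x y s
    ext i
    simp [mulVecE, Matrix.mulVec_add, Matrix.mulVec_smul]
  by_contra hcon
  have hnot : f x'' - f x' ∉ convexHull ℝ (T '' Set.range Φ) := by
    rw [← T.image_convexHull]
    rintro ⟨M, hM, hMe⟩
    exact hcon ⟨M, hM, hMe.symm⟩
  have hfin : (T '' Set.range Φ).Finite := (Set.finite_range Φ).image _
  obtain ⟨u, c, hlt, hgt⟩ := geometric_hahn_banach_closed_point
    (convex_convexHull ℝ (T '' Set.range Φ)) (hfin.isClosed_convexHull ℝ) hnot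
  have hΦ : ∀ l, u (mulVecE (Φ l) v) < c := fun l =>
    hlt _ (subset_convexHull ℝ _ ⟨Φ l, ⟨l, rfl⟩, rfl⟩)
  let g : ℝ → ℝ := fun t => u (f (x' + t • v))
  have hg : Continuous g := by
    change Continuous (fun t : ℝ => u (f (x' + t • v)))
    fun_prop
  have key := image_le_of_liminf_slope_right_le_deriv_boundary (f := g) (a := 0) (b := 1)
    hg.continuousOn (B := fun t => g 0 + c * t) (B' := fun _ => c) (by simp)
    (by fun_prop)
    (fun x _ => by
      have := ((hasDerivAt_id x).const_mul c).const_add (g 0)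
      simpa using this.hasDerivWithinAt)
    (by
      intro t _ r hr
      have hex : ∃ l, ∃ᶠ s in nhdsWithin t (Set.Ioi t), x' + s • v ∈ Z l := by
        by_contra hno
        push Not at hno
        have hall : ∀ᶠ s in nhdsWithin t (Set.Ioi t), ∀ l, ¬ (x' + s • v ∈ Z l) :=
          Filter.eventually_all.2 hno
        obtain ⟨s, hs⟩ := hall.exists
        obtain ⟨l, hl, -⟩ := hpart (x' + s • v)
        exact hs l hl
      obtain ⟨l, hl⟩ := hex
      have hclosed : IsClosed {s : ℝ | f (x' + s • v) = φ l + mulVecE (Φ l) (x' + s • v)} := by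
        have := hcont (Φ l)
        apply isClosed_eq <;> fun_prop
      have ht0 : t ∈ {s : ℝ | f (x' + s • v) = φ l + mulVecE (Φ l) (x' + s • v)} :=
        hclosed.mem_of_frequently_of_tendsto (f := fun s : ℝ => s)
          (hl.mono fun s hs => haff l _ hs) (Filter.tendsto_id.mono_left nhdsWithin_le_nhds)
      have ht : f (x' + t • v) = φ l + mulVecE (Φ l) (x' + t • v) := ht0
      refine (hl.and_eventually self_mem_nhdsWithin).mono ?_
      rintro s ⟨hs, hst⟩
      have hst' : t < s := hst
      have e : g s - g t = (s - t) * u (mulVecE (Φ l) v) := by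
        change u (f (x' + s • v)) - u (f (x' + t • v)) = _
        rw [ht, haff l _ hs, hsub, hsub]
        simp only [map_add, map_smul, smul_eq_mul]
        ring
      rw [slope_def_field, e, mul_div_cancel_left₀ _ (sub_ne_zero.2 hst'.ne')]
      exact (hΦ l).trans hr)
  have h1 := key (Set.right_mem_Icc.2 zero_le_one)
  have e1 : g 1 = u (f x'') := by simp [g, hv]
  have e0 : g 0 = u (f x') := by simp [g]
  rw [e1, e0] at h1
  rw [map_sub] at hgt
  linarith
end
end
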